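/- arXiv:2604.08095 — 2 statements merged into one kernel-verified Lean document; each statement's English description precedes it below -/
import Mathlib

section
/- For every integer d ≥ 1 and every real α with 0 < α < 1/2, there exists a constant C > 0, depending only on d and α, such that for every integer n ≥ 1 and every degree-d polynomial threshold function f : {-1,1}^n → {-1,1}, one has E_x[s_f(x)^α] ≤ C · (log(e·n))^{C}, where x is uniform on {-1,1}^n. -/
open Finset
open scoped Classical

/-- The embedding of `Bool` into `{-1, 1} ⊆ ℝ`. -/
noncomputable def chi (b : Bool) : ℝ := if b then 1 else -1

/-- Flip the `i`-th coordinate of a point of the Boolean cube. -/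
def flipAt {n : ℕ} (x : Fin n → Bool) (i : Fin n) : Fin n → Bool :=
  Function.update x i (!x i)

/-- The sensitivity of `f` at `x`: the number of coordinates whose flip changes `f`. -/
noncomputable def sens {n : ℕ} (f : (Fin n → Bool) → ℝ) (x : Fin n → Bool) : ℕ :=
  (Finset.univ.filter (fun i => f (flipAt x i) ≠ f x)).card

/-- The Boolean surface area `BSA[f] = E_x √(s_f(x))`, `x` uniform on the cube. -/
noncomputable def BSA {n : ℕ} (f : (Fin n → Bool) → ℝ) : ℝ :=
  (∑ x : Fin n → Bool, Real.sqrt (sens f x)) / 2 ^ n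

/-- Evaluation of a polynomial at a point of the cube `{-1,1}^n`. -/
noncomputable def pev {n : ℕ} (p : MvPolynomial (Fin n) ℝ) (x : Fin n → Bool) : ℝ :=
  MvPolynomial.eval (fun i => chi (x i)) p

/-- `f` is a degree-`d` polynomial threshold function: `f = sgn p` for some multilinear
polynomial `p` of total degree at most `d` that is nonvanishing on the cube. -/
def IsPTF (d : ℕ) {n : ℕ} (f : (Fin n → Bool) → ℝ) : Prop :=
  ∃ p : MvPolynomial (Fin n) ℝ,
    (∀ m ∈ p.support, ∀ i, m i ≤ 1) ∧ p.totalDegree ≤ d ∧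
    ∀ x, pev p x ≠ 0 ∧ f x = Real.sign (pev p x)



/-! ## Product expectations -/

/-- Expectation over a finite product space with weights `w` on each coordinate. -/
noncomputable def wE {n : ℕ} {Ω : Type} [Fintype Ω] (w : Ω → ℝ) (F : (Fin n → Ω) → ℝ) : ℝ :=
  ∑ ω : Fin n → Ω, (∏ i, w (ω i)) * F ω

/-- Probability weights. -/
def IsW {Ω : Type} [Fintype Ω] (w : Ω → ℝ) : Prop := (∀ a, 0 ≤ w a) ∧ ∑ a, w a = 1

section basics
variable {n : ℕ} {Ω : Type} [Fintype Ω] {w : Ω → ℝ}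

lemma wE_add (F G : (Fin n → Ω) → ℝ) : wE w (fun ω => F ω + G ω) = wE w F + wE w G := by
  simp [wE, mul_add, Finset.sum_add_distrib]

lemma wE_sub (F G : (Fin n → Ω) → ℝ) : wE w (fun ω => F ω - G ω) = wE w F - wE w G := by
  simp [wE, mul_sub, Finset.sum_sub_distrib]

lemma wE_mul (k : ℝ) (F : (Fin n → Ω) → ℝ) : wE w (fun ω => k * F ω) = k * wE w F := by
  simp only [wE, Finset.mul_sum]
  exact Finset.sum_congr rfl fun _ _ => by ring

lemma wE_mul' (k : ℝ) (F : (Fin n → Ω) → ℝ) : wE w (fun ω => F ω * k) = wE w F * k := by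
  simp only [wE, Finset.sum_mul]
  exact Finset.sum_congr rfl fun _ _ => by ring

lemma wE_const (hw : IsW w) (k : ℝ) : wE (n := n) w (fun _ => k) = k := by
  have h : ∑ ω : Fin n → Ω, ∏ i, w (ω i) = 1 := by
    have := (Finset.prod_univ_sum (fun _ : Fin n => (Finset.univ : Finset Ω)) (fun _ a => w a))
    simp only [hw.2, Finset.prod_const_one] at this
    rw [this]; simp [Fintype.piFinset_univ]
  simp [wE, ← Finset.sum_mul, h]

lemma wE_mono (hw : IsW w) {F G : (Fin n → Ω) → ℝ} (h : ∀ ω, F ω ≤ G ω) : wE w F ≤ wE w G :=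
  Finset.sum_le_sum fun ω _ => mul_le_mul_of_nonneg_left (h ω) (Finset.prod_nonneg fun _ _ => hw.1 _)

lemma wE_nonneg (hw : IsW w) {F : (Fin n → Ω) → ℝ} (h : ∀ ω, 0 ≤ F ω) : 0 ≤ wE w F :=
  Finset.sum_nonneg fun ω _ => mul_nonneg (Finset.prod_nonneg fun _ _ => hw.1 _) (h ω)

lemma wE_abs (hw : IsW w) (F : (Fin n → Ω) → ℝ) : |wE w F| ≤ wE w (fun ω => |F ω|) := by
  rw [abs_le]
  constructor
  · have := wE_mono hw (n := n) (F := fun ω => (-1) * |F ω|) (G := F)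
      (fun ω => by have := neg_abs_le (F ω); linarith)
    rw [wE_mul] at this; linarith
  · exact wE_mono hw fun ω => le_abs_self _

lemma wE_sum {κ : Type} (s : Finset κ) (F : κ → (Fin n → Ω) → ℝ) :
    wE w (fun ω => ∑ k ∈ s, F k ω) = ∑ k ∈ s, wE w (F k) := by
  simp only [wE, Finset.mul_sum]
  rw [Finset.sum_comm]

/-- Cauchy-Schwarz. -/
lemma wE_cs (hw : IsW w) (F G : (Fin n → Ω) → ℝ) :
    (wE w (fun ω => F ω * G ω)) ^ 2 ≤ wE w (fun ω => F ω ^ 2) * wE w (fun ω => G ω ^ 2) := by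
  have hp : ∀ ω : Fin n → Ω, 0 ≤ ∏ i, w (ω i) := fun ω => Finset.prod_nonneg fun _ _ => hw.1 _
  have := Finset.sum_mul_sq_le_sq_mul_sq (Finset.univ : Finset (Fin n → Ω))
    (fun ω => Real.sqrt (∏ i, w (ω i)) * F ω) (fun ω => Real.sqrt (∏ i, w (ω i)) * G ω)
  simp only [wE]
  calc _ = (∑ ω : Fin n → Ω, (√(∏ i, w (ω i)) * F ω) * (√(∏ i, w (ω i)) * G ω)) ^ 2 := by
        congr 1; refine Finset.sum_congr rfl fun ω _ => ?_
        have := Real.mul_self_sqrt (hp ω)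
        linear_combination (-F ω * G ω) * this
    _ ≤ _ := this
    _ = _ := by
        congr 1 <;> refine Finset.sum_congr rfl fun ω _ => ?_ <;>
        rw [mul_pow, Real.sq_sqrt (hp ω)]

lemma prod_update (ω : Fin n → Ω) (j : Fin n) (a : Ω) :
    (∏ i, w (Function.update ω j a i)) * w (ω j) = (∏ i, w (ω i)) * w a := by
  rw [← Finset.mul_prod_erase univ _ (Finset.mem_univ j),
    ← Finset.mul_prod_erase univ (fun i => w (ω i)) (Finset.mem_univ j)]
  have : ∏ x ∈ univ.erase j, w (Function.update ω j a x) = ∏ x ∈ univ.erase j, w (ω x) := by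
    refine Finset.prod_congr rfl fun x hx => ?_
    rw [Function.update_of_ne (Finset.ne_of_mem_erase hx)]
  rw [this]; simp; ring

/-- Resampling one coordinate. -/
lemma wE_resample (hw : IsW w) (j : Fin n) (F : (Fin n → Ω) → ℝ) :
    wE w F = wE w (fun ω => ∑ a, w a * F (Function.update ω j a)) := by
  have h1 : wE w F = ∑ q : (Fin n → Ω) × Ω, (∏ i, w (q.1 i)) * w q.2 * F q.1 := by
    rw [Fintype.sum_prod_type]
    refine Finset.sum_congr rfl fun ω _ => ?_
    simp only []
    rw [← Finset.sum_mul, ← Finset.mul_sum, hw.2, mul_one]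
  have h2 : wE w (fun ω => ∑ a, w a * F (Function.update ω j a)) =
      ∑ q : (Fin n → Ω) × Ω, (∏ i, w (q.1 i)) * w q.2 * F (Function.update q.1 j q.2) := by
    rw [Fintype.sum_prod_type]
    refine Finset.sum_congr rfl fun ω _ => ?_
    simp only [Finset.mul_sum, mul_assoc]
  rw [h1, h2]
  let σ : (Fin n → Ω) × Ω → (Fin n → Ω) × Ω := fun q => (Function.update q.1 j q.2, q.1 j)
  have hσ : Function.Involutive σ := by
    intro q; simp [σ]
  rw [← Equiv.sum_comp hσ.toPerm]
  refine Finset.sum_congr rfl fun q _ => ?_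
  change (∏ i, w (Function.update q.1 j q.2 i)) * w (q.1 j) * F (Function.update q.1 j q.2) = _
  rw [prod_update]

lemma wE_indep (hw : IsW w) (j : Fin n) (g : Ω → ℝ) (G : (Fin n → Ω) → ℝ)
    (hG : ∀ ω a, G (Function.update ω j a) = G ω) :
    wE w (fun ω => g (ω j) * G ω) = (∑ a, w a * g a) * wE w G := by
  rw [wE_resample hw j, ← wE_mul]
  congr 1; funext ω
  rw [Finset.sum_mul]
  refine Finset.sum_congr rfl fun a _ => ?_
  rw [hG]; simp; ring

end basics

lemma wE_prod {n : ℕ} {Ω₁ Ω₂ : Type} [Fintype Ω₁] [Fintype Ω₂] (w₁ : Ω₁ → ℝ) (w₂ : Ω₂ → ℝ)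
    (F : (Fin n → Ω₁ × Ω₂) → ℝ) :
    wE (fun q : Ω₁ × Ω₂ => w₁ q.1 * w₂ q.2) F
      = wE w₁ (fun a => wE w₂ (fun b => F (fun i => (a i, b i)))) := by
  simp only [wE, Finset.mul_sum]
  rw [← Fintype.sum_prod_type' (f := fun (x : Fin n → Ω₁) (y : Fin n → Ω₂) =>
    (∏ i, w₁ (x i)) * ((∏ i, w₂ (y i)) * F fun i => (x i, y i)))]
  rw [← Equiv.sum_comp (Equiv.arrowProdEquivProdArrow (Fin n) (fun _ => Ω₁) (fun _ => Ω₂)).symm]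
  refine Finset.sum_congr rfl fun q _ => ?_
  simp only [Equiv.arrowProdEquivProdArrow, Equiv.coe_fn_symm_mk, Finset.prod_mul_distrib]
  ring

lemma IsW.prod {Ω₁ Ω₂ : Type} [Fintype Ω₁] [Fintype Ω₂] {w₁ : Ω₁ → ℝ} {w₂ : Ω₂ → ℝ}
    (h₁ : IsW w₁) (h₂ : IsW w₂) : IsW (fun q : Ω₁ × Ω₂ => w₁ q.1 * w₂ q.2) := by
  refine ⟨fun a => mul_nonneg (h₁.1 _) (h₂.1 _), ?_⟩
  rw [Fintype.sum_prod_type]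
  simp [← Finset.mul_sum, h₂.2, h₁.2]

/-! ## Multilinear polynomials given by coefficients -/

/-- Evaluation of the multilinear polynomial with coefficients `c`. -/
noncomputable def ev {n : ℕ} (c : Finset (Fin n) → ℝ) (z : Fin n → ℝ) : ℝ :=
  ∑ S, c S * ∏ i ∈ S, z i

/-- degree at most `d` -/
def Deg {n : ℕ} (d : ℕ) (c : Finset (Fin n) → ℝ) : Prop := ∀ S, d < S.card → c S = 0

/-- part not involving `j` -/
noncomputable def av {n : ℕ} (j : Fin n) (c : Finset (Fin n) → ℝ) : Finset (Fin n) → ℝ :=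
  fun S => if j ∈ S then 0 else c S

/-- derivative in direction `j` -/
noncomputable def dv {n : ℕ} (j : Fin n) (c : Finset (Fin n) → ℝ) : Finset (Fin n) → ℝ :=
  fun S => if j ∈ S then 0 else c (insert j S)

/-- squared norm -/
noncomputable def nn {n : ℕ} (c : Finset (Fin n) → ℝ) : ℝ := ∑ S, c S ^ 2

/-- splitting a sum over all subsets according to membership of `j` -/
lemma sum_split {n : ℕ} (j : Fin n) (f : Finset (Fin n) → ℝ) :
    ∑ S, f S = ∑ S, (if j ∈ S then 0 else f S) + ∑ S, (if j ∈ S then 0 else f (insert j S)) := by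
  have h : ∀ S, f S = (if j ∈ S then 0 else f S) + (if j ∈ S then f S else 0) := by
    intro S; split_ifs <;> simp
  rw [Finset.sum_congr rfl fun S _ => h S, Finset.sum_add_distrib]
  congr 1
  have h2 : ∑ S : Finset (Fin n), (if j ∈ S then 0 else f (insert j S)) =
      ∑ S : Finset (Fin n), (if ¬ j ∈ S then f (insert j S) else 0) := by
    refine Finset.sum_congr rfl fun S _ => ?_
    split_ifs <;> simp
  rw [h2, ← Finset.sum_filter, ← Finset.sum_filter]
  refine Finset.sum_nbij' (fun S => S.erase j) (fun S => insert j S) ?_ ?_ ?_ ?_ ?_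
  · intro S hS; simp
  · intro S hS; simp
  · intro S hS; simp at hS; simp [Finset.insert_erase hS]
  · intro S hS; simp at hS; simp [Finset.erase_insert hS]
  · intro S hS; simp at hS; simp [Finset.insert_erase hS]


section poly
variable {n : ℕ}

lemma ev_split (j : Fin n) (c : Finset (Fin n) → ℝ) (z : Fin n → ℝ) :
    ev c z = ev (av j c) z + z j * ev (dv j c) z := by
  unfold ev
  rw [sum_split j, Finset.mul_sum]
  congr 1
  · refine Finset.sum_congr rfl fun S _ => ?_
    simp only [av]; split_ifs <;> simp
  · refine Finset.sum_congr rfl fun S _ => ?_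
    simp only [dv]
    split_ifs with h
    · simp
    · rw [Finset.prod_insert h]; ring

lemma ev_av_update (j : Fin n) (c : Finset (Fin n) → ℝ) (z : Fin n → ℝ) (a : ℝ) :
    ev (av j c) (Function.update z j a) = ev (av j c) z := by
  unfold ev
  refine Finset.sum_congr rfl fun S _ => ?_
  simp only [av]
  split_ifs with h
  · simp
  · congr 1
    refine Finset.prod_congr rfl fun i hi => ?_
    rw [Function.update_of_ne]; rintro rfl; exact h hi

lemma ev_dv_update (j : Fin n) (c : Finset (Fin n) → ℝ) (z : Fin n → ℝ) (a : ℝ) :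
    ev (dv j c) (Function.update z j a) = ev (dv j c) z := by
  unfold ev
  refine Finset.sum_congr rfl fun S _ => ?_
  simp only [dv]
  split_ifs with h
  · simp
  · congr 1
    refine Finset.prod_congr rfl fun i hi => ?_
    rw [Function.update_of_ne]; rintro rfl; exact h hi

lemma nn_split (j : Fin n) (c : Finset (Fin n) → ℝ) : nn c = nn (av j c) + nn (dv j c) := by
  unfold nn
  rw [sum_split j]
  congr 1 <;> refine Finset.sum_congr rfl fun S _ => ?_
  · simp only [av]; split_ifs <;> simp
  · simp only [dv]; split_ifs <;> simp

lemma nn_nonneg (c : Finset (Fin n) → ℝ) : 0 ≤ nn c := Finset.sum_nonneg fun _ _ => sq_nonneg _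

lemma Deg.av {d : ℕ} {c : Finset (Fin n) → ℝ} (h : Deg d c) (j : Fin n) : Deg d (av j c) := by
  intro S hS; simp only [_root_.av]; split_ifs; rfl; exact h S hS

lemma Deg.dv {d : ℕ} {c : Finset (Fin n) → ℝ} (h : Deg d c) (j : Fin n) : Deg (d - 1) (dv j c) := by
  intro S hS; simp only [_root_.dv]
  split_ifs with hj
  · rfl
  · apply h; rw [Finset.card_insert_of_notMem hj]; omega

lemma Deg.dv0 {c : Finset (Fin n) → ℝ} (h : Deg 0 c) (j : Fin n) : _root_.dv j c = fun _ => 0 := by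
  funext S; simp only [_root_.dv]
  split_ifs with hj
  · rfl
  · apply h; rw [Finset.card_insert_of_notMem hj]; omega

/-- supported on subsets of `s` -/
def Supp (s : Finset (Fin n)) (c : Finset (Fin n) → ℝ) : Prop := ∀ S, ¬ S ⊆ s → c S = 0

lemma Supp.av {s : Finset (Fin n)} {j : Fin n} {c : Finset (Fin n) → ℝ}
    (h : Supp (insert j s) c) : Supp s (av j c) := by
  intro S hS; simp only [_root_.av]
  split_ifs with hj
  · rfl
  · apply h; rwa [Finset.subset_insert_iff_of_notMem hj]

lemma Supp.dv {s : Finset (Fin n)} {j : Fin n} {c : Finset (Fin n) → ℝ}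
    (h : Supp (insert j s) c) : Supp s (dv j c) := by
  intro S hS; simp only [_root_.dv]
  split_ifs with hj
  · rfl
  · apply h
    rw [Finset.insert_subset_insert_iff hj]; exact hS

lemma supp_univ (c : Finset (Fin n) → ℝ) : Supp univ c := fun S hS => absurd (Finset.subset_univ S) hS

lemma ev_supp_empty {c : Finset (Fin n) → ℝ} (h : Supp ∅ c) (z : Fin n → ℝ) : ev c z = c ∅ := by
  unfold ev
  rw [Finset.sum_eq_single ∅]
  · simp
  · intro S _ hS; rw [h S (by simpa using hS)]; simp
  · simp

lemma nn_supp_empty {c : Finset (Fin n) → ℝ} (h : Supp ∅ c) : nn c = c ∅ ^ 2 := by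
  unfold nn
  rw [Finset.sum_eq_single ∅]
  · intro S _ hS; rw [h S (by simpa using hS)]; simp
  · simp

variable {Ω : Type} [Fintype Ω] {w : Ω → ℝ}

/-- Moment conditions on coordinate variables. -/
structure Good (w : Ω → ℝ) (z : Ω → ℝ) : Prop where
  m1 : ∑ a, w a * z a = 0
  m2 : ∑ a, w a * z a ^ 2 = 1
  m3 : ∑ a, w a * z a ^ 3 = 0
  m4 : ∑ a, w a * z a ^ 4 ≤ 9

/-- random evaluation -/
noncomputable def rv (c : Finset (Fin n) → ℝ) (z : Fin n → Ω → ℝ) (ω : Fin n → Ω) : ℝ :=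
  ev c (fun i => z i (ω i))

lemma zupd (z : Fin n → Ω → ℝ) (ω : Fin n → Ω) (j : Fin n) (a : Ω) :
    (fun i => z i (Function.update ω j a i)) = Function.update (fun i => z i (ω i)) j (z j a) := by
  funext i
  by_cases h : i = j
  · subst h; simp
  · simp [Function.update_of_ne h]

lemma rv_av_upd (c : Finset (Fin n) → ℝ) (z : Fin n → Ω → ℝ) (ω : Fin n → Ω) (j : Fin n) (a : Ω) :
    rv (av j c) z (Function.update ω j a) = rv (av j c) z ω := by
  unfold rv; rw [zupd, ev_av_update]

lemma rv_dv_upd (c : Finset (Fin n) → ℝ) (z : Fin n → Ω → ℝ) (ω : Fin n → Ω) (j : Fin n) (a : Ω) :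
    rv (dv j c) z (Function.update ω j a) = rv (dv j c) z ω := by
  unfold rv; rw [zupd, ev_dv_update]

lemma rv_split (c : Finset (Fin n) → ℝ) (z : Fin n → Ω → ℝ) (ω : Fin n → Ω) (j : Fin n) :
    rv c z ω = rv (av j c) z ω + z j (ω j) * rv (dv j c) z ω := by
  unfold rv; rw [ev_split j]

lemma rv_mean (hw : IsW w) {z : Fin n → Ω → ℝ} (hz : ∀ i, Good w (z i)) :
    ∀ (s : Finset (Fin n)) (c : Finset (Fin n) → ℝ), Supp s c → wE w (rv c z) = c ∅ := by
  intro s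
  induction s using Finset.induction_on with
  | empty => 
    intro c hc
    have : rv c z = fun _ => c ∅ := by funext ω; exact ev_supp_empty hc _
    rw [this, wE_const hw]
  | insert j s hj ih =>
    intro c hc
    have : rv c z = fun ω => rv (av j c) z ω + z j (ω j) * rv (dv j c) z ω := by
      funext ω; exact rv_split c z ω j
    rw [this, wE_add, wE_indep hw j (z j) _ (fun ω a => rv_dv_upd c z ω j a), (hz j).m1,
      ih _ hc.av]
    simp [av]

lemma rv_sq (hw : IsW w) {z : Fin n → Ω → ℝ} (hz : ∀ i, Good w (z i)) :
    ∀ (s : Finset (Fin n)) (c : Finset (Fin n) → ℝ), Supp s c →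
      wE w (fun ω => rv c z ω ^ 2) = nn c := by
  intro s
  induction s using Finset.induction_on with
  | empty => 
    intro c hc
    have : (fun ω => rv c z ω ^ 2) = fun _ => c ∅ ^ 2 := by
      funext ω; rw [rv, ev_supp_empty hc _]
    rw [this, wE_const hw, nn_supp_empty hc]
  | insert j s hj ih =>
    intro c hc
    have : (fun ω => rv c z ω ^ 2) = fun ω => (rv (av j c) z ω ^ 2
        + z j (ω j) * (2 * rv (av j c) z ω * rv (dv j c) z ω))
        + (z j (ω j) ^ 2) * rv (dv j c) z ω ^ 2 := by
      funext ω; rw [rv_split c z ω j]; ring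
    rw [this, wE_add, wE_add, wE_indep hw j (z j) _ (fun ω a => by rw [rv_dv_upd, rv_av_upd]),
      wE_indep hw j (fun a => z j a ^ 2) _ (fun ω a => by rw [rv_dv_upd]), (hz j).m1, (hz j).m2,
      ih _ hc.av, ih _ hc.dv, nn_split j c]
    ring

/-- (4,2) hypercontractivity. -/
lemma rv_four (hw : IsW w) {z : Fin n → Ω → ℝ} (hz : ∀ i, Good w (z i)) :
    ∀ (s : Finset (Fin n)) (c : Finset (Fin n) → ℝ) (d : ℕ), Supp s c → Deg d c →
      wE w (fun ω => rv c z ω ^ 4) ≤ 9 ^ d * nn c ^ 2 := by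
  intro s
  induction s using Finset.induction_on with
  | empty => 
    intro c d hc hd
    have : (fun ω => rv c z ω ^ 4) = fun _ => c ∅ ^ 4 := by
      funext ω; rw [rv, ev_supp_empty hc _]
    rw [this, wE_const hw, nn_supp_empty hc]
    have h9 : (1:ℝ) ≤ 9 ^ d := one_le_pow₀ (by norm_num)
    nlinarith [pow_nonneg (sq_nonneg (c ∅)) 2]
  | insert j s hj ih =>
    intro c d hc hd
    have : (fun ω => rv c z ω ^ 4) = fun ω => (((rv (av j c) z ω ^ 4
        + z j (ω j) * (4 * rv (av j c) z ω ^ 3 * rv (dv j c) z ω))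
        + z j (ω j) ^ 2 * (6 * (rv (av j c) z ω ^ 2 * rv (dv j c) z ω ^ 2)))
        + z j (ω j) ^ 3 * (4 * rv (av j c) z ω * rv (dv j c) z ω ^ 3))
        + z j (ω j) ^ 4 * rv (dv j c) z ω ^ 4 := by
      funext ω; rw [rv_split c z ω j]; ring
    rw [this, wE_add, wE_add, wE_add, wE_add,
      wE_indep hw j (z j) _ (fun ω a => by rw [rv_dv_upd, rv_av_upd]),
      wE_indep hw j (fun a => z j a ^ 2) _ (fun ω a => by rw [rv_dv_upd, rv_av_upd]),
      wE_indep hw j (fun a => z j a ^ 3) _ (fun ω a => by rw [rv_dv_upd, rv_av_upd]),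
      wE_indep hw j (fun a => z j a ^ 4) _ (fun ω a => by rw [rv_dv_upd]),
      (hz j).m1, (hz j).m2, (hz j).m3, wE_mul]
    have hA := ih _ d hc.av (hd.av j)
    have hcs := wE_cs hw (fun ω => rv (av j c) z ω ^ 2) (fun ω => rv (dv j c) z ω ^ 2)
    have e1 : ∀ c' : Finset (Fin n) → ℝ, (fun ω => (rv c' z ω ^ 2) ^ 2) = fun ω => rv c' z ω ^ 4 := by
      intro c'; funext ω; ring
    rw [e1, e1] at hcs
    have hB0 : 0 ≤ wE w (fun ω => rv (dv j c) z ω ^ 4) := wE_nonneg hw fun ω => by positivity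
    have hA0 : 0 ≤ wE w (fun ω => rv (av j c) z ω ^ 4) := wE_nonneg hw fun ω => by positivity
    have hm4 := (hz j).m4
    have hB : 9 * wE w (fun ω => rv (dv j c) z ω ^ 4) ≤ 9 ^ d * nn (dv j c) ^ 2 := by
      cases d with
      | zero =>
        rw [hd.dv0 j]
        simp [rv, ev, wE]; exact sq_nonneg _
      | succ d =>
        have := ih _ d hc.dv (hd.dv j)
        rw [pow_succ]; nlinarith
    rw [nn_split j c]
    set X := wE w (fun ω => rv (av j c) z ω ^ 2 * rv (dv j c) z ω ^ 2)
    set EA := wE w (fun ω => rv (av j c) z ω ^ 4)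
    set EB := wE w (fun ω => rv (dv j c) z ω ^ 4)
    have hX : 3 * X ≤ 9 ^ d * (nn (av j c) * nn (dv j c)) := by
      have hn := nn_nonneg (av j c)
      have hn2 := nn_nonneg (dv j c)
      have h9 : (0:ℝ) ≤ 9 ^ d := by positivity
      refine abs_le_of_sq_le_sq' ?_ (by positivity) |>.2
      have h1 : EA * (9 * EB) ≤ (9 ^ d * nn (av j c) ^ 2) * (9 ^ d * nn (dv j c) ^ 2) :=
        mul_le_mul hA hB (by linarith) (by positivity)
      nlinarith
    have h3 : (∑ a, w a * z j a ^ 4) * EB ≤ 9 * EB := mul_le_mul_of_nonneg_right hm4 hB0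
    linear_combination hA + 2 * hX + hB + h3
end poly


/-! ## The Boolean cube -/

/-- uniform weights on `Bool` -/
noncomputable def wB : Bool → ℝ := fun _ => 1 / 2

lemma isW_B : IsW wB := ⟨fun _ => by norm_num [wB], by simp [wB]⟩

lemma good_chi : Good wB chi := by
  constructor <;> simp [wB, chi] <;> norm_num

section cube
variable {n : ℕ}

/-- evaluation on the cube -/
noncomputable def cv (c : Finset (Fin n) → ℝ) (x : Fin n → Bool) : ℝ := rv c (fun _ => chi) x

lemma cv_eq (c : Finset (Fin n) → ℝ) (x : Fin n → Bool) :
    cv c x = ∑ S, c S * ∏ i ∈ S, chi (x i) := rfl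

lemma cv_mean (c : Finset (Fin n) → ℝ) : wE wB (cv c) = c ∅ :=
  rv_mean isW_B (fun _ => good_chi) univ c (supp_univ c)

lemma cv_sq (c : Finset (Fin n) → ℝ) : wE wB (fun x => cv c x ^ 2) = nn c :=
  rv_sq isW_B (fun _ => good_chi) univ c (supp_univ c)

lemma cv_four {c : Finset (Fin n) → ℝ} {d : ℕ} (h : Deg d c) :
    wE wB (fun x => cv c x ^ 4) ≤ 9 ^ d * nn c ^ 2 :=
  rv_four isW_B (fun _ => good_chi) univ c d (supp_univ c) h

/-- `g` is a function of degree at most `d` -/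
def FDeg (d : ℕ) (g : (Fin n → Bool) → ℝ) : Prop := ∃ c, Deg d c ∧ g = cv c

lemma FDeg.zero (d : ℕ) : FDeg d (fun _ : Fin n → Bool => (0:ℝ)) :=
  ⟨fun _ => 0, fun _ _ => rfl, by funext x; simp [cv_eq]⟩

lemma FDeg.add {d : ℕ} {g h : (Fin n → Bool) → ℝ} (hg : FDeg d g) (hh : FDeg d h) :
    FDeg d (fun x => g x + h x) := by
  obtain ⟨c, hc, rfl⟩ := hg
  obtain ⟨c', hc', rfl⟩ := hh
  refine ⟨fun S => c S + c' S, fun S hS => by simp [hc S hS, hc' S hS], ?_⟩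
  funext x
  simp [cv_eq, add_mul, Finset.sum_add_distrib]

lemma FDeg.sum {d : ℕ} {κ : Type} (s : Finset κ) (g : κ → (Fin n → Bool) → ℝ)
    (h : ∀ k ∈ s, FDeg d (g k)) : FDeg d (fun x => ∑ k ∈ s, g k x) := by
  induction s using Finset.induction_on with
  | empty => simpa using FDeg.zero d
  | insert a s ha ih =>
    simp only [Finset.sum_insert ha]
    exact FDeg.add (h a (by simp)) (ih fun k hk => h k (by simp [hk]))

lemma FDeg.mono_char {d : ℕ} (S : Finset (Fin n)) (a : ℝ) (h : d < S.card → a = 0) :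
    FDeg d (fun x => a * ∏ i ∈ S, chi (x i)) := by
  refine ⟨fun T => if T = S then a else 0, ?_, ?_⟩
  · intro T hT
    by_cases hTS : T = S
    · subst hTS; simp [h hT]
    · simp [hTS]
  · funext x; simp [cv_eq]

lemma chi_sq (b : Bool) : chi b * chi b = 1 := by cases b <;> simp [chi]

lemma char_mul (S T : Finset (Fin n)) (x : Fin n → Bool) :
    (∏ i ∈ S, chi (x i)) * (∏ i ∈ T, chi (x i)) = ∏ i ∈ symmDiff S T, chi (x i) := by
  have hS : ∏ i ∈ S, chi (x i) = (∏ i ∈ S \ T, chi (x i)) * ∏ i ∈ S ∩ T, chi (x i) := by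
    rw [mul_comm]; exact (Finset.prod_inter_mul_prod_sdiff S T _).symm
  have hT : ∏ i ∈ T, chi (x i) = (∏ i ∈ T \ S, chi (x i)) * ∏ i ∈ S ∩ T, chi (x i) := by
    rw [mul_comm, Finset.inter_comm]; exact (Finset.prod_inter_mul_prod_sdiff T S _).symm
  have hI : (∏ i ∈ S ∩ T, chi (x i)) * (∏ i ∈ S ∩ T, chi (x i)) = 1 := by
    rw [← Finset.prod_mul_distrib]; exact Finset.prod_eq_one fun i _ => chi_sq _
  have hU : ∏ i ∈ symmDiff S T, chi (x i) = (∏ i ∈ S \ T, chi (x i)) * ∏ i ∈ T \ S, chi (x i) := by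
    rw [symmDiff_def, Finset.sup_eq_union, Finset.prod_union]
    exact disjoint_sdiff_sdiff
  rw [hS, hT, hU]
  linear_combination ((∏ i ∈ S \ T, chi (x i)) * ∏ i ∈ T \ S, chi (x i)) * hI

lemma FDeg.mul {d d' : ℕ} {g h : (Fin n → Bool) → ℝ} (hg : FDeg d g) (hh : FDeg d' h) :
    FDeg (d + d') (fun x => g x * h x) := by
  obtain ⟨c, hc, rfl⟩ := hg
  obtain ⟨c', hc', rfl⟩ := hh
  have : (fun x => cv c x * cv c' x) =
      fun x => ∑ S, ∑ T, (c S * c' T) * ∏ i ∈ symmDiff S T, chi (x i) := by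
    funext x
    rw [cv_eq, cv_eq, Finset.sum_mul_sum]
    refine Finset.sum_congr rfl fun S _ => Finset.sum_congr rfl fun T _ => ?_
    rw [← char_mul]; ring
  rw [this]
  refine FDeg.sum _ _ fun S _ => FDeg.sum _ _ fun T _ => FDeg.mono_char _ _ fun hST => ?_
  have h1 : (symmDiff S T).card ≤ S.card + T.card := by
    rw [symmDiff_def, Finset.sup_eq_union]
    refine (Finset.card_union_le _ _).trans (Nat.add_le_add ?_ ?_)
    · exact Finset.card_le_card Finset.sdiff_subset
    · exact Finset.card_le_card Finset.sdiff_subset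
  by_cases hS : d < S.card
  · simp [hc S hS]
  · have : d' < T.card := by omega
    simp [hc' T this]

lemma FDeg.four {d : ℕ} {g : (Fin n → Bool) → ℝ} (hg : FDeg d g) :
    wE wB (fun x => g x ^ 4) ≤ 9 ^ d * (wE wB (fun x => g x ^ 2)) ^ 2 := by
  obtain ⟨c, hc, rfl⟩ := hg
  rw [cv_sq]; exact cv_four hc

lemma high_mom (j : ℕ) : ∀ (d : ℕ) (g : (Fin n → Bool) → ℝ), FDeg d g →
    wE wB (fun x => g x ^ (2 ^ (j+1))) ≤ (9 ^ (d * j) * wE wB (fun x => g x ^ 2)) ^ (2 ^ j) := by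
  induction j with
  | zero => intro d g hg; simp
  | succ j ih =>
    intro d g hg
    have h2 := ih (d + d) (fun x => g x * g x) (hg.mul hg)
    have e1 : (fun x => (g x * g x) ^ 2 ^ (j+1)) = fun x => g x ^ 2 ^ (j+1+1) := by
      funext x; rw [← pow_two, ← pow_mul]; congr 1; ring
    have e2 : (fun x => (g x * g x) ^ 2) = fun x => g x ^ 4 := by
      funext x; ring
    rw [e1, e2] at h2
    refine h2.trans ?_
    have h4 := hg.four
    have hE : 0 ≤ wE wB (fun x => g x ^ 2) := wE_nonneg isW_B fun x => sq_nonneg _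
    have hE4 : 0 ≤ wE wB (fun x => g x ^ 4) := wE_nonneg isW_B fun x => by positivity
    have e5 : ∀ A : ℝ, A ^ 2 ^ (j+1) = (A ^ 2) ^ 2 ^ j := fun A => by
      rw [← pow_mul]; congr 1; ring
    rw [e5]
    refine pow_le_pow_left₀ (mul_nonneg (by positivity) hE4) ?_ _
    have e3 : (9:ℝ) ^ (d * (j+1)) = 9 ^ (d*j) * 9 ^ d := by rw [← pow_add]; congr 1
    have e4 : (9:ℝ) ^ ((d+d) * j) = (9 ^ (d*j)) ^ 2 := by rw [← pow_mul]; congr 1; ring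
    rw [e3, e4]
    have h9 : (1:ℝ) ≤ 9 ^ d := one_le_pow₀ (by norm_num)
    calc (9 ^ (d*j)) ^ 2 * wE wB (fun x => g x ^ 4)
        ≤ (9 ^ (d*j)) ^ 2 * (9 ^ d * (wE wB (fun x => g x ^ 2)) ^ 2) := by gcongr
      _ = (9 ^ (d*j)) ^ 2 * (wE wB (fun x => g x ^ 2)) ^ 2 * (9 ^ d * 1) := by ring
      _ ≤ (9 ^ (d*j)) ^ 2 * (wE wB (fun x => g x ^ 2)) ^ 2 * (9 ^ d * 9 ^ d) := by gcongr
      _ = _ := by ring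

/-- sign function -/
noncomputable def sg (c : Finset (Fin n) → ℝ) (x : Fin n → Bool) : ℝ := Real.sign (cv c x)

/-- fractional moment -/
noncomputable def mom (α : ℝ) (c : Finset (Fin n) → ℝ) : ℝ := wE wB (fun x => (sens (sg c) x : ℝ) ^ α)

/-- variance -/
noncomputable def vr (c : Finset (Fin n) → ℝ) : ℝ := nn (fun S => if S = ∅ then 0 else c S)

lemma vr_nonneg (c : Finset (Fin n) → ℝ) : 0 ≤ vr c := nn_nonneg _

lemma nn_eq_vr (c : Finset (Fin n) → ℝ) : nn c = c ∅ ^ 2 + vr c := by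
  unfold vr nn
  rw [← Finset.add_sum_erase univ _ (Finset.mem_univ ∅),
    ← Finset.add_sum_erase univ (fun S => (if S = ∅ then 0 else c S)^2) (Finset.mem_univ ∅)]
  simp only [if_true]
  have : ∑ x ∈ univ.erase ∅, c x ^ 2 = ∑ x ∈ univ.erase ∅, (if x = ∅ then 0 else c x) ^ 2 := by
    refine Finset.sum_congr rfl fun S hS => ?_
    rw [if_neg (Finset.ne_of_mem_erase hS)]
  rw [this]; ring

/-- centered -/
noncomputable def cen (c : Finset (Fin n) → ℝ) : Finset (Fin n) → ℝ := fun S => if S = ∅ then 0 else c S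

lemma cv_cen (c : Finset (Fin n) → ℝ) (x) : cv (cen c) x = cv c x - c ∅ := by
  rw [cv_eq, cv_eq]
  rw [← Finset.add_sum_erase univ _ (Finset.mem_univ ∅),
    ← Finset.add_sum_erase univ (fun S => c S * ∏ i ∈ S, chi (x i)) (Finset.mem_univ ∅)]
  have : ∑ S ∈ univ.erase ∅, c S * ∏ i ∈ S, chi (x i)
      = ∑ S ∈ univ.erase ∅, (cen c S) * ∏ i ∈ S, chi (x i) := by
    refine Finset.sum_congr rfl fun S hS => ?_
    rw [cen, if_neg (Finset.ne_of_mem_erase hS)]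
  rw [this]; simp [cen]

lemma Deg.cen {d : ℕ} {c : Finset (Fin n) → ℝ} (h : Deg d c) : Deg d (cen c) := by
  intro S hS; unfold _root_.cen; split_ifs; rfl; exact h S hS

lemma mom_nonneg (α : ℝ) (c : Finset (Fin n) → ℝ) : 0 ≤ mom α c :=
  wE_nonneg isW_B fun x => by positivity

lemma sens_le (f : (Fin n → Bool) → ℝ) (x) : sens f x ≤ n := by
  unfold sens; simpa using Finset.card_le_univ (univ.filter (fun i => f (flipAt x i) ≠ f x))

lemma sens_rpow_le {α : ℝ} (h0 : 0 < α) (h1 : α ≤ 1) (s : ℕ) : (s:ℝ) ^ α ≤ s := by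
  rcases Nat.eq_zero_or_pos s with rfl | hs
  · simp [Real.zero_rpow h0.ne']
  · have : (1:ℝ) ≤ s := by exact_mod_cast hs
    simpa using Real.rpow_le_rpow_of_exponent_le this h1

lemma mom_le_n {α : ℝ} (h0 : 0 < α) (h1 : α ≤ 1) (c : Finset (Fin n) → ℝ) : mom α c ≤ n := by
  have : mom α c ≤ wE (n := n) wB (fun _ => (n:ℝ)) := wE_mono isW_B fun x =>
    (sens_rpow_le h0 h1 _).trans (by exact_mod_cast sens_le _ _)
  rwa [wE_const isW_B] at this

lemma mom_const {α : ℝ} (h0 : 0 < α) (c : Finset (Fin n) → ℝ) (k : ℝ) (h : ∀ x, cv c x = k) :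
    mom α c = 0 := by
  have : (fun x => (sens (sg c) x : ℝ) ^ α) = fun _ => 0 := by
    funext x
    have : sens (sg c) x = 0 := by simp [sens, sg, h]
    rw [this]; simp [Real.zero_rpow h0.ne']
  rw [mom, this, wE_const isW_B]

lemma nn_eq_zero {c : Finset (Fin n) → ℝ} (h : nn c = 0) (S) : c S = 0 := by
  unfold nn at h
  rw [Finset.sum_eq_zero_iff_of_nonneg (fun _ _ => sq_nonneg _)] at h
  simpa using h S (Finset.mem_univ S)

lemma mom_vr_zero {α : ℝ} (h0 : 0 < α) (c : Finset (Fin n) → ℝ) (h : vr c = 0) : mom α c = 0 := by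
  refine mom_const h0 c (c ∅) fun x => ?_
  have h1 := cv_cen c x
  have : cv (cen c) x = 0 := by
    rw [cv_eq]; refine Finset.sum_eq_zero fun S _ => ?_
    have := nn_eq_zero (c := cen c) h S
    rw [this]; simp
  linarith

lemma flip_invol (i : Fin n) : Function.Involutive (fun x : Fin n → Bool => flipAt x i) := by
  intro x; simp [flipAt]

lemma wE_flip (i : Fin n) (F : (Fin n → Bool) → ℝ) :
    wE wB (fun x => F (flipAt x i)) = wE wB F := by
  unfold wE
  rw [← Equiv.sum_comp (flip_invol i).toPerm (fun x => (∏ i, wB (x i)) * F x)]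
  refine Finset.sum_congr rfl fun x _ => ?_
  simp [wB]

/-- Skewed polynomials have small moment. -/
lemma skew_mom {α : ℝ} (h0 : 0 < α) (h1 : α ≤ 1) {d j : ℕ} {c : Finset (Fin n) → ℝ} (hc : Deg d c)
    (hs : 2 * 9 ^ (d * j) * vr c ≤ c ∅ ^ 2) (hn : (n:ℝ) * (n + 1) ≤ 2 ^ (2 ^ j)) : mom α c ≤ 1 := by
  by_cases hv : vr c = 0
  · rw [mom_vr_zero h0 c hv]; norm_num
  have hvp : 0 < vr c := lt_of_le_of_ne (vr_nonneg c) (Ne.symm hv)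
  have hμ : 0 < c ∅ ^ 2 := lt_of_lt_of_le (by positivity) hs
  let bad : (Fin n → Bool) → ℝ := fun x => if c ∅ ^ 2 ≤ cv (cen c) x ^ 2 then 1 else 0
  have hbad0 : ∀ x, 0 ≤ bad x := fun x => by simp only [bad]; split_ifs <;> norm_num
  have hbad : wE wB bad * 2 ^ (2 ^ j) ≤ 1 := by
    have hm := high_mom j d (cv (cen c)) ⟨_, hc.cen, rfl⟩
    rw [cv_sq] at hm
    have hm2 : (9 ^ (d*j) * nn (cen c)) ^ 2 ^ j ≤ (c ∅ ^ 2 / 2) ^ 2 ^ j := by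
      refine pow_le_pow_left₀ (mul_nonneg (by positivity) (nn_nonneg _)) ?_ _
      change _ * vr c ≤ _
      linarith
    have hm3 : wE wB bad * (c ∅ ^ 2) ^ 2 ^ j ≤ wE wB (fun x => cv (cen c) x ^ 2 ^ (j+1)) := by
      rw [← wE_mul']
      refine wE_mono isW_B fun x => ?_
      have e : cv (cen c) x ^ 2 ^ (j+1) = (cv (cen c) x ^ 2) ^ 2 ^ j := by
        rw [← pow_mul]; congr 1; ring
      simp only [bad]
      split_ifs with h
      · rw [e, one_mul]; exact pow_le_pow_left₀ hμ.le h _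
      · rw [e]; simp; positivity
    have h4 := hm3.trans (hm.trans hm2)
    rw [div_pow, le_div_iff₀ (by positivity)] at h4
    have hp : 0 < (c ∅ ^ 2) ^ 2 ^ j := by positivity
    by_contra hcon
    push Not at hcon
    nlinarith
  have hpt : ∀ x, (sens (sg c) x : ℝ) ^ α ≤ n * (bad x + ∑ i, bad (flipAt x i)) := by
    intro x
    have hnn : 0 ≤ bad x + ∑ i, bad (flipAt x i) :=
      add_nonneg (hbad0 _) (Finset.sum_nonneg fun i _ => hbad0 _)
    by_cases hz : sens (sg c) x = 0
    · rw [hz]; simp only [Nat.cast_zero, Real.zero_rpow h0.ne']; positivity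
    · have hle : (sens (sg c) x : ℝ) ^ α ≤ n :=
        (sens_rpow_le h0 h1 _).trans (by exact_mod_cast sens_le _ _)
      have h1 : 1 ≤ bad x + ∑ i, bad (flipAt x i) := by
        by_contra hlt
        push Not at hlt
        have good : ∀ y, bad y < 1 → sg c y = Real.sign (c ∅) := by
          intro y hy
          have : cv (cen c) y ^ 2 < c ∅ ^ 2 := by
            by_contra hh; push Not at hh; simp [bad, hh] at hy
          rw [cv_cen] at this
          unfold sg
          rcases lt_or_gt_of_ne (show c ∅ ≠ 0 by intro h; simp [h] at hμ) with h | h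
          · rw [Real.sign_of_neg h, Real.sign_of_neg]; nlinarith
          · rw [Real.sign_of_pos h, Real.sign_of_pos]; nlinarith
        apply hz
        unfold sens
        rw [Finset.card_eq_zero, Finset.filter_eq_empty_iff]
        intro i _
        rw [not_not, good, good]
        · linarith [Finset.sum_nonneg fun i (_ : i ∈ univ) => hbad0 (flipAt x i)]
        · have := Finset.single_le_sum (f := fun i => bad (flipAt x i))
            (fun i _ => hbad0 (flipAt x i)) (Finset.mem_univ i)
          linarith [hbad0 x]
      nlinarith [(Nat.cast_nonneg n : (0:ℝ) ≤ n)]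
  have hfin : mom α c ≤ n * (wE wB bad + ∑ i : Fin n, wE wB bad) := by
    have := wE_mono isW_B hpt
    rw [wE_mul, wE_add, wE_sum] at this
    simp only [wE_flip] at this
    exact this
  have hb0 : 0 ≤ wE wB bad := wE_nonneg isW_B hbad0
  simp only [Finset.sum_const, Finset.card_univ, Fintype.card_fin, nsmul_eq_mul] at hfin
  nlinarith
end cube


/-! ## Restrictions and the tree argument -/
section tree
variable {n : ℕ}

/-- restriction of coordinate `j` to the value `b` -/
noncomputable def rst (j : Fin n) (b : ℝ) (c : Finset (Fin n) → ℝ) : Finset (Fin n) → ℝ :=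
  fun S => av j c S + b * dv j c S

lemma ev_rst (j : Fin n) (b : ℝ) (c : Finset (Fin n) → ℝ) (z : Fin n → ℝ) :
    ev (rst j b c) z = ev c (Function.update z j b) := by
  rw [ev_split j c, ev_av_update, ev_dv_update]
  simp [ev, rst, add_mul, Finset.sum_add_distrib, Finset.mul_sum, mul_assoc]

lemma cv_rst (j : Fin n) (b : Bool) (c : Finset (Fin n) → ℝ) (x : Fin n → Bool) :
    cv (rst j (chi b) c) x = cv c (Function.update x j b) := by
  unfold cv rv
  rw [ev_rst, zupd (fun _ => chi)]

lemma Deg.rst {d : ℕ} {c : Finset (Fin n) → ℝ} (h : Deg d c) (j : Fin n) (b : ℝ) :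
    Deg d (rst j b c) := by
  intro S hS
  simp only [_root_.rst]
  rw [h.av j S hS, h.dv j S (by omega)]; simp

lemma sum_bool_half (F : Bool → ℝ) : ∑ b, wB b * F b = (F true + F false) / 2 := by
  simp [wB]; ring

lemma nn_rst (j : Fin n) (c : Finset (Fin n) → ℝ) :
    (nn (rst j 1 c) + nn (rst j (-1) c)) / 2 = nn c := by
  rw [nn_split j c]
  unfold nn
  rw [← Finset.sum_add_distrib, ← Finset.sum_add_distrib, Finset.sum_div]
  refine Finset.sum_congr rfl fun S _ => ?_
  simp only [rst]; ring

/-- total influence -/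
noncomputable def II (c : Finset (Fin n) → ℝ) : ℝ := ∑ S, (S.card : ℝ) * c S ^ 2

lemma II_nonneg (c : Finset (Fin n) → ℝ) : 0 ≤ II c :=
  Finset.sum_nonneg fun S _ => by positivity

lemma II_rst (j : Fin n) (c : Finset (Fin n) → ℝ) :
    (II (rst j 1 c) + II (rst j (-1) c)) / 2 = II c - nn (dv j c) := by
  unfold II nn
  rw [sum_split j (fun S => (S.card : ℝ) * c S ^ 2), ← Finset.sum_add_distrib,
    ← Finset.sum_add_distrib, ← Finset.sum_sub_distrib, Finset.sum_div]
  refine Finset.sum_congr rfl fun S _ => ?_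
  simp only [rst, av, dv]
  split_ifs with h
  · simp
  · rw [Finset.card_insert_of_notMem h]; push_cast; ring

lemma vr_eq (c : Finset (Fin n) → ℝ) : vr c = ∑ S, if S = ∅ then 0 else c S ^ 2 := by
  unfold vr nn
  refine Finset.sum_congr rfl fun S _ => ?_
  by_cases h : S = ∅ <;> simp [h]

lemma vr_le_II (c : Finset (Fin n) → ℝ) : vr c ≤ II c := by
  rw [vr_eq]
  refine Finset.sum_le_sum fun S _ => ?_
  split_ifs with h
  · positivity
  · have : (1:ℝ) ≤ S.card := by exact_mod_cast Finset.card_pos.2 (Finset.nonempty_iff_ne_empty.2 h)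
    nlinarith [sq_nonneg (c S)]

lemma II_le {d : ℕ} {c : Finset (Fin n) → ℝ} (hc : Deg d c) : II c ≤ d * vr c := by
  rw [vr_eq, Finset.mul_sum]
  refine Finset.sum_le_sum fun S _ => ?_
  split_ifs with h
  · simp [h]
  · by_cases hS : d < S.card
    · simp [hc S hS]
    · have : (S.card:ℝ) ≤ d := by exact_mod_cast not_lt.1 hS
      nlinarith [sq_nonneg (c S)]

lemma sum_nn_dv (c : Finset (Fin n) → ℝ) : ∑ j, nn (dv j c) = II c := by
  have h : ∀ j, nn (dv j c) = ∑ S, if j ∈ S then c S ^ 2 else 0 := by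
    intro j
    rw [sum_split j]
    unfold nn
    rw [← Finset.sum_add_distrib]
    refine Finset.sum_congr rfl fun S _ => ?_
    simp only [dv]; by_cases h : j ∈ S <;> simp [h]
  simp only [h]
  rw [Finset.sum_comm]
  unfold II
  refine Finset.sum_congr rfl fun S _ => ?_
  simp

/-- fourth moment -/
noncomputable def Q4 (c : Finset (Fin n) → ℝ) : ℝ := wE wB (fun x => cv c x ^ 4)

lemma Q4_rst (j : Fin n) (c : Finset (Fin n) → ℝ) :
    (Q4 (rst j 1 c) + Q4 (rst j (-1) c)) / 2 = Q4 c := by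
  have e1 : (1:ℝ) = chi true := by simp [chi]
  have e2 : (-1:ℝ) = chi false := by simp [chi]
  unfold Q4
  rw [wE_resample isW_B j (fun x => cv c x ^ 4)]
  simp only [sum_bool_half]
  simp_rw [div_eq_mul_inv]
  rw [wE_mul', wE_add]
  rw [e2, e1]
  simp only [cv_rst]
  
lemma nn_sq_le_Q4 (c : Finset (Fin n) → ℝ) : nn c ^ 2 ≤ Q4 c := by
  have := wE_cs isW_B (fun x => cv c x ^ 2) (fun _ => 1)
  simp only [mul_one, one_pow, wE_const isW_B, cv_sq] at this
  unfold Q4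
  convert this using 3
  ring

lemma update_flip (x : Fin n → Bool) (i j : Fin n) (h : i ≠ j) (b : Bool) :
    Function.update (flipAt x i) j b = flipAt (Function.update x j b) i := by
  unfold flipAt
  rw [Function.update_comm h.symm, Function.update_of_ne h]

/-- restriction of a function -/
def fr (f : (Fin n → Bool) → ℝ) (j : Fin n) (b : Bool) : (Fin n → Bool) → ℝ :=
  fun x => f (Function.update x j b)

lemma fr_flip_self (f : (Fin n → Bool) → ℝ) (j : Fin n) (b : Bool) (x) :
    fr f j b (flipAt x j) = fr f j b x := by
  simp [fr, flipAt]

lemma sens_fr_update (f : (Fin n → Bool) → ℝ) (j : Fin n) (b b' : Bool) (x) :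
    sens (fr f j b) (Function.update x j b') = sens (fr f j b) x := by
  unfold sens
  congr 1
  ext i
  simp only [Finset.mem_filter, Finset.mem_univ, true_and]
  by_cases h : i = j
  · subst h; simp [fr_flip_self]
  · rw [← update_flip x i j h]; simp [fr]

lemma sens_le_fr (f : (Fin n → Bool) → ℝ) (j : Fin n) (x) :
    sens f x ≤ sens (fr f j (x j)) x + 1 := by
  unfold sens
  refine (Finset.card_le_card ?_).trans (Finset.card_insert_le j _)
  intro i hi
  simp only [Finset.mem_filter, Finset.mem_univ, true_and, Finset.mem_insert] at hi ⊢
  by_cases h : i = j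
  · exact Or.inl h
  · right
    simp only [fr, update_flip x i j h, Function.update_eq_self]
    exact hi

lemma mom_rst {α : ℝ} (h0 : 0 < α) (h1 : α ≤ 1) (j : Fin n) (c : Finset (Fin n) → ℝ) :
    mom α c ≤ 1 + (mom α (rst j 1 c) + mom α (rst j (-1) c)) / 2 := by
  have e1 : (1:ℝ) = chi true := by simp [chi]
  have e2 : (-1:ℝ) = chi false := by simp [chi]
  have hsg : ∀ b, sg (rst j (chi b) c) = fr (sg c) j b := by
    intro b; funext x; simp only [sg, fr, cv_rst]
  have hp : mom α c ≤ wE wB (fun x => 1 + (sens (fr (sg c) j (x j)) x : ℝ) ^ α) := by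
    refine wE_mono isW_B fun x => ?_
    have hs : (sens (sg c) x : ℝ) ≤ 1 + (sens (fr (sg c) j (x j)) x : ℝ) := by
      have := sens_le_fr (sg c) j x
      have h : (sens (sg c) x : ℝ) ≤ ((sens (fr (sg c) j (x j)) x + 1 : ℕ) : ℝ) := by exact_mod_cast this
      push_cast at h; linarith
    calc (sens (sg c) x : ℝ) ^ α ≤ (1 + (sens (fr (sg c) j (x j)) x : ℝ)) ^ α :=
          Real.rpow_le_rpow (by positivity) hs h0.le
      _ ≤ 1 ^ α + (sens (fr (sg c) j (x j)) x : ℝ) ^ α :=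
          Real.rpow_add_le_add_rpow (by positivity) (by positivity) h0.le h1
      _ = _ := by simp
  refine hp.trans (le_of_eq ?_)
  rw [wE_add, wE_const isW_B, wE_resample isW_B j]
  simp only [sum_bool_half, Function.update_self, sens_fr_update]
  simp_rw [div_eq_mul_inv]
  rw [wE_mul', wE_add]
  unfold mom
  rw [e2, hsg, e1, hsg]

/-- the potential -/
noncomputable def Phi (d : ℕ) (G τ : ℝ) (t : ℕ) (c : Finset (Fin n) → ℝ) : ℝ :=
  II c * (1 - τ / d) ^ t * G + 1 - (nn c - 1/2) / 9 ^ d + Q4 c / (4 * (9 ^ d) ^ 2)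

lemma Phi_aux {d : ℕ} (c : Finset (Fin n) → ℝ) :
    0 ≤ 1 - (nn c - 1/2) / 9 ^ d + Q4 c / (4 * (9 ^ d) ^ 2) := by
  have h := nn_sq_le_Q4 c
  have h9 : (0:ℝ) < 9 ^ d := by positivity
  have : nn c ^ 2 / (4 * (9 ^ d) ^ 2) ≤ Q4 c / (4 * (9 ^ d) ^ 2) := by gcongr
  have h2 : 1 - (nn c - 1/2) / 9 ^ d + nn c ^ 2 / (4 * (9 ^ d) ^ 2)
     = (1 - nn c / (2 * 9 ^ d)) ^ 2 + 1 / (2 * 9 ^ d) := by field_simp; ring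
  have h3 : 0 < 1 / (2 * (9:ℝ) ^ d) := by positivity
  nlinarith [sq_nonneg (1 - nn c / (2 * 9 ^ d))]

lemma Phi_nonneg {d : ℕ} {G τ : ℝ} (hG : 0 ≤ G) (hτ : τ / d ≤ 1) (t : ℕ) (c : Finset (Fin n) → ℝ) :
    0 ≤ Phi d G τ t c := by
  have h1 : 0 ≤ II c * (1 - τ / d) ^ t * G :=
    mul_nonneg (mul_nonneg (II_nonneg c) (pow_nonneg (by linarith) _)) hG
  have := Phi_aux (d := d) c
  unfold Phi; linarith

/-- regular polynomials -/
def Reg (τ : ℝ) (c : Finset (Fin n) → ℝ) : Prop := ∀ j, nn (dv j c) ≤ τ * vr c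

lemma tree_claim {α : ℝ} (h0 : 0 < α) (h1 : α ≤ 1) {d : ℕ} (hd : 1 ≤ d) {M R τ K2 : ℝ}
    (hM0 : 0 ≤ M) (hR0 : 0 ≤ R) (hτ : 0 < τ) (hτ1 : τ ≤ 1) (hK : 0 ≤ K2)
    (hM : ∀ c : Finset (Fin n) → ℝ, Deg d c → mom α c ≤ M)
    (hR : ∀ c : Finset (Fin n) → ℝ, Deg d c → Reg τ c → mom α c ≤ R)
    (hS : ∀ c : Finset (Fin n) → ℝ, Deg d c → K2 * vr c ≤ c ∅ ^ 2 → mom α c ≤ 1) (t : ℕ) :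
    ∀ c : Finset (Fin n) → ℝ, Deg d c →
      mom α c ≤ t + 1 + R + M * Phi d (2 * (K2 + 1)) τ t c := by
  have hd1 : (1:ℝ) ≤ d := by exact_mod_cast hd
  have hτd : τ / d ≤ 1 := (div_le_one (by linarith)).2 (by linarith)
  induction t with
  | zero =>
    intro c hc
    have hΦ := Phi_nonneg (G := 2 * (K2 + 1)) (by linarith) hτd 0 c
    by_cases hsk : K2 * vr c ≤ c ∅ ^ 2
    · have := hS c hc hsk
      push_cast
      nlinarith [mul_nonneg hM0 hΦ]
    · push Not at hsk
      have h1 : 1 ≤ Phi d (2 * (K2 + 1)) τ 0 c := by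
        have hnn := nn_eq_vr c
        have hI := vr_le_II c
        have haux := Phi_aux (d := d) c
        by_cases hh : nn c < 1/2
        · have a1 : 0 ≤ II c * (1 - τ / d) ^ 0 * (2 * (K2 + 1)) := by
            rw [pow_zero]; exact mul_nonneg (mul_nonneg (II_nonneg c) zero_le_one) (by linarith)
          have a2 : (nn c - 1/2) / 9 ^ d ≤ 0 := div_nonpos_of_nonpos_of_nonneg (by linarith) (by positivity)
          have a3 : 0 ≤ Q4 c / (4 * (9 ^ d) ^ 2) := 
            div_nonneg (le_trans (sq_nonneg _) (nn_sq_le_Q4 c)) (by positivity)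
          unfold Phi; linarith
        · push Not at hh
          have a1 : 1 ≤ II c * (1 - τ / d) ^ 0 * (2 * (K2 + 1)) := by
            rw [pow_zero]; nlinarith
          unfold Phi; linarith
      have := hM c hc
      push_cast
      nlinarith
  | succ t ih =>
    intro c hc
    have hΦ := Phi_nonneg (G := 2 * (K2 + 1)) (by linarith) hτd (t+1) c
    by_cases hreg : Reg τ c
    · have := hR c hc hreg
      have h2 := mul_nonneg hM0 hΦ
      push_cast
      have : (0:ℝ) ≤ t := by positivity
      linarith
    · unfold Reg at hreg
      push Not at hreg
      obtain ⟨j, hj⟩ := hreg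
      have ha := ih _ (hc.rst j 1)
      have hb := ih _ (hc.rst j (-1))
      have hm := mom_rst h0 h1 j c
      have key : (Phi d (2 * (K2 + 1)) τ t (rst j 1 c) + Phi d (2 * (K2 + 1)) τ t (rst j (-1) c)) / 2
          ≤ Phi d (2 * (K2 + 1)) τ (t+1) c := by
        have e : (Phi d (2 * (K2 + 1)) τ t (rst j 1 c) + Phi d (2 * (K2 + 1)) τ t (rst j (-1) c)) / 2
          = (II c - nn (dv j c)) * (1 - τ / d) ^ t * (2 * (K2 + 1)) + 1 - (nn c - 1/2) / 9 ^ d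
            + Q4 c / (4 * (9 ^ d) ^ 2) := by
          rw [← II_rst, ← nn_rst j c, ← Q4_rst j c]; unfold Phi; ring
        rw [e]
        unfold Phi
        have hI := II_le hc
        have h3 : II c - nn (dv j c) ≤ II c * (1 - τ / d) := by
          have : II c * (τ / d) ≤ τ * vr c := by
            rw [mul_div_assoc', div_le_iff₀ (by linarith)]
            nlinarith
          nlinarith
        have hp : 0 ≤ (1 - τ / d) ^ t := pow_nonneg (by linarith) _
        have : (II c - nn (dv j c)) * (1 - τ / d) ^ t * (2 * (K2 + 1))
            ≤ II c * (1 - τ / d) * (1 - τ / d) ^ t * (2 * (K2 + 1)) := by gcongr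
        rw [pow_succ (1 - τ / d)]
        linarith
      have := mul_le_mul_of_nonneg_left key hM0
      push_cast
      linarith

/-- scaling -/
lemma cv_smul (a : ℝ) (c : Finset (Fin n) → ℝ) (x) : cv (fun S => a * c S) x = a * cv c x := by
  simp [cv_eq, Finset.mul_sum, mul_assoc]

lemma mom_smul {α a : ℝ} (ha : 0 < a) (c : Finset (Fin n) → ℝ) : mom α (fun S => a * c S) = mom α c := by
  have : sg (fun S => a * c S) = sg c := by
    funext x; unfold sg; rw [cv_smul]
    rcases lt_trichotomy (cv c x) 0 with h | h | h
    · rw [Real.sign_of_neg h, Real.sign_of_neg (mul_neg_of_pos_of_neg ha h)]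
    · simp [h]
    · rw [Real.sign_of_pos h, Real.sign_of_pos (mul_pos ha h)]
  unfold mom; rw [this]

lemma Deg.smul {d : ℕ} {c : Finset (Fin n) → ℝ} (h : Deg d c) (a : ℝ) : Deg d (fun S => a * c S) := by
  intro S hS; simp [h S hS]

lemma nn_smul (a : ℝ) (c : Finset (Fin n) → ℝ) : nn (fun S => a * c S) = a ^ 2 * nn c := by
  simp [nn, mul_pow, Finset.mul_sum]

lemma tree {α : ℝ} (h0 : 0 < α) (h1 : α ≤ 1) {d : ℕ} (hd : 1 ≤ d) {M R τ K2 : ℝ}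
    (hM0 : 0 ≤ M) (hR0 : 0 ≤ R) (hτ : 0 < τ) (hτ1 : τ ≤ 1) (hK : 0 ≤ K2)
    (hM : ∀ c : Finset (Fin n) → ℝ, Deg d c → mom α c ≤ M)
    (hR : ∀ c : Finset (Fin n) → ℝ, Deg d c → Reg τ c → mom α c ≤ R)
    (hS : ∀ c : Finset (Fin n) → ℝ, Deg d c → K2 * vr c ≤ c ∅ ^ 2 → mom α c ≤ 1) (t : ℕ)
    (ht : d * (2 * (K2 + 1)) * (1 - τ / d) ^ t ≤ 1 / (8 * 9 ^ d))
    (c : Finset (Fin n) → ℝ) (hc : Deg d c) :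
    mom α c ≤ t + 1 + R + M * (1 - 1 / (8 * 9 ^ d)) := by
  have h9 : (1:ℝ) ≤ 9 ^ d := one_le_pow₀ (by norm_num)
  have hb0 : 0 ≤ 1 - 1 / (8 * (9:ℝ) ^ d) := by
    rw [sub_nonneg, div_le_one (by positivity)]; linarith
  by_cases hn : nn c = 0
  · have : mom α c = 0 := mom_const h0 c 0 fun x => by
      rw [cv_eq]; refine Finset.sum_eq_zero fun S _ => ?_
      simp [nn_eq_zero hn S]
    rw [this]
    have := mul_nonneg hM0 hb0
    positivity
  · have hnp : 0 < nn c := lt_of_le_of_ne (nn_nonneg c) (Ne.symm hn)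
    set a := (√(nn c))⁻¹ with ha
    have hap : 0 < a := by positivity
    rw [← mom_smul hap c]
    have hc' := hc.smul a
    have hn1 : nn (fun S => a * c S) = 1 := by
      rw [nn_smul, ha, inv_pow, Real.sq_sqrt hnp.le, inv_mul_cancel₀ hn]
    generalize (fun S => a * c S) = c' at hc' hn1 ⊢
    refine (tree_claim h0 h1 hd hM0 hR0 hτ hτ1 hK hM hR hS t c' hc').trans ?_
    have hΦ : Phi d (2 * (K2 + 1)) τ t c' ≤ 1 - 1 / (8 * 9 ^ d) := by
      unfold Phi
      have hI := II_le hc'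
      have hv : vr c' ≤ 1 := by have := nn_eq_vr c'; nlinarith [sq_nonneg (c' ∅)]
      have hd1 : (1:ℝ) ≤ d := by exact_mod_cast hd
      have hτd : τ / d ≤ 1 := (div_le_one (by linarith)).2 (by linarith)
      have hI2 : II c' ≤ d := by nlinarith
      have hp : 0 ≤ (1 - τ / d) ^ t := pow_nonneg (by linarith) _
      have a1 : II c' * (1 - τ / d) ^ t * (2 * (K2 + 1)) ≤ 1 / (8 * 9 ^ d) := by
        refine le_trans ?_ ht
        calc II c' * (1 - τ / d) ^ t * (2 * (K2 + 1)) ≤ d * (1 - τ / d) ^ t * (2 * (K2 + 1)) := by gcongr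
          _ = _ := by ring
      have a2 : Q4 c' ≤ 9 ^ d := by have := cv_four hc'; rw [hn1] at this; simpa [Q4] using this
      have a3 : Q4 c' / (4 * (9 ^ d) ^ 2) ≤ 9 ^ d / (4 * (9 ^ d) ^ 2) := by gcongr
      have e : (9:ℝ) ^ d / (4 * (9 ^ d) ^ 2) = 1 / (8 * 9 ^ d) * 2 := by field_simp; norm_num
      have e2 : (nn c' - 1/2) / 9 ^ d = 1 / (8 * 9 ^ d) * 4 := by rw [hn1]; field_simp; norm_num
      rw [e2]; linarith
    gcongr
end tree


/-! ## Taylor expansion of the test function and Lindeberg replacement -/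

/-- the test function -/
noncomputable def Th (a b : ℝ) : ℝ := b ^ 2 / (a ^ 2 + b ^ 2 + 1)

lemma Th_nonneg (a b : ℝ) : 0 ≤ Th a b := by unfold Th; positivity
lemma Th_le_one (a b : ℝ) : Th a b ≤ 1 := by
  unfold Th; rw [div_le_one (by positivity)]; nlinarith [sq_nonneg a]

/-- general cubic -/
def cub (k00 k10 k01 k20 k11 k02 k30 k21 k12 k03 s t : ℝ) : ℝ :=
  k00 + (k10 * s + k01 * t) + (k20 * s^2 + k11 * (s * t) + k02 * t^2)
    + (k30 * s^3 + k21 * (s^2 * t) + k12 * (s * t^2) + k03 * t^3)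

lemma taylor_alg {l m y g β δ : ℝ} (hδ : 0 ≤ δ) (hl : |l| ≤ 2 * δ) (hm0 : 0 ≤ m) (hm : m ≤ δ^2)
    (hy : |y| ≤ 2 * δ) (hg0 : 0 ≤ g) (hg : g ≤ δ^2) (hβ0 : 0 ≤ β) (hβ : β ≤ 1) :
    |y - β * l| ≤ 4 * δ ∧ |g - y * l + β * (l^2 - m)| ≤ 10 * δ^2 ∧
    |l * (g - y * l + β * (l^2 - m)) + m * (y - β * l)| ≤ 24 * δ^3 := by
  have h1 : |y - β * l| ≤ 4 * δ := by
    have : |β * l| ≤ 2 * δ := by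
      rw [abs_mul, abs_of_nonneg hβ0]; nlinarith [abs_nonneg l]
    have := abs_sub y (β * l); linarith
  have h2 : |g - y * l + β * (l^2 - m)| ≤ 10 * δ^2 := by
    have a1 : |y * l| ≤ 4 * δ^2 := by
      rw [abs_mul]; nlinarith [abs_nonneg l, abs_nonneg y]
    have a2 : l^2 ≤ 4 * δ^2 := by rw [← sq_abs]; nlinarith [abs_nonneg l]
    have a3 : |β * (l^2 - m)| ≤ 5 * δ^2 := by
      rw [abs_mul, abs_of_nonneg hβ0]
      have : |l^2 - m| ≤ 5 * δ^2 := by rw [abs_le]; constructor <;> nlinarith [sq_nonneg l]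
      nlinarith [abs_nonneg (l^2 - m)]
    have a4 : |g| ≤ δ^2 := by rwa [abs_of_nonneg hg0]
    have := abs_add_le (g - y * l) (β * (l^2 - m))
    have := abs_sub g (y * l)
    linarith
  refine ⟨h1, h2, ?_⟩
  have b1 : |l * (g - y * l + β * (l^2 - m))| ≤ 2 * δ * (10 * δ^2) := by
    rw [abs_mul]; exact mul_le_mul hl h2 (abs_nonneg _) (by positivity)
  have b2 : |m * (y - β * l)| ≤ δ^2 * (4 * δ) := by
    rw [abs_mul, abs_of_nonneg hm0]; exact mul_le_mul hm h1 (abs_nonneg _) (by positivity)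
  have := abs_add_le (l * (g - y * l + β * (l^2 - m))) (m * (y - β * l))
  nlinarith

lemma taylor_num {l m y g β δ : ℝ} (hδ : 0 ≤ δ) (hl : |l| ≤ 2 * δ) (hm0 : 0 ≤ m) (hm : m ≤ δ^2)
    (hy : |y| ≤ 2 * δ) (hg0 : 0 ≤ g) (hg : g ≤ δ^2) (hβ0 : 0 ≤ β) (hβ : β ≤ 1)
    (hpos : 0 < 1 + (l + m)) (hinv : 1 ≤ (2 + 2 * δ^2) * (1 + (l + m)))
    (hN0 : 0 ≤ (β + y + g) / (1 + (l + m))) (hN1 : (β + y + g) / (1 + (l + m)) ≤ 1) :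
    |(β + y + g) / (1 + (l + m)) - (β + (y - β * l) + (g - y * l + β * (l^2 - m))
      - (l * (g - y * l + β * (l^2 - m)) + m * (y - β * l)))| ≤ 328 * δ^4 := by
  obtain ⟨h1, h2, h3⟩ := taylor_alg hδ hl hm0 hm hy hg0 hg hβ0 hβ
  set k1 := y - β * l with hk1
  set k2 := g - y * l + β * (l^2 - m) with hk2
  set k3 := l * k2 + m * k1 with hk3
  by_cases hd : δ ≤ 1
  · have e : (β + y + g) / (1 + (l + m)) - (β + k1 + k2 - k3) = (l * k3 - m * k2 + m * k3) / (1 + (l + m)) := by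
      rw [eq_div_iff hpos.ne', sub_mul, div_mul_cancel₀ _ hpos.ne']
      rw [hk3, hk2, hk1]; ring
    rw [e, abs_div, abs_of_pos hpos, div_le_iff₀ hpos]
    have b1 : |l * k3| ≤ 2 * δ * (24 * δ^3) := by
      rw [abs_mul]; exact mul_le_mul hl h3 (abs_nonneg _) (by positivity)
    have b2 : |m * k2| ≤ δ^2 * (10 * δ^2) := by
      rw [abs_mul, abs_of_nonneg hm0]; exact mul_le_mul hm h2 (abs_nonneg _) (by positivity)
    have b3 : |m * k3| ≤ δ^2 * (24 * δ^3) := by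
      rw [abs_mul, abs_of_nonneg hm0]; exact mul_le_mul hm h3 (abs_nonneg _) (by positivity)
    have b4 : δ^2 * (24 * δ^3) ≤ 24 * δ^4 := by
      have : 0 ≤ δ^4 := by positivity
      nlinarith
    have t1 := abs_add_le (l * k3 - m * k2) (m * k3)
    have t2 := abs_sub (l * k3) (m * k2)
    have hq : |l * k3 - m * k2 + m * k3| ≤ 82 * δ^4 := by nlinarith
    have h4 : 1 ≤ 4 * (1 + (l + m)) := by nlinarith [mul_nonneg hδ hδ]
    have : 0 ≤ δ^4 := by positivity
    nlinarith
  · push Not at hd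
    have p1 : δ ≤ δ^4 := by nlinarith [pow_pos (by linarith : 0 < δ) 3, one_le_pow₀ hd.le (n := 3)]
    have p2 : δ^2 ≤ δ^4 := pow_le_pow_right₀ hd.le (by norm_num)
    have p3 : δ^3 ≤ δ^4 := pow_le_pow_right₀ hd.le (by norm_num)
    have p0 : 1 ≤ δ^4 := one_le_pow₀ hd.le
    rw [abs_le] at h1 h2 h3 ⊢
    constructor <;> linarith [h1.1, h1.2, h2.1, h2.2, h3.1, h3.2]

lemma taylor (a b : ℝ) : ∃ k00 k10 k01 k20 k11 k02 k30 k21 k12 k03 : ℝ, ∀ s t : ℝ,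
    |Th (a + s) (b + t) - cub k00 k10 k01 k20 k11 k02 k30 k21 k12 k03 s t| ≤ 656 * (s^4 + t^4) := by
  have hD : 0 < a^2 + b^2 + 1 := by positivity
  set D := a^2 + b^2 + 1 with hDdef
  set p := 2 * a / D with hp
  set q := 2 * b / D with hq
  set r := 1 / D with hr
  set β := b^2 / D with hβ
  refine ⟨β, -β*p, -β*q+q, β*(p^2-r), 2*β*p*q-q*p, β*(q^2-r)-q^2+r, β*(2*r*p-p^3),
    β*(2*r*q-3*p^2*q)+q*p^2-q*r, β*(2*r*p-3*p*q^2)+2*p*q^2-r*p, β*(2*r*q-q^3)+q^3-2*q*r, ?_⟩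
  intro s t
  have hr0 : 0 ≤ r := by positivity
  have hr1 : r ≤ 1 := by rw [hr, div_le_one hD]; nlinarith [sq_nonneg a, sq_nonneg b]
  have hβ0 : 0 ≤ β := by positivity
  have hβ1 : β ≤ 1 := by rw [hβ, div_le_one hD]; nlinarith [sq_nonneg a]
  have hpq : p^2 + q^2 ≤ 4 := by
    have : p^2 + q^2 = 4 * (a^2+b^2) / D^2 := by rw [hp, hq]; field_simp; ring
    rw [this, div_le_iff₀ (by positivity)]
    nlinarith [sq_nonneg a, sq_nonneg b]
  set δ := √(s^2+t^2) with hδ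
  have hδ0 : 0 ≤ δ := Real.sqrt_nonneg _
  have hδ2 : δ^2 = s^2 + t^2 := Real.sq_sqrt (by positivity)
  have hl : |p*s+q*t| ≤ 2*δ := by
    apply abs_le_of_sq_le_sq _ (by positivity)
    have : (p*s+q*t)^2 ≤ (p^2+q^2)*(s^2+t^2) := by nlinarith [sq_nonneg (p*t-q*s)]
    nlinarith [sq_nonneg s, sq_nonneg t]
  have hy : |q*t| ≤ 2*δ := by
    apply abs_le_of_sq_le_sq _ (by positivity)
    have : q^2 ≤ 4 := by nlinarith [sq_nonneg p]
    have : (q*t)^2 ≤ 4*t^2 := by nlinarith [sq_nonneg t]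
    nlinarith [sq_nonneg s]
  have hm0 : 0 ≤ r*(s^2+t^2) := by positivity
  have hm : r*(s^2+t^2) ≤ δ^2 := by rw [hδ2]; nlinarith [sq_nonneg s, sq_nonneg t]
  have hg0 : 0 ≤ r*t^2 := by positivity
  have hg : r*t^2 ≤ δ^2 := by rw [hδ2]; nlinarith [sq_nonneg s, sq_nonneg t]
  have hD' : 0 < (a+s)^2+(b+t)^2+1 := by positivity
  have e1 : 1 + (p*s+q*t + r*(s^2+t^2)) = ((a+s)^2+(b+t)^2+1)/D := by
    rw [hp, hq, hr]; field_simp; rw [hDdef]; ring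
  have e2 : β + q*t + r*t^2 = (b+t)^2/D := by
    rw [hβ, hq, hr]; field_simp; ring
  have e3 : (β + q*t + r*t^2)/(1 + (p*s+q*t + r*(s^2+t^2))) = Th (a+s) (b+t) := by
    rw [e1, e2, Th]; field_simp
  have hpos : 0 < 1 + (p*s+q*t + r*(s^2+t^2)) := by rw [e1]; positivity
  have hinv : 1 ≤ (2 + 2 * δ^2) * (1 + (p*s+q*t + r*(s^2+t^2))) := by
    rw [e1, hδ2, mul_div_assoc', le_div_iff₀ hD, hDdef]
    nlinarith [sq_nonneg (a+2*s), sq_nonneg (b+2*t), sq_nonneg (a+s), sq_nonneg (b+t), mul_nonneg (sq_nonneg s) (sq_nonneg (a+s)),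
      mul_nonneg (sq_nonneg s) (sq_nonneg (b+t)), mul_nonneg (sq_nonneg t) (sq_nonneg (a+s)),
      mul_nonneg (sq_nonneg t) (sq_nonneg (b+t)), sq_nonneg s, sq_nonneg t]
  have main := taylor_num hδ0 hl hm0 hm hy hg0 hg hβ0 hβ1 hpos hinv
    (by rw [e3]; exact Th_nonneg _ _) (by rw [e3]; exact Th_le_one _ _)
  rw [e3] at main
  have hδ4 : 328 * δ^4 ≤ 656 * (s^4+t^4) := by
    have : δ^4 = (s^2+t^2)^2 := by rw [← hδ2]; ring
    rw [this]; nlinarith [sq_nonneg (s^2-t^2)]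
  refine le_trans (le_of_eq ?_) (main.trans hδ4)
  congr 1
  unfold cub
  ring

/-- test function in terms of `(u,v)` -/
noncomputable def FF (A P Q u v : ℝ) : ℝ := Th (A * u) (P * u + Q * v)

lemma taylor2 {A P Q B : ℝ} (hA : A^4 ≤ B) (hP : P^4 ≤ B) (hQ : Q^4 ≤ B) (u0 v0 u1 v1 : ℝ) :
    ∃ k00 k10 k01 k20 k11 k02 k30 k21 k12 k03 : ℝ, ∀ X X' : ℝ,
    |FF A P Q (u0 + X * u1) (v0 + X' * v1) - cub k00 k10 k01 k20 k11 k02 k30 k21 k12 k03 X X'|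
      ≤ 6000 * B * (X^4 * u1^4 + X'^4 * v1^4) := by
  obtain ⟨k00, k10, k01, k20, k11, k02, k30, k21, k12, k03, h⟩ := taylor (A * u0) (P * u0 + Q * v0)
  set a := A * u1
  set p := P * u1
  set q := Q * v1
  refine ⟨k00, k10*a+k01*p, k01*q, k20*a^2+k11*a*p+k02*p^2, k11*a*q+2*k02*p*q, k02*q^2,
    k30*a^3+k21*a^2*p+k12*a*p^2+k03*p^3, k21*a^2*q+2*k12*a*p*q+3*k03*p^2*q,
    k12*a*q^2+3*k03*p*q^2, k03*q^3, ?_⟩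
  intro X X'
  have := h (a * X) (p * X + q * X')
  have e1 : FF A P Q (u0 + X * u1) (v0 + X' * v1) = Th (A * u0 + a * X) (P * u0 + Q * v0 + (p * X + q * X')) := by
    unfold FF; congr 1 <;> simp only [a, p, q] <;> ring
  rw [e1]
  refine le_trans (le_of_eq ?_) (this.trans ?_)
  · congr 2
    unfold cub; ring
  · have h8 : ∀ x y : ℝ, (x + y)^4 ≤ 8 * (x^4 + y^4) := by
      intro x y
      have h1 : (x+y)^2 ≤ 2*(x^2+y^2) := by nlinarith [sq_nonneg (x-y)]
      have h2 : ((x+y)^2)^2 ≤ (2*(x^2+y^2))^2 := pow_le_pow_left₀ (sq_nonneg _) h1 2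
      nlinarith [sq_nonneg (x^2-y^2)]
    have h3 := h8 (p * X) (q * X')
    have i1 : (a * X)^4 ≤ B * (X^4 * u1^4) := by
      have : (a*X)^4 = A^4 * (X^4 * u1^4) := by simp only [a]; ring
      rw [this]; gcongr
    have i2 : (p * X)^4 ≤ B * (X^4 * u1^4) := by
      have : (p*X)^4 = P^4 * (X^4 * u1^4) := by simp only [p]; ring
      rw [this]; gcongr
    have i3 : (q * X')^4 ≤ B * (X'^4 * v1^4) := by
      have : (q*X')^4 = Q^4 * (X'^4 * v1^4) := by simp only [q]; ring
      rw [this]; gcongr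
    have hB : 0 ≤ B := le_trans (by positivity) hA
    have j1 : 0 ≤ B * (X^4 * u1^4) := by positivity
    have j2 : 0 ≤ B * (X'^4 * v1^4) := by positivity
    linarith

section lind
variable {n : ℕ} {Ω : Type} [Fintype Ω] {w : Ω → ℝ}

/-- moments of a correlated pair -/
structure PairMom (w z z' : Ω → ℝ) (ρ : ℝ) : Prop where
  g1 : Good w z
  g2 : Good w z'
  m11 : ∑ a, w a * (z a * z' a) = ρ
  m21 : ∑ a, w a * (z a ^ 2 * z' a) = 0
  m12 : ∑ a, w a * (z a * z' a ^ 2) = 0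

lemma cub_mean (hw : IsW w) {z z' : Ω → ℝ} {ρ : ℝ} (h : PairMom w z z' ρ)
    (k00 k10 k01 k20 k11 k02 k30 k21 k12 k03 : ℝ) :
    ∑ a, w a * cub k00 k10 k01 k20 k11 k02 k30 k21 k12 k03 (z a) (z' a) = k00 + k20 + k11 * ρ + k02 := by
  have e : ∀ a, w a * cub k00 k10 k01 k20 k11 k02 k30 k21 k12 k03 (z a) (z' a) =
     k00 * w a + k10 * (w a * z a) + k01 * (w a * z' a) + k20 * (w a * z a ^ 2)
     + k11 * (w a * (z a * z' a)) + k02 * (w a * z' a ^ 2) + k30 * (w a * z a ^ 3)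
     + k21 * (w a * (z a ^ 2 * z' a)) + k12 * (w a * (z a * z' a ^ 2)) + k03 * (w a * z' a ^ 3) := by
    intro a; unfold cub; ring
  simp only [e, Finset.sum_add_distrib, ← Finset.mul_sum, hw.2, h.g1.m1, h.g2.m1, h.g1.m2, h.g2.m2,
    h.g1.m3, h.g2.m3, h.m11, h.m12, h.m21]
  ring

lemma one_coord (hw : IsW w) {z z' y y' : Ω → ℝ} {ρ : ℝ} (h : PairMom w z z' ρ) (hy : PairMom w y y' ρ)
    {A P Q B : ℝ} (hA : A^4 ≤ B) (hP : P^4 ≤ B) (hQ : Q^4 ≤ B) (u0 v0 u1 v1 : ℝ) :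
    |∑ a, w a * FF A P Q (u0 + z a * u1) (v0 + z' a * v1)
      - ∑ a, w a * FF A P Q (u0 + y a * u1) (v0 + y' a * v1)| ≤ 108000 * B * (u1^4 + v1^4) := by
  obtain ⟨k00, k10, k01, k20, k11, k02, k30, k21, k12, k03, hk⟩ := taylor2 hA hP hQ u0 v0 u1 v1
  have hB : 0 ≤ B := le_trans (by positivity) hA
  have gen : ∀ {z z' : Ω → ℝ}, PairMom w z z' ρ →
      |∑ a, w a * FF A P Q (u0 + z a * u1) (v0 + z' a * v1) - (k00 + k20 + k11 * ρ + k02)|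
        ≤ 54000 * B * (u1^4 + v1^4) := by
    intro z z' h
    rw [← cub_mean hw h k00 k10 k01 k20 k11 k02 k30 k21 k12 k03, ← Finset.sum_sub_distrib]
    refine (Finset.abs_sum_le_sum_abs _ _).trans ?_
    calc ∑ a, |w a * FF A P Q (u0 + z a * u1) (v0 + z' a * v1)
            - w a * cub k00 k10 k01 k20 k11 k02 k30 k21 k12 k03 (z a) (z' a)|
        ≤ ∑ a, w a * (6000 * B * (z a^4 * u1^4 + z' a^4 * v1^4)) := by
          refine Finset.sum_le_sum fun a _ => ?_
          rw [← mul_sub, abs_mul, abs_of_nonneg (hw.1 a)]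
          exact mul_le_mul_of_nonneg_left (hk _ _) (hw.1 a)
      _ = 6000 * B * ((∑ a, w a * z a^4) * u1^4 + (∑ a, w a * z' a^4) * v1^4) := by
          rw [Finset.sum_mul, Finset.sum_mul, ← Finset.sum_add_distrib, Finset.mul_sum]
          exact Finset.sum_congr rfl fun a _ => by ring
      _ ≤ 6000 * B * (9 * u1^4 + 9 * v1^4) := by
          have := h.g1.m4; have := h.g2.m4
          gcongr
      _ = _ := by ring
  have g1 := gen h
  have g2 := gen hy
  rw [abs_le] at g1 g2 ⊢
  constructor <;> linarith [g1.1, g1.2, g2.1, g2.2]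

lemma rv_congr_off (c : Finset (Fin n) → ℝ) (j : Fin n) {Z Y : Fin n → Ω → ℝ}
    (h : ∀ i, i ≠ j → Z i = Y i) (ω : Fin n → Ω) :
    rv (av j c) Z ω = rv (av j c) Y ω ∧ rv (dv j c) Z ω = rv (dv j c) Y ω := by
  have e : (fun i => Z i (ω i)) = Function.update (fun i => Y i (ω i)) j (Z j (ω j)) := by
    funext i
    by_cases hi : i = j
    · subst hi; simp
    · simp [Function.update_of_ne hi, h i hi]
  unfold rv
  rw [e, ev_av_update, ev_dv_update]; simp

lemma lind_step (hw : IsW w) {ρ : ℝ} {Z Z' Y Y' : Fin n → Ω → ℝ} (j : Fin n)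
    (hZ : ∀ i, PairMom w (Z i) (Z' i) ρ) (hY : PairMom w (Y j) (Y' j) ρ)
    (h : ∀ i, i ≠ j → Z i = Y i) (h' : ∀ i, i ≠ j → Z' i = Y' i)
    {A P Q B : ℝ} (hA : A^4 ≤ B) (hP : P^4 ≤ B) (hQ : Q^4 ≤ B)
    {d : ℕ} {c : Finset (Fin n) → ℝ} (hc : Deg d c) :
    |wE w (fun ω => FF A P Q (rv c Z ω) (rv c Z' ω)) - wE w (fun ω => FF A P Q (rv c Y ω) (rv c Y' ω))|
      ≤ 216000 * B * 9 ^ d * nn (dv j c) ^ 2 := by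
  have hB : 0 ≤ B := le_trans (by positivity) hA
  have gen : ∀ Z Z' : Fin n → Ω → ℝ, wE w (fun ω => FF A P Q (rv c Z ω) (rv c Z' ω)) =
      wE w (fun ω => ∑ a, w a * FF A P Q (rv (av j c) Z ω + Z j a * rv (dv j c) Z ω)
        (rv (av j c) Z' ω + Z' j a * rv (dv j c) Z' ω)) := by
    intro Z Z'
    rw [wE_resample hw j]
    congr 1; funext ω
    refine Finset.sum_congr rfl fun a _ => ?_
    rw [rv_split c Z _ j, rv_split c Z' _ j, rv_av_upd, rv_av_upd, rv_dv_upd, rv_dv_upd]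
    simp
  rw [gen Z Z', gen Y Y', ← wE_sub]
  refine (wE_abs hw _).trans ?_
  have : wE w (fun ω => 108000 * B * (rv (dv j c) Z ω ^ 4 + rv (dv j c) Z' ω ^ 4))
      ≤ 216000 * B * 9 ^ d * nn (dv j c) ^ 2 := by
    rw [wE_mul, wE_add]
    have hd : Deg d (dv j c) := fun S hS => hc.dv j S (by omega)
    have a1 := rv_four hw (fun i => (hZ i).g1) univ (dv j c) d (supp_univ _) hd
    have a2 := rv_four hw (fun i => (hZ i).g2) univ (dv j c) d (supp_univ _) hd
    calc _ ≤ 108000 * B * (9 ^ d * nn (dv j c) ^ 2 + 9 ^ d * nn (dv j c) ^ 2) := by gcongr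
      _ = _ := by ring
  refine (wE_mono hw fun ω => ?_).trans this
  obtain ⟨e1, e2⟩ := rv_congr_off c j h ω
  obtain ⟨e3, e4⟩ := rv_congr_off c j h' ω
  rw [← e1, ← e2, ← e3, ← e4]
  exact one_coord hw (hZ j) hY hA hP hQ _ _ _ _
end lind

lemma sum_prod_fst {Ω₁ Ω₂ : Type} [Fintype Ω₁] [Fintype Ω₂] {w₁ : Ω₁ → ℝ} {w₂ : Ω₂ → ℝ}
    (h₂ : IsW w₂) (f : Ω₁ → ℝ) : ∑ q : Ω₁ × Ω₂, (w₁ q.1 * w₂ q.2) * f q.1 = ∑ a, w₁ a * f a := by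
  rw [Fintype.sum_prod_type]
  refine Finset.sum_congr rfl fun a _ => ?_
  simp only []
  rw [← Finset.sum_mul, ← Finset.mul_sum, h₂.2, mul_one]

lemma sum_prod_snd {Ω₁ Ω₂ : Type} [Fintype Ω₁] [Fintype Ω₂] {w₁ : Ω₁ → ℝ} {w₂ : Ω₂ → ℝ}
    (h₁ : IsW w₁) (f : Ω₂ → ℝ) : ∑ q : Ω₁ × Ω₂, (w₁ q.1 * w₂ q.2) * f q.2 = ∑ a, w₂ a * f a := by
  rw [Fintype.sum_prod_type_right]
  refine Finset.sum_congr rfl fun a _ => ?_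
  simp only [mul_assoc]
  rw [← Finset.sum_mul, h₁.2, one_mul]

lemma PairMom.fst {Ω₁ Ω₂ : Type} [Fintype Ω₁] [Fintype Ω₂] {w₁ : Ω₁ → ℝ} {w₂ : Ω₂ → ℝ}
    (h₂ : IsW w₂) {z z' : Ω₁ → ℝ} {ρ : ℝ} (h : PairMom w₁ z z' ρ) :
    PairMom (fun q : Ω₁ × Ω₂ => w₁ q.1 * w₂ q.2) (fun q => z q.1) (fun q => z' q.1) ρ where
  g1 := ⟨(sum_prod_fst h₂ _).trans h.g1.m1, (sum_prod_fst h₂ (fun a => z a ^ 2)).trans h.g1.m2,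
    (sum_prod_fst h₂ (fun a => z a ^ 3)).trans h.g1.m3,
    (sum_prod_fst h₂ (fun a => z a ^ 4)).trans_le h.g1.m4⟩
  g2 := ⟨(sum_prod_fst h₂ _).trans h.g2.m1, (sum_prod_fst h₂ (fun a => z' a ^ 2)).trans h.g2.m2,
    (sum_prod_fst h₂ (fun a => z' a ^ 3)).trans h.g2.m3,
    (sum_prod_fst h₂ (fun a => z' a ^ 4)).trans_le h.g2.m4⟩
  m11 := (sum_prod_fst h₂ (fun a => z a * z' a)).trans h.m11
  m21 := (sum_prod_fst h₂ (fun a => z a ^ 2 * z' a)).trans h.m21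
  m12 := (sum_prod_fst h₂ (fun a => z a * z' a ^ 2)).trans h.m12

lemma PairMom.snd {Ω₁ Ω₂ : Type} [Fintype Ω₁] [Fintype Ω₂] {w₁ : Ω₁ → ℝ} {w₂ : Ω₂ → ℝ}
    (h₁ : IsW w₁) {z z' : Ω₂ → ℝ} {ρ : ℝ} (h : PairMom w₂ z z' ρ) :
    PairMom (fun q : Ω₁ × Ω₂ => w₁ q.1 * w₂ q.2) (fun q => z q.2) (fun q => z' q.2) ρ where
  g1 := ⟨(sum_prod_snd h₁ _).trans h.g1.m1, (sum_prod_snd h₁ (fun a => z a ^ 2)).trans h.g1.m2,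
    (sum_prod_snd h₁ (fun a => z a ^ 3)).trans h.g1.m3,
    (sum_prod_snd h₁ (fun a => z a ^ 4)).trans_le h.g1.m4⟩
  g2 := ⟨(sum_prod_snd h₁ _).trans h.g2.m1, (sum_prod_snd h₁ (fun a => z' a ^ 2)).trans h.g2.m2,
    (sum_prod_snd h₁ (fun a => z' a ^ 3)).trans h.g2.m3,
    (sum_prod_snd h₁ (fun a => z' a ^ 4)).trans_le h.g2.m4⟩
  m11 := (sum_prod_snd h₁ (fun a => z a * z' a)).trans h.m11
  m21 := (sum_prod_snd h₁ (fun a => z a ^ 2 * z' a)).trans h.m21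
  m12 := (sum_prod_snd h₁ (fun a => z a * z' a ^ 2)).trans h.m12

/-- Invariance principle. -/
lemma lindeberg {n : ℕ} {Ω₁ Ω₂ : Type} [Fintype Ω₁] [Fintype Ω₂] {w₁ : Ω₁ → ℝ} {w₂ : Ω₂ → ℝ}
    (h₁ : IsW w₁) (h₂ : IsW w₂) {z₁ z₁' : Ω₁ → ℝ} {z₂ z₂' : Ω₂ → ℝ} {ρ : ℝ}
    (p₁ : PairMom w₁ z₁ z₁' ρ) (p₂ : PairMom w₂ z₂ z₂' ρ)
    {A P Q B : ℝ} (hA : A^4 ≤ B) (hP : P^4 ≤ B) (hQ : Q^4 ≤ B)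
    {d : ℕ} {c : Finset (Fin n) → ℝ} (hc : Deg d c) :
    |wE w₁ (fun ω => FF A P Q (rv c (fun _ => z₁) ω) (rv c (fun _ => z₁') ω))
      - wE w₂ (fun ω => FF A P Q (rv c (fun _ => z₂) ω) (rv c (fun _ => z₂') ω))|
      ≤ 216000 * B * 9 ^ d * ∑ j, nn (dv j c) ^ 2 := by
  set W := fun q : Ω₁ × Ω₂ => w₁ q.1 * w₂ q.2 with hW
  have hw : IsW W := h₁.prod h₂
  let Z : Finset (Fin n) → Fin n → Ω₁ × Ω₂ → ℝ := fun s i q => if i ∈ s then z₁ q.1 else z₂ q.2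
  let Z' : Finset (Fin n) → Fin n → Ω₁ × Ω₂ → ℝ := fun s i q => if i ∈ s then z₁' q.1 else z₂' q.2
  have hPM : ∀ s i, PairMom W (Z s i) (Z' s i) ρ := by
    intro s i
    by_cases hi : i ∈ s
    · simp only [Z, Z', hi, if_true]; exact p₁.fst h₂
    · simp only [Z, Z', hi, if_false]; exact p₂.snd h₁
  have key : ∀ s : Finset (Fin n), |wE W (fun ω => FF A P Q (rv c (Z s) ω) (rv c (Z' s) ω))
      - wE W (fun ω => FF A P Q (rv c (Z ∅) ω) (rv c (Z' ∅) ω))|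
      ≤ 216000 * B * 9 ^ d * ∑ j ∈ s, nn (dv j c) ^ 2 := by
    intro s
    induction s using Finset.induction_on with
    | empty => simp
    | insert j s hj ih =>
      have st := lind_step hw (Z := Z (insert j s)) (Z' := Z' (insert j s)) (Y := Z s) (Y' := Z' s) j
        (hPM _) (hPM s j) (fun i hi => by funext q; simp [Z, hi]) (fun i hi => by funext q; simp [Z', hi])
        hA hP hQ hc
      rw [Finset.sum_insert hj, mul_add]
      rw [abs_le] at ih st ⊢
      constructor <;> linarith [ih.1, ih.2, st.1, st.2]
  have := key univ
  have e1 : wE W (fun ω => FF A P Q (rv c (Z univ) ω) (rv c (Z' univ) ω))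
      = wE w₁ (fun ω => FF A P Q (rv c (fun _ => z₁) ω) (rv c (fun _ => z₁') ω)) := by
    rw [wE_prod]
    congr 1; funext a
    simp only [Z, Z', rv, Finset.mem_univ, if_true]
    rw [wE_const h₂]
  have e2 : wE W (fun ω => FF A P Q (rv c (Z ∅) ω) (rv c (Z' ∅) ω))
      = wE w₂ (fun ω => FF A P Q (rv c (fun _ => z₂) ω) (rv c (fun _ => z₂') ω)) := by
    rw [wE_prod]
    simp only [Z, Z', rv, Finset.notMem_empty, if_false]
    rw [wE_const h₁]
  rwa [e1, e2] at this


/-! ## Points on the circle -/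

section circ
variable {N : ℕ} [NeZero N]

/-- roots of unity -/
noncomputable def eu (k : ZMod N) : ℂ := ZMod.stdAddChar k

lemma eu_add (a b : ZMod N) : eu (a + b) = eu a * eu b := AddChar.map_add_eq_mul _ _ _
lemma eu_zero : eu (0 : ZMod N) = 1 := AddChar.map_zero_eq_one _
lemma eu_norm (k : ZMod N) : ‖eu k‖ = 1 := AddChar.norm_apply _ _

lemma eu_nat (m : ℕ) : eu (m : ZMod N) = Complex.exp (Complex.I * ((2 * Real.pi * m / N : ℝ) : ℂ)) := by
  have := ZMod.stdAddChar_coe (N := N) (m : ℤ)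
  unfold eu
  push_cast at this ⊢
  rw [this]; congr 1; ring

lemma eu_sub_one (m : ℕ) : ‖eu (m : ZMod N) - 1‖ = ‖2 * Real.sin (Real.pi * m / N)‖ := by
  rw [eu_nat, Complex.norm_exp_I_mul_ofReal_sub_one]
  congr 3; ring

lemma eu_sub_one_ge (m : ℕ) (hm : m ≤ N) : 4 * (min (m:ℝ) (N - m)) / N ≤ ‖eu (m : ZMod N) - 1‖ := by
  rw [eu_sub_one]
  have hN : (0:ℝ) < N := by exact_mod_cast Nat.pos_of_ne_zero (NeZero.ne N)
  have hmN : (m:ℝ) ≤ N := by exact_mod_cast hm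
  have hpi := Real.pi_pos
  refine le_trans ?_ (le_abs_self _)
  rcases le_total (m:ℝ) (N - m) with h | h
  · rw [min_eq_left h]
    have := Real.mul_le_sin (x := Real.pi * m / N) (by positivity)
      (by rw [div_le_div_iff₀ hN (by norm_num)]; nlinarith)
    have e : 2 / Real.pi * (Real.pi * m / N) = 2 * m / N := by field_simp
    rw [e] at this
    calc 4 * (m:ℝ) / N = 2 * (2 * m / N) := by ring
      _ ≤ _ := by linarith
  · rw [min_eq_right h]
    have hs : Real.sin (Real.pi * m / N) = Real.sin (Real.pi * (N - m) / N) := by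
      rw [← Real.sin_pi_sub]; congr 1; field_simp
    have := Real.mul_le_sin (x := Real.pi * (N - m) / N)
      (by have : 0 ≤ (N:ℝ) - m := by linarith
          positivity)
      (by rw [div_le_div_iff₀ hN (by norm_num)]; nlinarith)
    have e : 2 / Real.pi * (Real.pi * (N - m) / N) = 2 * (N - m) / N := by field_simp
    rw [e] at this
    rw [hs]
    calc 4 * ((N:ℝ) - m) / N = 2 * (2 * (N - m) / N) := by ring
      _ ≤ _ := by linarith

lemma sum_zmod_val (φ : ℕ → ℝ) : ∑ k : ZMod N, φ k.val = ∑ m ∈ range N, φ m := by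
  refine Finset.sum_nbij' (fun k => k.val) (fun m => (m : ZMod N)) ?_ ?_ ?_ ?_ ?_
  · intro k _; simpa using ZMod.val_lt k
  · intro m _; simp
  · intro k _; simp
  · intro m hm; simp at hm; exact ZMod.val_cast_of_lt hm
  · intro k _; rfl

lemma tele {b : ℝ} (hb : 0 < b) (M : ℕ) : ∑ j ∈ range M, b^2 / (((j:ℝ)+1)^2 + b^2) ≤ 2 * b := by
  have h1 : ∀ j ∈ range M, b^2 / (((j:ℝ)+1)^2 + b^2) ≤
      2 * b^2 * (1 / ((j:ℝ) + b) - 1 / (((j+1 : ℕ) : ℝ) + b)) := by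
    intro j _
    have hj : (0:ℝ) ≤ j := by positivity
    have e : 2 * b^2 * (1 / ((j:ℝ) + b) - 1 / (((j+1 : ℕ) : ℝ) + b)) = 2 * b^2 / ((j + b) * (j + 1 + b)) := by
      push_cast; field_simp; ring
    rw [e, div_le_div_iff₀ (by positivity) (by positivity)]
    have : (j + b) * (j + 1 + b) ≤ 2 * (((j:ℝ)+1)^2 + b^2) := by nlinarith [sq_nonneg ((j:ℝ) + 1 - b)]
    nlinarith [sq_nonneg b]
  refine (Finset.sum_le_sum h1).trans ?_
  rw [← Finset.mul_sum, Finset.sum_range_sub' (fun j : ℕ => 1 / ((j:ℝ) + b))]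
  have : 0 ≤ 1 / ((M:ℝ) + b) := by positivity
  have e : 2 * b^2 * (1 / (((0:ℕ):ℝ) + b)) = 2 * b := by simp; field_simp
  nlinarith [sq_nonneg b]

/-- Counting points near `z`. -/
lemma count_near {B : ℝ} (hB : 0 < B) (z : ℂ) :
    ∑ k : ZMod N, B^2 / (‖eu k - z‖^2 + B^2) ≤ 2 + 2 * B * N := by
  have hN : (0:ℝ) < N := by exact_mod_cast Nat.pos_of_ne_zero (NeZero.ne N)
  obtain ⟨k0, -, hk0⟩ := Finset.exists_min_image (univ : Finset (ZMod N)) (fun k => ‖eu k - z‖) ⟨0, by simp⟩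
  have hk0' : ∀ k, ‖eu k0 - z‖ ≤ ‖eu k - z‖ := fun k => hk0 k (by simp)
  set b := B * N / 2 with hb
  have hb0 : 0 < b := by positivity
  let φ : ℕ → ℝ := fun m => b^2 / ((min (m:ℝ) (N - m))^2 + b^2)
  have h1 : ∀ k : ZMod N, B^2 / (‖eu (k0 + k) - z‖^2 + B^2) ≤ φ k.val := by
    intro k
    have hkN : (k.val) ≤ N := (ZMod.val_lt k).le
    have h2 := eu_sub_one_ge (N := N) k.val hkN
    rw [ZMod.natCast_zmod_val] at h2
    have h3 : ‖eu k - 1‖ ≤ 2 * ‖eu (k0 + k) - z‖ := by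
      have : ‖eu (k0 + k) - eu k0‖ = ‖eu k - 1‖ := by
        rw [eu_add, show eu k0 * eu k - eu k0 = eu k0 * (eu k - 1) by ring, norm_mul, eu_norm, one_mul]
      rw [← this]
      have h4 := norm_sub_le (eu (k0 + k) - z) (eu k0 - z)
      have h5 := hk0' (k0 + k)
      rw [sub_sub_sub_cancel_right] at h4
      linarith
    have hmin0 : 0 ≤ min (k.val:ℝ) (N - k.val) := by
      have : (k.val:ℝ) ≤ N := by exact_mod_cast hkN
      exact le_min (by positivity) (by linarith)
    set μ := min (k.val:ℝ) (N - k.val) with hμ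
    have h6 : 2 * μ / N ≤ ‖eu (k0 + k) - z‖ := by
      have : 4 * μ / N = 2 * (2 * μ / N) := by ring
      linarith
    have h7 : (2 * μ / N)^2 ≤ ‖eu (k0 + k) - z‖^2 := pow_le_pow_left₀ (by positivity) h6 2
    calc B^2 / (‖eu (k0 + k) - z‖^2 + B^2) ≤ B^2 / ((2 * μ / N)^2 + B^2) := by gcongr
      _ = b^2 / (μ^2 + b^2) := by rw [hb]; field_simp
      _ = φ k.val := rfl
  have h2 : ∑ k : ZMod N, B^2 / (‖eu k - z‖^2 + B^2) = ∑ k : ZMod N, B^2 / (‖eu (k0 + k) - z‖^2 + B^2) :=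
    (Equiv.sum_comp (Equiv.addLeft k0) (fun k => B^2 / (‖eu k - z‖^2 + B^2))).symm
  rw [h2]
  refine (Finset.sum_le_sum fun k _ => h1 k).trans ?_
  rw [sum_zmod_val]
  let ψ : ℕ → ℝ := fun m => b^2 / ((m:ℝ)^2 + b^2)
  have hψ0 : ∀ m, 0 ≤ ψ m := fun m => by simp only [ψ]; positivity
  have h3 : ∀ m ∈ range N, φ m ≤ ψ m + ψ (N - m) := by
    intro m hm
    have hm' : m ≤ N := (Finset.mem_range.1 hm).le
    simp only [φ]
    rcases le_total (m:ℝ) (N - m) with h | h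
    · rw [min_eq_left h]; exact le_add_of_nonneg_right (hψ0 _)
    · rw [min_eq_right h]
      have : ((N - m : ℕ) : ℝ) = N - m := by push_cast [hm']; rfl
      have h8 : ψ (N - m) = b^2 / (((N:ℝ) - m)^2 + b^2) := by simp only [ψ]; rw [this]
      rw [← h8]
      exact le_add_of_nonneg_left (hψ0 _)
  refine (Finset.sum_le_sum h3).trans ?_
  rw [Finset.sum_add_distrib]
  have t1 : ∑ j ∈ range N, ψ (j + 1) ≤ 2 * b := by
    have := tele hb0 N
    simpa [ψ] using this
  have h5 : ∑ m ∈ range N, ψ (N - m) = ∑ j ∈ range N, ψ (j + 1) := by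
    rw [← Finset.sum_range_reflect (fun j => ψ (j + 1)) N]
    refine Finset.sum_congr rfl fun m hm => ?_
    have := Finset.mem_range.1 hm
    congr 1; omega
  have h6 : ∑ m ∈ range N, ψ m ≤ 1 + ∑ j ∈ range N, ψ (j + 1) := by
    have h0 : ψ 0 = 1 := by simp only [ψ]; push_cast; field_simp; ring
    have := Finset.sum_range_succ' ψ N
    rw [h0] at this
    have h9 : ∑ m ∈ range N, ψ m ≤ ∑ m ∈ range (N+1), ψ m := by
      rw [Finset.sum_range_succ]; exact le_add_of_nonneg_right (hψ0 _)
    linarith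
  rw [h5]
  have : 4 * b = 2 * B * N := by rw [hb]; ring
  linarith

/-- weights on the circle -/
noncomputable def wC (N : ℕ) [NeZero N] : ZMod N → ℝ := fun _ => 1 / N

lemma isW_C : IsW (wC N) := by
  have hN : (N:ℝ) ≠ 0 := by exact_mod_cast NeZero.ne N
  refine ⟨fun _ => by unfold wC; positivity, ?_⟩
  simp [wC, ZMod.card, hN]

/-- coordinate function on the circle -/
noncomputable def zc (k : ZMod N) : ℝ := √2 * (eu k).re

lemma antisymm_sum (h : ZMod N) (f : ZMod N → ℝ) (hf : ∀ k, f (k + h) = - f k) :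
    ∑ k, wC N k * f k = 0 := by
  have e : ∑ k, wC N k * f k = ∑ k, wC N (k + h) * f (k + h) :=
    (Equiv.sum_comp (Equiv.addRight h) (fun k => wC N k * f k)).symm
  have e2 : ∑ k, wC N (k + h) * f (k + h) = - ∑ k, wC N k * f k := by
    rw [← Finset.sum_neg_distrib]
    refine Finset.sum_congr rfl fun k _ => ?_
    rw [hf]; simp [wC]
  linarith

lemma eu_quarter {L : ℕ} (hL : N = 4 * L) : eu (L : ZMod N) = Complex.I := by
  rw [eu_nat]
  have hL0 : (L:ℝ) ≠ 0 := by
    have := NeZero.ne N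
    intro h; apply this
    have : L = 0 := by exact_mod_cast h
    omega
  have : (2 * Real.pi * L / N : ℝ) = Real.pi / 2 := by
    rw [hL]; push_cast; field_simp; ring
  rw [this, mul_comm]
  push_cast
  exact Complex.exp_pi_div_two_mul_I

lemma zc_quarter {L : ℕ} (hL : N = 4 * L) (k : ZMod N) : zc (k + (L : ZMod N)) = - (√2 * (eu k).im) := by
  unfold zc; rw [eu_add, eu_quarter hL]; simp

lemma zc_half {L : ℕ} (hL : N = 4 * L) (k : ZMod N) : zc (k + ((L : ZMod N) + (L : ZMod N))) = - zc k := by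
  unfold zc; rw [eu_add, eu_add, eu_quarter hL]; simp

lemma eu_sq (k : ZMod N) : (eu k).re^2 + (eu k).im^2 = 1 := by
  have := Complex.sq_norm (eu k)
  rw [eu_norm, Complex.normSq_apply] at this; nlinarith

lemma good_zc {L : ℕ} (hL : N = 4 * L) (m : ZMod N) : Good (wC N) (fun k => zc (k + m)) := by
  have h2 : (√2:ℝ)^2 = 2 := Real.sq_sqrt (by norm_num)
  have odd : ∀ k, zc (k + ((L : ZMod N) + (L : ZMod N)) + m) = - zc (k + m) := by
    intro k; rw [← zc_half hL]; congr 1; ring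
  constructor
  · exact antisymm_sum ((L : ZMod N) + (L : ZMod N)) _ odd
  · have := antisymm_sum (L : ZMod N) (fun k => zc (k + m)^2 - 1) (by
      intro k
      rw [show k + (L : ZMod N) + m = (k + m) + L by ring, zc_quarter hL]
      have := eu_sq (k + m)
      unfold zc; nlinarith)
    simp only [mul_sub, Finset.sum_sub_distrib, mul_one, (isW_C (N := N)).2] at this
    linarith
  · refine antisymm_sum ((L : ZMod N) + (L : ZMod N)) _ fun k => ?_
    rw [odd]; ring
  · calc ∑ a, wC N a * zc (a + m)^4 ≤ ∑ a, wC N a * 9 := by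
          refine Finset.sum_le_sum fun a _ => mul_le_mul_of_nonneg_left ?_ (isW_C.1 a)
          have := eu_sq (a + m)
          have h3 : zc (a + m)^2 ≤ 2 := by unfold zc; nlinarith [sq_nonneg (eu (a+m)).im]
          nlinarith [sq_nonneg (zc (a + m))]
      _ = 9 := by rw [← Finset.sum_mul, isW_C.2, one_mul]

lemma pair_zc {L : ℕ} (hL : N = 4 * L) (m : ZMod N) :
    PairMom (wC N) zc (fun k => zc (k + m)) (eu m).re := by
  have h2 : (√2:ℝ)^2 = 2 := Real.sq_sqrt (by norm_num)
  have odd : ∀ m k, zc (k + ((L : ZMod N) + (L : ZMod N)) + m) = - zc (k + m) := by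
    intro m k; rw [← zc_half hL]; congr 1; ring
  have odd0 : ∀ k, zc (k + ((L : ZMod N) + (L : ZMod N))) = - zc k := zc_half hL
  have g0 := good_zc hL (0 : ZMod N)
  simp only [add_zero] at g0
  refine ⟨g0, good_zc hL m, ?_, ?_, ?_⟩
  · have := antisymm_sum (L : ZMod N) (fun k => zc k * zc (k + m) - (eu m).re) (by
      intro k
      rw [show k + (L : ZMod N) + m = (k + m) + L by ring, zc_quarter hL, zc_quarter hL]
      have := eu_sq k
      unfold zc
      rw [eu_add]
      simp only [Complex.mul_re, Complex.mul_im]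
      linear_combination (2 * (eu m).re) * this + ((eu k).re * ((eu k).re * (eu m).re - (eu k).im * (eu m).im) + (eu k).im * ((eu k).re * (eu m).im + (eu k).im * (eu m).re)) * h2)
    simp only [mul_sub, Finset.sum_sub_distrib] at this
    rw [← Finset.sum_mul, isW_C.2] at this
    linarith
  · refine antisymm_sum ((L : ZMod N) + (L : ZMod N)) _ fun k => ?_
    rw [odd, odd0]; ring
  · refine antisymm_sum ((L : ZMod N) + (L : ZMod N)) _ fun k => ?_
    rw [odd, odd0]; ring

lemma eu_one_re_le : (eu (1 : ZMod N)).re ≤ 1 - 8 / N^2 ∨ N = 1 := by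
  by_cases h1 : N = 1
  · exact Or.inr h1
  left
  have hN0 : N ≠ 0 := NeZero.ne N
  have hN2 : 2 ≤ N := by omega
  have hN : (2:ℝ) ≤ N := by exact_mod_cast hN2
  have := eu_sub_one_ge (N := N) 1 (by omega)
  have hm : min ((1:ℕ):ℝ) (N - (1:ℕ)) = 1 := by push_cast; exact min_eq_left (by linarith)
  rw [hm] at this
  have h2 : ‖eu ((1:ℕ) : ZMod N) - 1‖^2 = 2 - 2 * (eu (1 : ZMod N)).re := by
    rw [Complex.sq_norm, Complex.normSq_apply]
    have := eu_sq (1 : ZMod N)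
    simp; nlinarith
  have h3 : (4 * 1 / (N:ℝ))^2 ≤ 2 - 2 * (eu (1 : ZMod N)).re := by
    rw [← h2]; exact pow_le_pow_left₀ (by positivity) this 2
  have e : (4 * 1 / (N:ℝ))^2 = 2 * (8 / N^2) := by ring
  linarith

lemma eu_one_dist : ‖eu (1 : ZMod N) - 1‖ ≤ 7 / N := by
  have := eu_sub_one (N := N) 1
  rw [Nat.cast_one] at this
  rw [this, norm_mul]
  have hN : (0:ℝ) < N := by exact_mod_cast Nat.pos_of_ne_zero (NeZero.ne N)
  have h1 : ‖Real.sin (Real.pi * ((1:ℕ):ℝ) / N)‖ ≤ Real.pi / N := by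
    refine (Real.abs_sin_le_abs).trans ?_
    push_cast
    rw [abs_of_nonneg (by have := Real.pi_pos; positivity), mul_one]
  have h2 : Real.pi / N ≤ 3.5 / N := by
    have := Real.pi_lt_d2
    gcongr; linarith
  have h3 : (7:ℝ) / N = 2 * (3.5 / N) := by ring
  rw [h3]; simp only [Real.norm_ofNat]; linarith
end circ


/-! ## Bounds on the circle -/

lemma roots_fin {P : Polynomial ℂ} (hP : P ≠ 0) : ∃ (m : ℕ) (r : Fin m → ℂ) (a : ℂ), m ≤ P.natDegree ∧ a ≠ 0 ∧
    ∀ z, P.eval z = a * ∏ i, (z - r i) := by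
  refine ⟨P.roots.toList.length, fun i => P.roots.toList.get i, P.leadingCoeff, ?_, ?_, ?_⟩
  · rw [Multiset.length_toList]; exact Polynomial.card_roots' P
  · simpa using hP
  · intro z
    rw [(IsAlgClosed.splits P).eval_eq_prod_roots]
    congr 1
    conv_lhs => rw [← Multiset.coe_toList P.roots]
    rw [Multiset.map_coe, Multiset.prod_coe]
    rw [← Fin.prod_univ_fun_getElem]
    rfl

lemma Th_le_of {a b s : ℝ} (hs : 0 ≤ s) (h : b^2 ≤ s * a^2) : Th a b ≤ s := by
  unfold Th
  rw [div_le_iff₀ (by positivity)]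
  nlinarith [sq_nonneg b]

lemma term_half {ρ B : ℝ} (hB : 0 < B) (h0 : 0 ≤ ρ) (h : ρ < B) : 1 ≤ 2 * (B^2 / (ρ^2 + B^2)) := by
  rw [mul_div_assoc', le_div_iff₀ (by positivity)]
  nlinarith

lemma pw1 {d m : ℕ} (hd : 1 ≤ d) (hm : m ≤ 2 * d) {w w' a : ℂ} (hw : ‖w‖ = 1) (hw' : ‖w'‖ = 1) (ha : a ≠ 0)
    {h κ A u v : ℝ} (hh : ‖w' - w‖ ≤ h) (hh0 : 0 < h) (hκ : 1 ≤ κ) (hdh : d * h ≤ 1/2) (r : Fin m → ℂ)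
    (hu : w^d * (u:ℂ) = a * ∏ i, (w - r i)) (hv : w'^d * (v:ℂ) = a * ∏ i, (w' - r i)) :
    FF A (κ * A) (-(κ * A)) u v ≤ 8 * κ^2 * d^2 * h^2
      + 2 * ∑ i, (6*d*κ*h)^2 / (‖w - r i‖^2 + (6*d*κ*h)^2) := by
  have hd1 : (1:ℝ) ≤ d := by exact_mod_cast hd
  set B := 6*d*κ*h with hBdef
  have hB : 0 < B := by positivity
  have hsum0 : ∀ i, 0 ≤ B^2 / (‖w - r i‖^2 + B^2) := fun i => by positivity
  have hw0 : w ≠ 0 := by intro h; simp [h] at hw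
  have hw0' : w' ≠ 0 := by intro h; simp [h] at hw'
  by_cases hc : ∃ i, ‖w - r i‖ < B
  · obtain ⟨i, hi⟩ := hc
    have h1 := term_half hB (norm_nonneg _) hi
    have h2 := Finset.single_le_sum (f := fun i => B^2 / (‖w - r i‖^2 + B^2)) (fun i _ => hsum0 i) (Finset.mem_univ i)
    have h3 : FF A (κ * A) (-(κ * A)) u v ≤ 1 := Th_le_one _ _
    have h4 : 0 ≤ 8 * κ^2 * d^2 * h^2 := by positivity
    linarith
  · push Not at hc
    have hne : ∀ i, w - r i ≠ 0 := by
      intro i hi; have := hc i; rw [hi, norm_zero] at this; linarith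
    have hu0 : (u:ℂ) ≠ 0 := by
      intro h0
      rw [h0, mul_zero] at hu
      exact mul_ne_zero ha (Finset.prod_ne_zero_iff.2 fun i _ => hne i) hu.symm
    let f : Fin d ⊕ Fin m → ℂ := Sum.elim (fun _ => (w - w') / w') (fun i => (w' - w) / (w - r i))
    have hprod : ∏ i, (1 + f i) = (v:ℂ) / u := by
      rw [Fintype.prod_sum_type]
      simp only [f, Sum.elim_inl, Sum.elim_inr, Finset.prod_const, Finset.card_univ, Fintype.card_fin]
      have e1 : 1 + (w - w') / w' = w / w' := by field_simp; ring
      have e2 : ∀ i, 1 + (w' - w) / (w - r i) = (w' - r i) / (w - r i) := by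
        intro i; have := hne i; field_simp; ring
      simp only [e1, e2, Finset.prod_div_distrib]
      have hp : ∏ i, (w - r i) ≠ 0 := Finset.prod_ne_zero_iff.2 fun i _ => hne i
      rw [div_pow, div_mul_div_comm, div_eq_div_iff (mul_ne_zero (pow_ne_zero _ hw0') hp) hu0]
      have : a * (w^d * (∏ i, (w' - r i)) * u) = a * (v * (w'^d * ∏ i, (w - r i))) := by
        linear_combination (a * ∏ i, (w' - r i)) * hu - (a * ∏ i, (w - r i)) * hv
      exact mul_left_cancel₀ ha this
    have hb := Finset.norm_prod_one_add_sub_one_le (univ : Finset (Fin d ⊕ Fin m)) f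
    set Δ := d * h + ∑ i, h / ‖w - r i‖ with hΔ
    have hS : ∑ i, ‖f i‖ ≤ Δ := by
      rw [Fintype.sum_sum_type]
      simp only [f, Sum.elim_inl, Sum.elim_inr, norm_div, hw', div_one]
      have : ‖w - w'‖ ≤ h := by rw [norm_sub_rev]; exact hh
      rw [Finset.sum_const, Finset.card_univ, Fintype.card_fin, nsmul_eq_mul]
      exact add_le_add (mul_le_mul_of_nonneg_left this (by positivity)) (Finset.sum_le_sum fun i _ => div_le_div_of_nonneg_right hh (norm_nonneg _))
    have hΔ0 : 0 ≤ Δ := by positivity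
    have hmr : (m:ℝ) ≤ 2 * d := by exact_mod_cast hm
    have hΔ1 : Δ ≤ 1 := by
      have : ∑ i, h / ‖w - r i‖ ≤ ∑ i : Fin m, h / B := by
        refine Finset.sum_le_sum fun i _ => ?_
        have := hc i
        gcongr
      rw [Finset.sum_const, Finset.card_univ, Fintype.card_fin, nsmul_eq_mul] at this
      have h2 : (m:ℝ) * (h / B) ≤ 1/2 := by
        rw [mul_div_assoc', div_le_iff₀ hB, hBdef]
        have : (d:ℝ) * h ≤ d * h * κ := le_mul_of_one_le_right (by positivity) hκ
        nlinarith
      linarith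
    have hexp : Real.exp (∑ i, ‖f i‖) - 1 ≤ 2 * Δ := by
      have h1 := Real.exp_le_exp.2 hS
      have h2 := Real.abs_exp_sub_one_le (x := Δ) (by rwa [abs_of_nonneg hΔ0])
      rw [abs_of_nonneg hΔ0] at h2
      have := le_abs_self (Real.exp Δ - 1)
      linarith
    rw [hprod] at hb
    have hreal : |v / u - 1| ≤ 2 * Δ := by
      have : ‖((v / u - 1 : ℝ) : ℂ)‖ ≤ 2 * Δ := by push_cast; exact hb.trans hexp
      rwa [Complex.norm_real] at this
    have hu0' : u ≠ 0 := by exact_mod_cast hu0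
    have huv : (u - v)^2 ≤ (2 * Δ)^2 * u^2 := by
      have e : u - v = -(u * (v / u - 1)) := by field_simp; ring
      have : (v / u - 1)^2 ≤ (2 * Δ)^2 := by
        rw [← sq_abs]; exact pow_le_pow_left₀ (abs_nonneg _) hreal 2
      rw [e]
      nlinarith [sq_nonneg u]
    have hT : FF A (κ * A) (-(κ * A)) u v ≤ κ^2 * (2 * Δ)^2 := by
      unfold FF
      apply Th_le_of (by positivity)
      have e : (κ * A * u + -(κ * A) * v)^2 = κ^2 * A^2 * (u - v)^2 := by ring
      rw [e]
      calc κ^2 * A^2 * (u - v)^2 ≤ κ^2 * A^2 * ((2 * Δ)^2 * u^2) := by gcongr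
        _ = _ := by ring
    refine hT.trans ?_
    have hq : Δ^2 ≤ 2 * (d * h)^2 + 2 * (∑ i, h / ‖w - r i‖)^2 := by
      rw [hΔ]; nlinarith [sq_nonneg (d * h - ∑ i, h / ‖w - r i‖)]
    have hcs : (∑ i, h / ‖w - r i‖)^2 ≤ m * ∑ i, (h / ‖w - r i‖)^2 := by
      have := sq_sum_le_card_mul_sum_sq (s := (univ : Finset (Fin m))) (f := fun i => h / ‖w - r i‖)
      simpa using this
    have hcs2 : κ^2 * 8 * (m * ∑ i, (h / ‖w - r i‖)^2) ≤ 2 * ∑ i, B^2 / (‖w - r i‖^2 + B^2) := by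
      rw [Finset.mul_sum, Finset.mul_sum, Finset.mul_sum]
      refine Finset.sum_le_sum fun i _ => ?_
      have hρ := hc i
      have hρ0 : 0 < ‖w - r i‖ := lt_of_lt_of_le hB hρ
      set ρ := ‖w - r i‖
      have h1 : B^2 / (2 * ρ^2) ≤ B^2 / (ρ^2 + B^2) := by gcongr; nlinarith
      have h2 : κ^2 * 8 * (m * (h / ρ)^2) ≤ 2 * (B^2 / (2 * ρ^2)) := by
        have e : 2 * (B^2 / (2 * ρ^2)) = κ^2 * (36 * d^2) * (h/ρ)^2 := by
          rw [hBdef]; field_simp; ring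
        rw [e]
        have : 8 * (m:ℝ) ≤ 36 * d^2 := by nlinarith
        calc κ^2 * 8 * (m * (h / ρ)^2) = κ^2 * (8 * m) * (h/ρ)^2 := by ring
          _ ≤ _ := by gcongr
      linarith
    have hκ2 : 0 ≤ κ^2 := sq_nonneg _
    calc κ^2 * (2 * Δ)^2 = κ^2 * 4 * Δ^2 := by ring
      _ ≤ κ^2 * 4 * (2 * (d * h)^2 + 2 * (∑ i, h / ‖w - r i‖)^2) := by gcongr
      _ ≤ κ^2 * 4 * (2 * (d * h)^2 + 2 * (m * ∑ i, (h / ‖w - r i‖)^2)) := by gcongr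
      _ = 8 * κ^2 * d^2 * h^2 + κ^2 * 8 * (m * ∑ i, (h / ‖w - r i‖)^2) := by ring
      _ ≤ _ := by gcongr

lemma pw2 {d m N : ℕ} (hN : 1 ≤ N) (hm : m ≤ 2 * d) {w w' a : ℂ} (hw : ‖w‖ = 1) (hw' : ‖w'‖ = 1) (ha : a ≠ 0)
    {u v : ℝ} (r : Fin m → ℂ)
    (hu : w^d * (u:ℂ) = a * ∏ i, (w - r i)) (hv : w'^d * (v:ℂ) = a * ∏ i, (w' - r i)) :
    FF ((3*N)^(2*d) * N) 0 1 u v ≤ 1 / N^2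
      + 2 * ∑ i, (1/N:ℝ)^2 / (‖w - r i‖^2 + (1/N:ℝ)^2) := by
  have hN1 : (1:ℝ) ≤ N := by exact_mod_cast hN
  have hB : (0:ℝ) < 1/N := by positivity
  have hsum0 : ∀ i, 0 ≤ (1/N:ℝ)^2 / (‖w - r i‖^2 + (1/N:ℝ)^2) := fun i => by positivity
  by_cases hc : ∃ i, ‖w - r i‖ < 1/N
  · obtain ⟨i, hi⟩ := hc
    have h1 := term_half hB (norm_nonneg _) hi
    have h2 := Finset.single_le_sum (f := fun i => (1/N:ℝ)^2 / (‖w - r i‖^2 + (1/N:ℝ)^2)) (fun i _ => hsum0 i) (Finset.mem_univ i)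
    have h3 : FF ((3*N)^(2*d) * N) 0 1 u v ≤ 1 := Th_le_one _ _
    have h4 : (0:ℝ) ≤ 1 / N^2 := by positivity
    linarith
  · push Not at hc
    have nu : |u| = ‖a‖ * ∏ i, ‖w - r i‖ := by
      have := congrArg norm hu
      simpa [hw] using this
    have nv : |v| = ‖a‖ * ∏ i, ‖w' - r i‖ := by
      have := congrArg norm hv
      simpa [hw'] using this
    have hp : ∏ i, ‖w' - r i‖ ≤ ∏ i, (3 * N * ‖w - r i‖) := by
      refine Finset.prod_le_prod (fun i _ => norm_nonneg _) fun i _ => ?_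
      have h1 : ‖w' - r i‖ ≤ ‖w' - w‖ + ‖w - r i‖ := by
        have := norm_add_le (w' - w) (w - r i); rwa [sub_add_sub_cancel] at this
      have h2 : ‖w' - w‖ ≤ 2 := by have := norm_sub_le w' w; linarith
      have h3 := hc i
      rw [div_le_iff₀ (by linarith)] at h3
      nlinarith [norm_nonneg (w - r i)]
    rw [Finset.prod_mul_distrib, Finset.prod_const, Finset.card_univ, Fintype.card_fin] at hp
    have hpow : (3 * (N:ℝ))^m ≤ (3*N)^(2*d) := pow_le_pow_right₀ (by linarith) hm
    have hpr : 0 ≤ ∏ i, ‖w - r i‖ := Finset.prod_nonneg fun i _ => norm_nonneg _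
    have hvu : |v| ≤ (3*N)^(2*d) * |u| := by
      rw [nu, nv]
      calc ‖a‖ * ∏ i, ‖w' - r i‖ ≤ ‖a‖ * ((3*N)^m * ∏ i, ‖w - r i‖) := by gcongr
        _ ≤ ‖a‖ * ((3*N)^(2*d) * ∏ i, ‖w - r i‖) := by gcongr
        _ = _ := by ring
    have : FF ((3*N)^(2*d) * N) 0 1 u v ≤ 1 / N^2 := by
      unfold FF
      apply Th_le_of (by positivity)
      have h2 : |v|^2 ≤ ((3*N)^(2*d) * |u|)^2 := pow_le_pow_left₀ (abs_nonneg _) hvu 2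
      rw [sq_abs, mul_pow, sq_abs] at h2
      have e : 1 / (N:ℝ)^2 * ((3*N)^(2*d) * N * u)^2 = ((3*N)^(2*d))^2 * u^2 := by field_simp
      rw [e]; simpa using h2
    have h3 : 0 ≤ ∑ i, (1/N:ℝ)^2 / (‖w - r i‖^2 + (1/N:ℝ)^2) := Finset.sum_nonneg fun i _ => hsum0 i
    linarith

section circ2
variable {N : ℕ} [NeZero N]

lemma line1 {d : ℕ} (hd : 1 ≤ d) {κ A : ℝ} (hκ : 1 ≤ κ) (hκN : κ ≤ N) (hdN : 14 * d ≤ N)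
    (g : ZMod N → ℝ) (P : Polynomial ℂ) (hP : P.natDegree ≤ 2 * d)
    (hg : ∀ k, P.eval (eu k) = eu k ^ d * (g k : ℂ)) :
    ∑ k, FF A (κ * A) (-(κ * A)) (g k) (g (k + 1)) ≤ 736 * d^2 * κ := by
  have hN : (0:ℝ) < N := by exact_mod_cast Nat.pos_of_ne_zero (NeZero.ne N)
  have hd1 : (1:ℝ) ≤ d := by exact_mod_cast hd
  have hne : ∀ k : ZMod N, eu k ≠ 0 := fun k h => by have := eu_norm k; simp [h] at this
  by_cases hP0 : P = 0
  · have : ∀ k, g k = 0 := by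
      intro k
      have := hg k
      rw [hP0, Polynomial.eval_zero] at this
      rcases mul_eq_zero.1 this.symm with h | h
      · exact absurd h (pow_ne_zero _ (hne k))
      · exact_mod_cast h
    simp only [this, FF, Th]
    simp; positivity
  · obtain ⟨m, r, a, hm, ha, hr⟩ := roots_fin hP0
    have hm2 := hm.trans hP
    set h : ℝ := 7 / N with hh
    have hdh : d * h ≤ 1/2 := by
      have : (14 * d : ℝ) ≤ N := by exact_mod_cast hdN
      rw [hh, mul_div_assoc', div_le_iff₀ hN]; linarith
    have step : ∀ k : ZMod N, FF A (κ * A) (-(κ * A)) (g k) (g (k + 1)) ≤ 8 * κ^2 * d^2 * h^2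
      + 2 * ∑ i, (6*d*κ*h)^2 / (‖eu k - r i‖^2 + (6*d*κ*h)^2) := by
      intro k
      refine pw1 hd hm2 (eu_norm k) (eu_norm (k+1)) ha ?_ (by positivity) hκ hdh r ?_ ?_
      · have e : eu (k + 1) - eu k = eu k * (eu (1 : ZMod N) - 1) := by rw [eu_add]; ring
        rw [e, norm_mul, eu_norm, one_mul]; exact eu_one_dist
      · rw [← hg, hr]
      · rw [← hg, hr]
    refine (Finset.sum_le_sum fun k _ => step k).trans ?_
    rw [Finset.sum_add_distrib, Finset.sum_const, Finset.card_univ,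
      ZMod.card, nsmul_eq_mul, ← Finset.mul_sum, Finset.sum_comm]
    have hB : 0 < 6*d*κ*h := by positivity
    have h1 : ∑ i : Fin m, ∑ k : ZMod N, (6*d*κ*h)^2 / (‖eu k - r i‖^2 + (6*d*κ*h)^2) ≤
        ∑ i : Fin m, (2 + 2 * (6*d*κ*h) * N) := Finset.sum_le_sum fun i _ => count_near hB _
    rw [Finset.sum_const, Finset.card_univ, Fintype.card_fin, nsmul_eq_mul] at h1
    have hmr : (m:ℝ) ≤ 2 * d := by exact_mod_cast hm2
    have e1 : 2 + 2 * (6*d*κ*h) * N = 2 + 84 * d * κ := by rw [hh]; field_simp; ring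
    rw [e1] at h1
    have h2 : (m:ℝ) * (2 + 84 * d * κ) ≤ 2 * d * (2 + 84 * d * κ) := by gcongr
    have e2 : (N:ℝ) * (8 * κ^2 * d^2 * h^2) = 392 * d^2 * κ * (κ / N) := by rw [hh]; field_simp; ring
    have h3 : κ / N ≤ 1 := (div_le_one hN).2 hκN
    have h4 : 392 * d^2 * κ * (κ / N) ≤ 392 * d^2 * κ * 1 := by gcongr
    rw [e2]
    have h5 : (d:ℝ) ≤ d^2 * κ := by nlinarith [mul_nonneg (by linarith : (0:ℝ) ≤ d) (by linarith : 0 ≤ κ - 1)]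
    nlinarith

lemma line2 {d : ℕ} (hd : 1 ≤ d) (m0 : ZMod N)
    (g : ZMod N → ℝ) (P : Polynomial ℂ) (hP : P.natDegree ≤ 2 * d)
    (hg : ∀ k, P.eval (eu k) = eu k ^ d * (g k : ℂ)) :
    ∑ k, FF ((3*N)^(2*d) * N) 0 1 (g k) (g (k + m0)) ≤ 17 * d := by
  have hNn : 1 ≤ N := Nat.pos_of_ne_zero (NeZero.ne N)
  have hN : (1:ℝ) ≤ N := by exact_mod_cast hNn
  have hd1 : (1:ℝ) ≤ d := by exact_mod_cast hd
  have hne : ∀ k : ZMod N, eu k ≠ 0 := fun k h => by have := eu_norm k; simp [h] at this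
  by_cases hP0 : P = 0
  · have : ∀ k, g k = 0 := by
      intro k
      have := hg k
      rw [hP0, Polynomial.eval_zero] at this
      rcases mul_eq_zero.1 this.symm with h | h
      · exact absurd h (pow_ne_zero _ (hne k))
      · exact_mod_cast h
    simp only [this, FF, Th]
    simp
  · obtain ⟨m, r, a, hm, ha, hr⟩ := roots_fin hP0
    have hm2 := hm.trans hP
    have step : ∀ k : ZMod N, FF ((3*N)^(2*d) * N) 0 1 (g k) (g (k + m0)) ≤ 1 / N^2
      + 2 * ∑ i, (1/N:ℝ)^2 / (‖eu k - r i‖^2 + (1/N:ℝ)^2) := by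
      intro k
      refine pw2 hNn hm2 (eu_norm k) (eu_norm (k+m0)) ha r ?_ ?_
      · rw [← hg, hr]
      · rw [← hg, hr]
    refine (Finset.sum_le_sum fun k _ => step k).trans ?_
    rw [Finset.sum_add_distrib, Finset.sum_const, Finset.card_univ,
      ZMod.card, nsmul_eq_mul, ← Finset.mul_sum, Finset.sum_comm]
    have hB : (0:ℝ) < 1/N := by positivity
    have h1 : ∑ i : Fin m, ∑ k : ZMod N, (1/N:ℝ)^2 / (‖eu k - r i‖^2 + (1/N:ℝ)^2) ≤
        ∑ i : Fin m, (2 + 2 * (1/N:ℝ) * N) := Finset.sum_le_sum fun i _ => count_near hB _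
    rw [Finset.sum_const, Finset.card_univ, Fintype.card_fin, nsmul_eq_mul] at h1
    have hmr : (m:ℝ) ≤ 2 * d := by exact_mod_cast hm2
    have e1 : 2 + 2 * (1/N:ℝ) * N = 4 := by field_simp; ring
    rw [e1] at h1
    have e2 : (N:ℝ) * (1 / N^2) = 1 / N := by field_simp
    have h3 : (1:ℝ) / N ≤ 1 := (div_le_one (by linarith)).2 hN
    rw [e2]
    linarith

/-- the polynomial along a line of shifts -/
noncomputable def PP {n : ℕ} (d : ℕ) (c : Finset (Fin n) → ℝ) (ω : Fin n → ZMod N) : Polynomial ℂ :=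
  ∑ S, Polynomial.C (c S : ℂ) * (Polynomial.X ^ (d - S.card) *
    ∏ i ∈ S, (Polynomial.C ((√2 / 2 : ℝ) : ℂ) * (Polynomial.C (eu (ω i)) * Polynomial.X ^ 2
      + Polynomial.C (star (eu (ω i))))))

lemma PP_deg {n d : ℕ} {c : Finset (Fin n) → ℝ} (hc : Deg d c) (ω : Fin n → ZMod N) :
    (PP d c ω).natDegree ≤ 2 * d := by
  unfold PP
  refine Polynomial.natDegree_sum_le_of_forall_le _ _ fun S _ => ?_
  by_cases hS : d < S.card
  · simp [hc S hS]
  · refine (Polynomial.natDegree_C_mul_le _ _).trans ?_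
    refine Polynomial.natDegree_mul_le.trans ?_
    have h1 : (Polynomial.X ^ (d - S.card) : Polynomial ℂ).natDegree ≤ d - S.card := by simp
    have h2 : (∏ i ∈ S, (Polynomial.C ((√2 / 2 : ℝ) : ℂ) * (Polynomial.C (eu (ω i)) * Polynomial.X ^ 2
      + Polynomial.C (star (eu (ω i)))))).natDegree ≤ ∑ i ∈ S, 2 := by
      refine (Polynomial.natDegree_prod_le _ _).trans (Finset.sum_le_sum fun i _ => ?_)
      refine (Polynomial.natDegree_C_mul_le _ _).trans ?_
      refine (Polynomial.natDegree_add_le _ _).trans (max_le ?_ (by simp))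
      exact (Polynomial.natDegree_C_mul_le _ _).trans (by simp)
    rw [Finset.sum_const, smul_eq_mul] at h2
    omega

lemma PP_eval {n d : ℕ} {c : Finset (Fin n) → ℝ} (hc : Deg d c) (ω : Fin n → ZMod N) (k : ZMod N) :
    (PP d c ω).eval (eu k) = eu k ^ d * ((rv c (fun _ => zc) (fun i => ω i + k) : ℝ) : ℂ) := by
  unfold PP rv ev
  rw [Polynomial.eval_finsetSum]
  push_cast
  rw [Finset.mul_sum]
  refine Finset.sum_congr rfl fun S _ => ?_
  by_cases hS : d < S.card
  · simp [hc S hS]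
  · rw [not_lt] at hS
    simp only [Polynomial.eval_mul, Polynomial.eval_C, Polynomial.eval_pow, Polynomial.eval_X,
      Polynomial.eval_prod, Polynomial.eval_add]
    have e : ∀ i, (((√2 : ℝ) : ℂ) / 2) * (eu (ω i) * eu k ^ 2 + star (eu (ω i)))
        = eu k * ((zc (ω i + k) : ℝ) : ℂ) := by
      intro i
      unfold zc
      have h1 : ((((eu (ω i + k)).re : ℝ)) : ℂ) = (eu (ω i + k) + star (eu (ω i + k))) / 2 := by
        rw [Complex.re_eq_add_conj]; rfl
      push_cast
      rw [h1, eu_add, star_mul']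
      have h2 : eu k * star (eu k) = 1 := by
        have := Complex.mul_conj (eu k)
        rw [Complex.normSq_eq_norm_sq, eu_norm] at this
        simpa using this
      linear_combination (-((√2:ℝ):ℂ) / 2 * star (eu (ω i))) * h2
    rw [Finset.prod_congr rfl fun i _ => e i, Finset.prod_mul_distrib, Finset.prod_const]
    have h3 : eu k ^ d = eu k ^ (d - S.card) * eu k ^ S.card := by rw [← pow_add]; congr 1; omega
    rw [h3]; ring

lemma wC_shift {n : ℕ} (F : (Fin n → ZMod N) → ℝ) :
    wE (wC N) F = wE (wC N) (fun ω => (∑ k : ZMod N, F (fun i => ω i + k)) / N) := by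
  have hN : (0:ℝ) < N := by exact_mod_cast Nat.pos_of_ne_zero (NeZero.ne N)
  have h : ∀ k : ZMod N, wE (wC N) (fun ω => F (fun i => ω i + k)) = wE (wC N) F := by
    intro k
    unfold wE
    rw [← Equiv.sum_comp (Equiv.addRight (fun _ : Fin n => k)) (fun ω => (∏ i, wC N (ω i)) * F ω)]
    refine Finset.sum_congr rfl fun ω _ => ?_
    simp only [wC, Equiv.coe_addRight]
    rfl
  simp_rw [div_eq_mul_inv]
  rw [wE_mul', wE_sum]
  simp only [h, Finset.sum_const, Finset.card_univ, ZMod.card, nsmul_eq_mul]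
  field_simp

lemma circ1 {n d : ℕ} (hd : 1 ≤ d) {κ A : ℝ} (hκ : 1 ≤ κ) (hκN : κ ≤ N) (hdN : 14 * d ≤ N)
    {c : Finset (Fin n) → ℝ} (hc : Deg d c) :
    wE (wC N) (fun ω => FF A (κ * A) (-(κ * A)) (rv c (fun _ => zc) ω) (rv c (fun _ k => zc (k + 1)) ω))
      ≤ 736 * d^2 * κ / N := by
  have hN : (0:ℝ) < N := by exact_mod_cast Nat.pos_of_ne_zero (NeZero.ne N)
  rw [wC_shift, ← wE_const (n := n) (isW_C (N := N)) (736 * d^2 * κ / N)]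
  refine wE_mono isW_C fun ω => ?_
  refine div_le_div_of_nonneg_right ?_ hN.le
  have := line1 hd hκ hκN hdN (A := A) (fun k => rv c (fun _ => zc) (fun i => ω i + k)) (PP d c ω)
    (PP_deg hc ω) (PP_eval hc ω)
  refine le_trans (le_of_eq ?_) this
  refine Finset.sum_congr rfl fun k _ => ?_
  simp only [rv, add_assoc]

lemma circ2 {n d : ℕ} (hd : 1 ≤ d) (m0 : ZMod N)
    {c : Finset (Fin n) → ℝ} (hc : Deg d c) :
    wE (wC N) (fun ω => FF ((3*N)^(2*d) * N) 0 1 (rv c (fun _ => zc) ω) (rv c (fun _ k => zc (k + m0)) ω))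
      ≤ 17 * d / N := by
  have hN : (0:ℝ) < N := by exact_mod_cast Nat.pos_of_ne_zero (NeZero.ne N)
  rw [wC_shift, ← wE_const (n := n) (isW_C (N := N)) (17 * d / N)]
  refine wE_mono isW_C fun ω => ?_
  refine div_le_div_of_nonneg_right ?_ hN.le
  have := line2 hd m0 (fun k => rv c (fun _ => zc) (fun i => ω i + k)) (PP d c ω)
    (PP_deg hc ω) (PP_eval hc ω)
  refine le_trans (le_of_eq ?_) this
  refine Finset.sum_congr rfl fun k _ => ?_
  simp only [rv, add_assoc]
end circ2


/-! ## Random restrictions -/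

lemma wE_comm {n m : ℕ} {Ω₁ Ω₂ : Type} [Fintype Ω₁] [Fintype Ω₂] (w₁ : Ω₁ → ℝ) (w₂ : Ω₂ → ℝ)
    (F : (Fin n → Ω₁) → (Fin m → Ω₂) → ℝ) :
    wE w₁ (fun a => wE w₂ (fun b => F a b)) = wE w₂ (fun b => wE w₁ (fun a => F a b)) := by
  simp only [wE, Finset.mul_sum]
  rw [Finset.sum_comm]
  refine Finset.sum_congr rfl fun a _ => Finset.sum_congr rfl fun b _ => by ring

section restr
variable {n : ℕ}

/-- merge two points -/
def mrg (t x y : Fin n → Bool) : Fin n → Bool := fun i => if t i then x i else y i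

lemma mrg_unif (t : Fin n → Bool) (H : (Fin n → Bool) → ℝ) :
    wE wB (fun y => wE wB (fun x => H (mrg t x y))) = wE wB H := by
  have e0 : wE wB H = wE (n := n) wB (fun _ => wE wB (fun x => H x)) := by
    rw [wE_const isW_B]
  rw [e0]
  have e : ∀ G : (Fin n → Bool) → (Fin n → Bool) → ℝ, wE wB (fun y => wE wB (fun x => G y x)) =
      ∑ q : (Fin n → Bool) × (Fin n → Bool), ((1/2)^n * (1/2)^n) * G q.1 q.2 := by
    intro G
    rw [Fintype.sum_prod_type]
    simp only [wE, wB, Finset.mul_sum, Finset.prod_const, Finset.card_univ, Fintype.card_fin, mul_assoc]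
  rw [e, e (fun _ x => H x)]
  let σ : (Fin n → Bool) × (Fin n → Bool) → (Fin n → Bool) × (Fin n → Bool) :=
    fun q => (mrg t q.1 q.2, mrg t q.2 q.1)
  have hσ : Function.Involutive σ := by
    intro q
    refine Prod.ext ?_ ?_ <;> funext i <;> simp only [σ, mrg] <;> split_ifs <;> rfl
  rw [← Equiv.sum_comp hσ.toPerm (fun q => ((1/2:ℝ)^n * (1/2)^n) * H q.2)]
  rfl

lemma mq_ex (c : Finset (Fin n) → ℝ) (y : Fin n → Bool) (s : Finset (Fin n)) :
    ∃ c' : Finset (Fin n) → ℝ, (∀ d, Deg d c → Deg d c') ∧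
      ∀ x, cv c' x = cv c (fun i => if i ∈ s then y i else x i) := by
  induction s using Finset.induction_on with
  | empty => exact ⟨c, fun _ h => h, fun x => by simp⟩
  | insert j s hj ih =>
    obtain ⟨c', h1, h2⟩ := ih
    refine ⟨rst j (chi (y j)) c', fun d h => (h1 d h).rst j _, fun x => ?_⟩
    rw [cv_rst, h2]
    congr 1; funext i
    by_cases hi : i = j
    · subst hi; simp
    · simp [hi]

/-- coefficients of the restricted polynomial -/
noncomputable def mq (c : Finset (Fin n) → ℝ) (t y : Fin n → Bool) : Finset (Fin n) → ℝ :=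
  (mq_ex c y (univ.filter fun i => t i = false)).choose

lemma mq_deg {d : ℕ} {c : Finset (Fin n) → ℝ} (h : Deg d c) (t y : Fin n → Bool) : Deg d (mq c t y) :=
  (mq_ex c y (univ.filter fun i => t i = false)).choose_spec.1 d h

lemma cv_mq (c : Finset (Fin n) → ℝ) (t y x : Fin n → Bool) : cv (mq c t y) x = cv c (mrg t x y) := by
  have := (mq_ex c y (univ.filter fun i => t i = false)).choose_spec.2 x
  rw [mq, this]
  congr 1; funext i
  cases h : t i <;> simp [mrg, h]

/-- sensitivity restricted to `t` -/
noncomputable def sT (f : (Fin n → Bool) → ℝ) (t x : Fin n → Bool) : ℕ :=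
  (univ.filter (fun i => f (flipAt x i) ≠ f x)).sum (fun i => if t i then 1 else 0)

lemma mrg_flip (t x y : Fin n → Bool) (i : Fin n) :
    mrg t (flipAt x i) y = if t i then flipAt (mrg t x y) i else mrg t x y := by
  funext k
  by_cases hk : k = i
  · subst hk; cases h : t k <;> simp [mrg, flipAt, h]
  · cases h : t i <;> simp [mrg, flipAt, hk]

lemma sens_mq (c : Finset (Fin n) → ℝ) (t y x : Fin n → Bool) :
    sens (sg (mq c t y)) x = sT (sg c) t (mrg t x y) := by
  unfold sens sT
  rw [Finset.card_filter, Finset.sum_filter]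
  refine Finset.sum_congr rfl fun i _ => ?_
  have e : ∀ x, sg (mq c t y) x = sg c (mrg t x y) := fun x => by unfold sg; rw [cv_mq]
  rw [e, e, mrg_flip]
  cases h : t i <;> simp

lemma mom_mq (α : ℝ) (c : Finset (Fin n) → ℝ) (t : Fin n → Bool) :
    wE wB (fun y => mom α (mq c t y)) = wE wB (fun x => (sT (sg c) t x : ℝ) ^ α) := by
  rw [← mrg_unif t (fun x => (sT (sg c) t x : ℝ) ^ α)]
  unfold mom
  simp only [sens_mq]

/-- random set weights -/
noncomputable def wT (δ : ℝ) : Bool → ℝ := fun b => if b then δ else 1 - δ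

lemma isW_T {δ : ℝ} (h0 : 0 ≤ δ) (h1 : δ ≤ 1) : IsW (wT δ) :=
  ⟨fun b => by cases b <;> simp [wT] <;> linarith, by simp [wT]⟩

/-- indicator -/
noncomputable def ib (b : Bool) : ℝ := if b then 1 else 0

lemma samp_mean {δ : ℝ} (h0 : 0 ≤ δ) (h1 : δ ≤ 1) (S : Finset (Fin n)) :
    wE (wT δ) (fun t => ∑ i ∈ S, ib (t i)) = δ * S.card := by
  rw [wE_sum, Finset.sum_congr rfl (g := fun _ => δ)]
  · simp; ring
  · intro i _
    have := wE_indep (isW_T h0 h1) i ib (fun _ => 1) (fun _ _ => rfl)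
    rw [wE_const (isW_T h0 h1)] at this
    simpa [ib, wT] using this

lemma samp_sq {δ : ℝ} (h0 : 0 ≤ δ) (h1 : δ ≤ 1) (S : Finset (Fin n)) :
    wE (wT δ) (fun t => (∑ i ∈ S, ib (t i))^2) ≤ (δ * S.card)^2 + δ * S.card := by
  have hw := isW_T h0 h1
  induction S using Finset.induction_on with
  | empty => simp [wE_const hw]
  | insert a S ha ih =>
    have e : (fun t : Fin n → Bool => (∑ i ∈ insert a S, ib (t i))^2) =
        fun t => (ib (t a) * 1 + 2 * (ib (t a) * ∑ i ∈ S, ib (t i))) + (∑ i ∈ S, ib (t i))^2 := by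
      funext t
      rw [Finset.sum_insert ha]
      have : ib (t a)^2 = ib (t a) := by cases t a <;> simp [ib]
      linear_combination this
    rw [e, wE_add, wE_add, wE_mul,
      wE_indep hw a ib (fun _ => 1) (fun _ _ => rfl),
      wE_indep hw a ib (fun t => ∑ i ∈ S, ib (t i)), samp_mean h0 h1, wE_const hw, Finset.card_insert_of_notMem ha]
    · have : ∑ b, wT δ b * ib b = δ := by simp [wT, ib]
      rw [this]; push_cast
      nlinarith
    · intro t b
      refine Finset.sum_congr rfl fun i hi => ?_
      rw [Function.update_of_ne (by rintro rfl; exact ha hi)]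

lemma rpow_quad {α u : ℝ} (h0 : 0 < α) (h1 : α ≤ 1) (hu : 0 ≤ u) : u - u^2/4 ≤ u ^ α := by
  rcases le_total u 1 with h | h
  · rcases hu.eq_or_lt with rfl | hu'
    · simp [Real.zero_rpow h0.ne']
    · have : u ^ (1:ℝ) ≤ u ^ α := Real.rpow_le_rpow_of_exponent_ge hu' h h1
      rw [Real.rpow_one] at this
      nlinarith
  · have : 1 ≤ u ^ α := Real.one_le_rpow h h0.le
    nlinarith [sq_nonneg (u/2 - 1)]

lemma samp {α δ : ℝ} (h0 : 0 < α) (h1 : α ≤ 1) (hδ0 : 0 ≤ δ) (hδ1 : δ ≤ 1) (S : Finset (Fin n)) :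
    (δ * S.card) ^ α ≤ 2 * wE (wT δ) (fun t => (∑ i ∈ S, ib (t i)) ^ α) + 1 := by
  have hw := isW_T hδ0 hδ1
  have hX : ∀ t : Fin n → Bool, 0 ≤ ∑ i ∈ S, ib (t i) := fun t =>
    Finset.sum_nonneg fun i _ => by unfold ib; split_ifs <;> norm_num
  have hnn : 0 ≤ wE (wT δ) (fun t => (∑ i ∈ S, ib (t i)) ^ α) :=
    wE_nonneg hw fun t => Real.rpow_nonneg (hX t) _
  set m := δ * S.card with hm
  have hm0 : 0 ≤ m := by positivity
  rcases le_total m 1 with h | h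
  · have := Real.rpow_le_one hm0 h h0.le
    linarith
  · have hmp : 0 < m := by linarith
    have key : wE (wT δ) (fun t => m^α * ((1/m) * (∑ i ∈ S, ib (t i)) - (1/(4*m^2)) * (∑ i ∈ S, ib (t i))^2))
        ≤ wE (wT δ) (fun t => (∑ i ∈ S, ib (t i)) ^ α) := by
      refine wE_mono hw fun t => ?_
      set X := ∑ i ∈ S, ib (t i) with hXd
      have hX0 : 0 ≤ X := hX t
      have hq := rpow_quad h0 h1 (div_nonneg hX0 hm0)
      have e : X ^ α = m ^ α * (X / m)^α := by
        rw [← Real.mul_rpow hm0 (div_nonneg hX0 hm0)]; congr 1; field_simp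
      rw [e]
      refine mul_le_mul_of_nonneg_left ?_ (Real.rpow_nonneg hm0 _)
      refine le_trans (le_of_eq ?_) hq
      field_simp
    rw [wE_mul, wE_sub, wE_mul, wE_mul, samp_mean hδ0 hδ1] at key
    have hsq := samp_sq hδ0 hδ1 S
    rw [← hm] at key hsq
    have h2 : 1/(4*m^2) * wE (wT δ) (fun t => (∑ i ∈ S, ib (t i))^2) ≤ 1/2 := by
      calc _ ≤ 1/(4*m^2) * (m^2 + m) := by gcongr
        _ ≤ 1/(4*m^2) * (2 * m^2) := by gcongr; nlinarith
        _ = 1/2 := by field_simp; norm_num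
    have h3 : 1 / m * m = 1 := by field_simp
    have h4 : 0 ≤ m ^ α := Real.rpow_nonneg hm0 _
    have h5 : m^α * (1/2) ≤ m^α * (1/m*m - 1/(4*m^2) * wE (wT δ) (fun t => (∑ i ∈ S, ib (t i))^2)) := by
      refine mul_le_mul_of_nonneg_left ?_ h4
      rw [h3]; linarith
    linarith

lemma mom_sample {α δ : ℝ} (h0 : 0 < α) (h1 : α ≤ 1) (hδ0 : 0 ≤ δ) (hδ1 : δ ≤ 1) (c : Finset (Fin n) → ℝ) :
    δ ^ α * mom α c ≤ 2 * wE (wT δ) (fun t => wE wB (fun y => mom α (mq c t y))) + 1 := by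
  have hw := isW_T hδ0 hδ1
  simp only [mom_mq]
  rw [wE_comm]
  have : wE wB (fun x => δ ^ α * (sens (sg c) x : ℝ) ^ α) ≤
      wE wB (fun x => 2 * wE (n := n) (wT δ) (fun t => (sT (sg c) t x : ℝ) ^ α) + 1) := by
    refine wE_mono isW_B fun x => ?_
    have := samp h0 h1 hδ0 hδ1 (univ.filter (fun i => sg c (flipAt x i) ≠ sg c x))
    rw [← Real.mul_rpow hδ0 (by positivity)]
    refine le_trans this (le_of_eq ?_)
    congr 3; funext t
    congr 1
    unfold sT ib
    push_cast
    rfl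
  rw [wE_mul, wE_add, wE_mul, wE_const isW_B] at this
  exact this

end restr


/-! ## Non-skewed restrictions are detected -/
section nonskew
variable {n : ℕ}

lemma cen_empty (c : Finset (Fin n) → ℝ) : cen c ∅ = 0 := by simp [cen]
lemma nn_cen (c : Finset (Fin n) → ℝ) : nn (cen c) = vr c := rfl

lemma FF_nonneg (A P Q u v : ℝ) : 0 ≤ FF A P Q u v := Th_nonneg _ _

/-- pointwise linearised lower bound -/
lemma FF_lower {A κ u a b l : ℝ} (hab : True) (V4 : ℝ) (hV : V4 = κ^4 * A^4) :
    2 * l * (κ^2 * A^2) * (a - b)^2 - l^2 * (12 * V4 * (a^4 + b^4) + (1/2) * A^4 * u^4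
        + κ^2 * A^2 * (a - b)^2) ≤ (κ * A * (a - b))^2 / ((A*u)^2 + (κ * A * (a - b))^2 + 1) := by
  set W := (κ * A * (a - b))^2 with hW
  set D := (A*u)^2 + W + 1 with hD
  have hW0 : 0 ≤ W := sq_nonneg _
  have hD0 : 0 < D := by positivity
  have h1 : 2 * l * W - l^2 * (W * D) ≤ W / D := by
    rw [le_div_iff₀ hD0]
    nlinarith [mul_nonneg hW0 (sq_nonneg (l * D - 1))]
  have h4 : (a - b)^4 ≤ 8 * (a^4 + b^4) := by
    nlinarith [sq_nonneg (a^2 - b^2), sq_nonneg (a+b), sq_nonneg (a-b), mul_nonneg (sq_nonneg (a+b)) (sq_nonneg (a - b)), sq_nonneg ((a+b)^2), sq_nonneg (a*b), mul_nonneg (sq_nonneg (a+b)) (sq_nonneg (a+b))]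
  have h2 : W * D ≤ 12 * V4 * (a^4 + b^4) + (1/2) * A^4 * u^4 + κ^2 * A^2 * (a - b)^2 := by
    have hV0 : 0 ≤ V4 := by rw [hV]; positivity
    have e1 : W^2 = V4 * (a-b)^4 := by rw [hW, hV]; ring
    have e2 : W^2 ≤ V4 * (8 * (a^4 + b^4)) := by rw [e1]; gcongr
    have e3 : W * (A*u)^2 ≤ (1/2) * W^2 + (1/2) * (A^4*u^4) := by
      nlinarith [sq_nonneg (W - (A*u)^2)]
    have e4 : W = κ^2 * A^2 * (a-b)^2 := by rw [hW]; ring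
    rw [hD]
    nlinarith
  have h3 : l^2 * (W * D) ≤ l^2 * (12 * V4 * (a^4 + b^4) + (1/2) * A^4 * u^4 + κ^2 * A^2 * (a - b)^2) := by
    gcongr
  have e4 : W = κ^2 * A^2 * (a-b)^2 := by rw [hW]; ring
  have e5 : 2 * l * (κ^2 * A^2) * (a - b)^2 = 2 * l * W := by rw [e4]; ring
  linarith

lemma nonskew {d : ℕ} {q : Finset (Fin n) → ℝ} (hq : Deg d q) {K2 κ A : ℝ} (hK : 0 ≤ K2)
    (hκ : K2 + 1 ≤ κ^2) (hns : ¬ K2 * vr q ≤ q ∅ ^ 2) :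
    1 ≤ 8 * 9^d * wE wB (fun x => wE wB (fun y => FF A (κ * A) (-(κ * A)) (cv q x) (cv q y)))
      + 2 * wE wB (fun x => 1 / ((A * cv q x)^2 + 1)) := by
  rw [not_le] at hns
  have hv0 := vr_nonneg q
  have h9 : (1:ℝ) ≤ 9^d := one_le_pow₀ (by norm_num)
  have hnn : nn q ≤ κ^2 * vr q := by
    rw [nn_eq_vr]; nlinarith
  have hE1 : 0 ≤ wE wB (fun x => wE wB (fun y => FF A (κ * A) (-(κ * A)) (cv q x) (cv q y))) :=
    wE_nonneg isW_B fun x => wE_nonneg isW_B fun y => FF_nonneg _ _ _ _ _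
  have hE2 : 0 ≤ wE wB (fun x => 1 / ((A * cv q x)^2 + 1)) :=
    wE_nonneg isW_B fun x => by positivity
  rcases lt_or_ge (κ^2 * A^2 * vr q) 1 with hV | hV
  · have h1 : wE wB (fun x => 3/4 - (A^2/4) * cv q x ^2) ≤ wE wB (fun x => 1 / ((A * cv q x)^2 + 1)) := by
      refine wE_mono isW_B fun x => ?_
      rw [le_div_iff₀ (by positivity)]
      nlinarith [sq_nonneg ((A * cv q x)^2 - 1)]
    rw [wE_sub, wE_mul, wE_const isW_B, cv_sq] at h1
    have h2 : A^2 / 4 * nn q ≤ 1/4 := by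
      calc A^2/4 * nn q ≤ A^2/4 * (κ^2 * vr q) := by gcongr
        _ ≤ 1/4 := by linarith
    have : 0 ≤ 8 * 9^d * wE wB (fun x => wE wB (fun y => FF A (κ * A) (-(κ * A)) (cv q x) (cv q y))) := by
      positivity
    linarith
  · set V := κ^2 * A^2 * vr q with hVd
    set l := 1 / (14 * 9^d * V) with hl
    have hVp : 0 < V := by linarith
    have hlV : l * V = 1 / (14 * 9^d) := by rw [hl]; field_simp
    have key : wE wB (fun x => wE wB (fun y =>
        (2 * l * (κ^2 * A^2) - l^2 * (κ^2 * A^2)) * cv (cen q) x ^ 2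
        + (2 * l * (κ^2 * A^2) - l^2 * (κ^2 * A^2)) * cv (cen q) y ^ 2
        - (2 * (2 * l * (κ^2 * A^2) - l^2 * (κ^2 * A^2)) * cv (cen q) x) * cv (cen q) y
        - (l^2 * (12 * (κ^4*A^4))) * cv (cen q) x ^ 4
        - (l^2 * (12 * (κ^4*A^4))) * cv (cen q) y ^ 4
        - (l^2 * ((1/2) * A^4)) * cv q x ^ 4)) ≤
        wE wB (fun x => wE wB (fun y => FF A (κ * A) (-(κ * A)) (cv q x) (cv q y))) := by
      refine wE_mono isW_B fun x => wE_mono isW_B fun y => ?_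
      have h := FF_lower (A := A) (κ := κ) (u := cv q x) (a := cv (cen q) x) (b := cv (cen q) y)
        (l := l) trivial _ rfl
      have e : FF A (κ * A) (-(κ * A)) (cv q x) (cv q y) =
          (κ * A * (cv (cen q) x - cv (cen q) y))^2 / ((A*cv q x)^2 + (κ * A * (cv (cen q) x - cv (cen q) y))^2 + 1) := by
        unfold FF Th
        rw [cv_cen, cv_cen]
        congr 2 <;> ring
      rw [e]
      refine le_trans (le_of_eq ?_) h
      ring
    simp only [wE_sub, wE_add, wE_mul, wE_mul', wE_const isW_B, cv_mean, cen_empty, mul_zero, sub_zero,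
      cv_sq, nn_cen] at key
    have q4 : wE wB (fun x => cv (cen q) x ^ 4) ≤ 9^d * vr q ^2 := cv_four hq.cen
    have u4 : wE wB (fun x => cv q x ^ 4) ≤ 9^d * (κ^2 * vr q)^2 := (cv_four hq).trans (by
      have := nn_nonneg q
      gcongr)
    have b1 : l^2 * (12 * (κ^4*A^4)) * wE wB (fun x => cv (cen q) x ^ 4) ≤ 12 * 9^d * (l * V)^2 := by
      calc _ ≤ l^2 * (12 * (κ^4*A^4)) * (9^d * vr q ^2) := by gcongr
        _ = _ := by rw [hVd]; ring
    have b2 : l^2 * ((1/2) * A^4) * wE wB (fun x => cv q x ^ 4) ≤ (1/2) * 9^d * (l * V)^2 := by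
      calc _ ≤ l^2 * ((1/2) * A^4) * (9^d * (κ^2 * vr q)^2) := by gcongr
        _ = _ := by rw [hVd]; ring
    have b3 : (2 * l * (κ^2 * A^2) - l^2 * (κ^2 * A^2)) * vr q = 2 * (l * V) - l^2 * V := by
      rw [hVd]; ring
    have b4 : l^2 * V ≤ 9^d * (l * V)^2 := by
      calc l^2 * V = 1 * (l^2 * (V * 1)) := by ring
        _ ≤ 9^d * (l^2 * (V * V)) := by gcongr
        _ = _ := by ring
    have b5 : 9^d * (l*V)^2 = (1/14) * (l * V) := by
      rw [hlV]; field_simp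
    rw [b3] at key
    have fin : 1/8 ≤ 9^d * wE wB (fun x => wE wB (fun y => FF A (κ * A) (-(κ * A)) (cv q x) (cv q y))) := by
      have : (59/28) * (l*V) ≤ wE wB (fun x => wE wB (fun y => FF A (κ * A) (-(κ * A)) (cv q x) (cv q y))) := by
        linarith
      calc (1/8:ℝ) ≤ 9^d * ((59/28) * (l * V)) := by
            rw [hlV]
            have : (9:ℝ)^d * ((59/28) * (1/(14 * 9^d))) = 59/392 := by field_simp; norm_num
            rw [this]; norm_num
        _ ≤ _ := by gcongr
    linarith

lemma anti {d : ℕ} {c : Finset (Fin n) → ℝ} (hc : Deg d c) (hm : 1 ≤ nn c) (A : ℝ) :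
    wE wB (fun x => 1 / ((A * cv c x)^2 + 1)) ≤
      (1 + 9^d) * wE wB (fun x => wE wB (fun y => FF A 0 1 (cv c x) (cv c y))) := by
  rw [← wE_mul]
  refine wE_mono isW_B fun x => ?_
  set s := (A * cv c x)^2 + 1 with hs
  have hs1 : 1 ≤ s := by rw [hs]; nlinarith [sq_nonneg (A * cv c x)]
  have hs0 : 0 < s := by linarith
  set m := nn c
  set l := 1 / (1 + 9^d * m) with hl
  have hl0 : 0 < 1 + 9^d * m := by positivity
  have key : wE wB (fun y => (1/s) * ((2 * l - l^2) * cv c y^2 - l^2 * cv c y ^4)) ≤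
      wE wB (fun y => FF A 0 1 (cv c x) (cv c y)) := by
    refine wE_mono isW_B fun y => ?_
    unfold FF Th
    set v := cv c y
    have h1 : (2*l - l^2) * v^2 - l^2 * v^4 ≤ v^2 / (1 + v^2) := by
      rw [le_div_iff₀ (by positivity)]
      nlinarith [mul_nonneg (sq_nonneg v) (sq_nonneg (l * (1 + v^2) - 1))]
    calc 1/s * ((2*l - l^2) * v^2 - l^2 * v^4) ≤ 1/s * (v^2 / (1+v^2)) := by gcongr
      _ = v^2 / (s * (1 + v^2)) := by field_simp
      _ ≤ v^2 / (s + v^2) := by gcongr; nlinarith [sq_nonneg v]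
      _ = _ := by rw [hs]; congr 1 <;> ring
  rw [wE_mul, wE_sub, wE_mul, wE_mul, cv_sq] at key
  have h4 := cv_four hc
  have h5 : l^2 * wE wB (fun y => cv c y ^ 4) ≤ l^2 * (9^d * m^2) := by gcongr
  have h6 : 1 / (1 + 9^d) ≤ (2 * l - l^2) * m - l^2 * wE wB (fun y => cv c y ^4) := by
    have : (2*l - l^2) * m - l^2 * (9^d * m^2) = m / (1 + 9^d * m) := by rw [hl]; field_simp; ring
    have h7 : 1 / (1 + 9^d) ≤ m / (1 + 9^d * m) := by
      rw [div_le_div_iff₀ (by positivity) hl0]; nlinarith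
    linarith
  calc 1 / s = (1 + 9^d) * (1/s * (1/(1+9^d))) := by field_simp
    _ ≤ (1 + 9^d) * (1/s * ((2 * l - l^2) * m - l^2 * wE wB (fun y => cv c y ^4))) := by gcongr
    _ ≤ _ := by gcongr

end nonskew


/-! ## The regular case -/

/-- weights of the restricted pair -/
noncomputable def wR (δ : ℝ) : Bool × (Bool × (Bool × Bool)) → ℝ :=
  fun q => wT δ q.1 * (wB q.2.1 * (wB q.2.2.1 * wB q.2.2.2))

lemma isW_R {δ : ℝ} (h0 : 0 ≤ δ) (h1 : δ ≤ 1) : IsW (wR δ) :=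
  (isW_T h0 h1).prod (isW_B.prod (isW_B.prod isW_B))

/-- first point -/
noncomputable def zr1 (q : Bool × (Bool × (Bool × Bool))) : ℝ := chi (if q.1 then q.2.2.1 else q.2.1)
/-- second point -/
noncomputable def zr2 (q : Bool × (Bool × (Bool × Bool))) : ℝ := chi (if q.1 then q.2.2.2 else q.2.1)

lemma pair_R (δ : ℝ) : PairMom (wR δ) zr1 zr2 (1 - δ) := by
  refine ⟨⟨?_, ?_, ?_, ?_⟩, ⟨?_, ?_, ?_, ?_⟩, ?_, ?_, ?_⟩ <;>
  · simp only [Fintype.sum_prod_type, Fintype.sum_bool, wR, wT, wB, zr1, zr2, chi, if_true,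
      if_false, Bool.false_eq_true]
    ring_nf
    try norm_num

/-- weights of the independent pair -/
noncomputable def wI : Bool × Bool → ℝ := fun q => wB q.1 * wB q.2

lemma isW_I : IsW wI := isW_B.prod isW_B

lemma pair_I : PairMom wI (fun q => chi q.1) (fun q => chi q.2) 0 := by
  refine ⟨⟨?_, ?_, ?_, ?_⟩, ⟨?_, ?_, ?_, ?_⟩, ?_, ?_, ?_⟩ <;>
  · simp only [Fintype.sum_prod_type, Fintype.sum_bool, wI, wB, chi, if_true,
      if_false, Bool.false_eq_true]
    try norm_num

section reg
variable {n : ℕ}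

lemma wE_I (c : Finset (Fin n) → ℝ) (F : ℝ → ℝ → ℝ) :
    wE wI (fun ω => F (rv c (fun _ q => chi q.1) ω) (rv c (fun _ q => chi q.2) ω)) =
      wE wB (fun x => wE wB (fun y => F (cv c x) (cv c y))) := by
  unfold wI
  rw [wE_prod]
  rfl

lemma wE_R (δ : ℝ) (c : Finset (Fin n) → ℝ) (F : ℝ → ℝ → ℝ) :
    wE (wR δ) (fun ω => F (rv c (fun _ => zr1) ω) (rv c (fun _ => zr2) ω)) =
      wE (wT δ) (fun t => wE wB (fun y => wE wB (fun x => wE wB (fun x' =>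
        F (cv (mq c t y) x) (cv (mq c t y) x'))))) := by
  unfold wR
  rw [wE_prod (wT δ) (fun q : Bool × (Bool × Bool) => wB q.1 * (wB q.2.1 * wB q.2.2))]
  congr 1; funext t
  rw [wE_prod wB (fun q : Bool × Bool => wB q.1 * wB q.2)]
  congr 1; funext y
  rw [wE_prod]
  simp only [cv_mq]
  rfl

lemma sum_dv_sq {d : ℕ} {c : Finset (Fin n) → ℝ} (hc : Deg d c) {τ : ℝ} (hv : vr c = 1) (hτ : 0 ≤ τ)
    (hr : Reg τ c) : ∑ j, nn (dv j c) ^ 2 ≤ τ * d := by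
  calc ∑ j, nn (dv j c)^2 ≤ ∑ j, τ * nn (dv j c) := by
        refine Finset.sum_le_sum fun j _ => ?_
        have := hr j
        rw [hv, mul_one] at this
        have h0 := nn_nonneg (dv j c)
        nlinarith
    _ = τ * II c := by rw [← Finset.mul_sum, sum_nn_dv]
    _ ≤ τ * d := by
        have := II_le hc
        rw [hv, mul_one] at this
        gcongr

set_option maxHeartbeats 2000000 in
lemma reg1 {α : ℝ} (h0 : 0 < α) (h1 : α ≤ 1) {d : ℕ} (hd : 1 ≤ d) {M τ K2 κ : ℝ} {N L : ℕ}
    (hL : N = 4 * L) (hdN : 14 * d ≤ N) (hκ1 : 1 ≤ κ) (hκN : κ ≤ N) (hK0 : 0 ≤ K2) (hκ : K2 + 1 ≤ κ^2)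
    (hτ0 : 0 ≤ τ)
    (hτ : 216000 * (κ * ((3*N)^(2*d) * N))^4 * 9^d * (τ * d) ≤ 1 / N)
    (hM0 : 0 ≤ M)
    (hM : ∀ c : Finset (Fin n) → ℝ, Deg d c → mom α c ≤ M)
    (hS : ∀ c : Finset (Fin n) → ℝ, Deg d c → K2 * vr c ≤ c ∅ ^ 2 → mom α c ≤ 1)
    {c : Finset (Fin n) → ℝ} (hc : Deg d c) (hv : vr c = 1) (hr : Reg τ c) :
    mom α c ≤ (N:ℝ)^(2*α) * (3 + 12000 * 9^d * d^2 * κ * M / N) := by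
  have hN14 : 14 ≤ N := by omega
  have : NeZero N := ⟨by omega⟩
  have hNr : (14:ℝ) ≤ N := by exact_mod_cast hN14
  have hd1 : (1:ℝ) ≤ d := by exact_mod_cast hd
  have h9 : (1:ℝ) ≤ 9^d := one_le_pow₀ (by norm_num)
  set A : ℝ := (3*N)^(2*d) * N with hA
  have hA1 : 1 ≤ A := by
    have : (1:ℝ) ≤ (3*N)^(2*d) := one_le_pow₀ (by linarith)
    rw [hA]; nlinarith
  have hκA : 1 ≤ κ * A := by nlinarith
  set δ : ℝ := 1 - (eu (1 : ZMod N)).re with hδ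
  have hδlow : 8 / (N:ℝ)^2 ≤ δ := by
    rcases eu_one_re_le (N := N) with h | h
    · linarith
    · omega
  have hδ0 : 0 < δ := lt_of_lt_of_le (by positivity) hδlow
  have hδ1 : δ ≤ 1 := by
    have h2 := eu_one_dist (N := N)
    have h3 := Complex.abs_re_le_norm (eu (1 : ZMod N) - 1)
    have h4 : (7:ℝ)/N ≤ 1/2 := by rw [div_le_div_iff₀ (by linarith) (by norm_num)]; linarith
    rw [Complex.sub_re, Complex.one_re] at h3
    have := neg_abs_le ((eu (1 : ZMod N)).re - 1)
    linarith
  have hwT := isW_T hδ0.le hδ1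
  have hρ : 1 - δ = (eu (1 : ZMod N)).re := by rw [hδ]; ring
  have hB1 : (1:ℝ) ≤ (κ * A)^4 := one_le_pow₀ hκA
  have hAB : A^4 ≤ (κ * A)^4 := by
    refine pow_le_pow_left₀ (by linarith) ?_ 4
    nlinarith
  have hsum := sum_dv_sq hc hv hτ0 hr
  have herr : 216000 * (κ * A)^4 * 9^d * ∑ j, nn (dv j c)^2 ≤ 1/N := by
    refine le_trans ?_ hτ
    gcongr
  -- first comparison
  have p2 := pair_zc hL (1 : ZMod N)
  rw [← hρ] at p2
  have lin1 := lindeberg (isW_R hδ0.le hδ1) (isW_C (N := N)) (pair_R δ) p2 (A := A) (P := κ * A) (Q := -(κ*A))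
    hAB le_rfl (by rw [Even.neg_pow (by decide)]) hc
  have c1 := circ1 (N := N) hd hκ1 hκN hdN (A := A) hc
  have up1 := (le_abs_self _).trans (lin1.trans herr)
  rw [wE_R δ c (fun u v => FF A (κ * A) (-(κ * A)) u v)] at up1
  -- second comparison
  have p3 := pair_zc hL ((L : ℕ) : ZMod N)
  rw [eu_quarter hL, Complex.I_re] at p3
  have lin2 := lindeberg isW_I (isW_C (N := N)) pair_I p3 (A := A) (P := 0) (Q := 1)
    hAB (by rw [zero_pow (by norm_num)]; linarith) (by rw [one_pow]; exact hB1) hc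
  have c2 := circ2 (N := N) hd ((L : ℕ) : ZMod N) hc
  rw [← hA] at c2
  have up2 := (le_abs_self _).trans (lin2.trans herr)
  rw [wE_I c (fun u v => FF A 0 1 u v)] at up2
  have hnn : 1 ≤ nn c := by rw [nn_eq_vr, hv]; nlinarith [sq_nonneg (c ∅)]
  have ant := anti hc hnn A
  set X1 := wE (wT δ) (fun t => wE wB (fun y => wE wB (fun x => wE wB (fun x' =>
        FF A (κ * A) (-(κ * A)) (cv (mq c t y) x) (cv (mq c t y) x'))))) with hX1
  set X2 := wE wB (fun x => 1 / ((A * cv c x)^2 + 1)) with hX2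
  have hX2' : wE (n := n) (wT δ) (fun t => wE wB (fun y => wE wB (fun x => 1 / ((A * cv (mq c t y) x)^2 + 1)))) = X2 := by
    have : ∀ t, wE wB (fun y => wE wB (fun x => 1 / ((A * cv (mq c t y) x)^2 + 1))) = X2 := by
      intro t
      simp only [cv_mq]
      exact mrg_unif t (fun z => 1 / ((A * cv c z)^2 + 1))
    simp only [this]
    exact wE_const hwT _
  have samp := mom_sample h0 h1 hδ0.le hδ1 c
  have hmq : wE (wT δ) (fun t => wE wB (fun y => mom α (mq c t y))) ≤
      wE (wT δ) (fun t => wE wB (fun y => 1 + M * ((8 * 9^d) * wE wB (fun x => wE wB (fun x' =>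
        FF A (κ * A) (-(κ * A)) (cv (mq c t y) x) (cv (mq c t y) x')))
        + 2 * wE wB (fun x => 1 / ((A * cv (mq c t y) x)^2 + 1))))) := by
    refine wE_mono hwT fun t => wE_mono isW_B fun y => ?_
    have hq := mq_deg hc t y
    by_cases hs : K2 * vr (mq c t y) ≤ mq c t y ∅ ^ 2
    · have e1 := hS _ hq hs
      have e2 : 0 ≤ wE wB (fun x => wE wB (fun x' =>
        FF A (κ * A) (-(κ * A)) (cv (mq c t y) x) (cv (mq c t y) x'))) :=
        wE_nonneg isW_B fun x => wE_nonneg isW_B fun y => FF_nonneg _ _ _ _ _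
      have e3 : 0 ≤ wE wB (fun x => 1 / ((A * cv (mq c t y) x)^2 + 1)) :=
        wE_nonneg isW_B fun x => by positivity
      have : 0 ≤ M * ((8 * 9^d) * wE wB (fun x => wE wB (fun x' =>
        FF A (κ * A) (-(κ * A)) (cv (mq c t y) x) (cv (mq c t y) x')))
        + 2 * wE wB (fun x => 1 / ((A * cv (mq c t y) x)^2 + 1))) := by positivity
      linarith
    · have e1 := hM _ hq
      have e2 := nonskew hq (A := A) hK0 hκ hs
      have e3 := mul_le_mul_of_nonneg_left e2 hM0
      linarith
  simp only [wE_add, wE_mul, wE_const isW_B, wE_const hwT] at hmq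
  rw [hX2', ← hX1] at hmq
  have bX1 : X1 ≤ 737 * d^2 * κ / N := by
    have : 736 * d^2 * κ / N + 1 / N ≤ 737 * d^2 * κ / N := by
      rw [← add_div]; gcongr
      nlinarith [one_le_pow₀ hd1 (n := 2), mul_nonneg (by positivity : (0:ℝ) ≤ d^2) (by linarith : 0 ≤ κ - 1)]
    linarith
  have hd2 : (d:ℝ) ≤ d^2 * κ := by nlinarith [mul_nonneg (by positivity : (0:ℝ) ≤ d) (by linarith : 0 ≤ κ - 1)]
  have bX2 : X2 ≤ (1 + 9^d) * (18 * d^2 * κ / N) := by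
    refine ant.trans ?_
    have : 17 * d / N + 1 / N ≤ 18 * d^2 * κ / (N:ℝ) := by
      rw [← add_div]; gcongr
      nlinarith
    gcongr
    linarith
  have hP : 8 * 9^d * X1 + 2 * X2 ≤ 6000 * 9^d * d^2 * κ / N := by
    set u := (d:ℝ)^2 * κ / N with hu
    have hu0 : 0 ≤ u := by positivity
    have e1 : 737 * (d:ℝ)^2 * κ / N = 737 * u := by rw [hu]; ring
    have e2 : 18 * (d:ℝ)^2 * κ / N = 18 * u := by rw [hu]; ring
    have e3 : 6000 * 9^d * (d:ℝ)^2 * κ / N = 6000 * (9^d * u) := by rw [hu]; ring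
    rw [e1] at bX1
    rw [e2] at bX2
    rw [e3]
    have f1 : 9^d * X1 ≤ 9^d * (737 * u) := by gcongr
    have f2 : u ≤ 9^d * u := le_mul_of_one_le_left hu0 h9
    linarith
  have hfin : δ^α * mom α c ≤ 3 + 12000 * 9^d * d^2 * κ * M / N := by
    have := mul_le_mul_of_nonneg_left hP hM0
    have e : 12000 * 9^d * d^2 * κ * M / N = 2 * (M * (6000 * 9^d * d^2 * κ / N)) := by ring
    rw [e]; linarith
  have hNa : (N:ℝ)^(2*α) * δ^α ≥ 1 := by
    rw [Real.rpow_mul (by positivity), ← Real.mul_rpow (by positivity) hδ0.le]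
    apply Real.one_le_rpow _ h0.le
    rw [Real.rpow_ofNat]
    calc (1:ℝ) ≤ N^2 * (8 / N^2) := by rw [mul_div_cancel₀ _ (by positivity)]; norm_num
      _ ≤ _ := by gcongr
  have hmn := mom_nonneg α c
  calc mom α c ≤ ((N:ℝ)^(2*α) * δ^α) * mom α c := le_mul_of_one_le_left hmn hNa
    _ = (N:ℝ)^(2*α) * (δ^α * mom α c) := by ring
    _ ≤ _ := by gcongr

lemma vr_smul (a : ℝ) (c : Finset (Fin n) → ℝ) : vr (fun S => a * c S) = a^2 * vr c := by
  rw [vr_eq, vr_eq, Finset.mul_sum]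
  refine Finset.sum_congr rfl fun S _ => ?_
  split_ifs
  · simp
  · ring

lemma dv_smul (a : ℝ) (c : Finset (Fin n) → ℝ) (j : Fin n) :
    dv j (fun S => a * c S) = fun S => a * dv j c S := by
  funext S; unfold dv; split_ifs <;> simp

lemma reg2 {α : ℝ} (h0 : 0 < α) (h1 : α ≤ 1) {d : ℕ} (hd : 1 ≤ d) {M τ K2 κ : ℝ} {N L : ℕ}
    (hL : N = 4 * L) (hdN : 14 * d ≤ N) (hκ1 : 1 ≤ κ) (hκN : κ ≤ N) (hK0 : 0 ≤ K2) (hκ : K2 + 1 ≤ κ^2)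
    (hτ0 : 0 ≤ τ)
    (hτ : 216000 * (κ * ((3*N)^(2*d) * N))^4 * 9^d * (τ * d) ≤ 1 / N)
    (hM0 : 0 ≤ M)
    (hM : ∀ c : Finset (Fin n) → ℝ, Deg d c → mom α c ≤ M)
    (hS : ∀ c : Finset (Fin n) → ℝ, Deg d c → K2 * vr c ≤ c ∅ ^ 2 → mom α c ≤ 1)
    (c : Finset (Fin n) → ℝ) (hc : Deg d c) (hr : Reg τ c) :
    mom α c ≤ (N:ℝ)^(2*α) * (3 + 12000 * 9^d * d^2 * κ * M / N) := by
  by_cases hv : vr c = 0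
  · rw [mom_vr_zero h0 c hv]; positivity
  have hvp : 0 < vr c := lt_of_le_of_ne (vr_nonneg c) (Ne.symm hv)
  have ha : 0 < 1 / √(vr c) := by positivity
  have ha2 : (1 / √(vr c))^2 * vr c = 1 := by
    rw [div_pow, Real.sq_sqrt hvp.le]; field_simp
  rw [← mom_smul (α := α) ha c]
  refine reg1 h0 h1 hd hL hdN hκ1 hκN hK0 hκ hτ0 hτ hM0 hM hS (hc.smul _) ?_ ?_
  · rw [vr_smul, ha2]
  · intro j
    rw [dv_smul, nn_smul, vr_smul]
    have := mul_le_mul_of_nonneg_left (hr j) (sq_nonneg (1 / √(vr c)))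
    linarith

end reg


/-! ## Choice of parameters -/

/-- constant -/
noncomputable def U0 (d : ℕ) : ℝ := 216000 * 9^d * d * 3^(8*d)
/-- constant -/
noncomputable def C2 (d : ℕ) : ℝ := 16 * 9^d * (16 * 9^d * d^2 * U0 d + 5)

lemma core {n : ℕ} {α : ℝ} (h0 : 0 < α) (h1 : α < 1/2) {d : ℕ} (hd : 1 ≤ d) {K2 κ : ℝ} {N L : ℕ}
    (hL : N = 4 * L) (hdN : 14 * d ≤ N) (hκ1 : 1 ≤ κ) (hκN : κ ≤ N) (hK0 : 0 ≤ K2) (hκ : K2 + 1 ≤ κ^2)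
    (hG : 192000 * 81^d * d^2 * κ * (N:ℝ)^(2*α) ≤ N)
    (hS : ∀ c : Finset (Fin n) → ℝ, Deg d c → K2 * vr c ≤ c ∅ ^ 2 → mom α c ≤ 1)
    (c : Finset (Fin n) → ℝ) (hc : Deg d c) :
    mom α c ≤ C2 d * (N:ℝ)^(8*d+11) := by
  have h1' : α ≤ 1 := by linarith
  have hN14 : 14 ≤ N := by omega
  have hNr : (14:ℝ) ≤ N := by exact_mod_cast hN14
  have hd1 : (1:ℝ) ≤ d := by exact_mod_cast hd
  have h9 : (1:ℝ) ≤ 9^d := one_le_pow₀ (by norm_num)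
  let Sset : Set ℝ := {r | ∃ c : Finset (Fin n) → ℝ, Deg d c ∧ r = mom α c}
  have hbdd : BddAbove Sset := ⟨n, by rintro r ⟨c, _, rfl⟩; exact mom_le_n h0 h1' c⟩
  set M := sSup Sset with hMdef
  have hM : ∀ c : Finset (Fin n) → ℝ, Deg d c → mom α c ≤ M := fun c hc => le_csSup hbdd ⟨c, hc, rfl⟩
  have hM0 : 0 ≤ M := (mom_nonneg α c).trans (hM c hc)
  set A : ℝ := (3*N)^(2*d) * N with hA
  have hA1 : 1 ≤ A := by
    have : (1:ℝ) ≤ (3*N)^(2*d) := one_le_pow₀ (by linarith)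
    rw [hA]; nlinarith
  set U : ℝ := 216000 * (κ * A)^4 * 9^d * d * N with hU
  have hκA : 1 ≤ κ * A := by nlinarith
  have hU1 : 1 ≤ U := by
    have : (1:ℝ) ≤ (κ * A)^4 := one_le_pow₀ hκA
    calc (1:ℝ) = 1 * 1 * 1 * 1 * 1 := by norm_num
      _ ≤ U := by rw [hU]; gcongr <;> linarith
  have hU0 : 0 < U := by linarith
  have hUle : U ≤ U0 d * (N:ℝ)^(8*d+9) := by
    calc U ≤ 216000 * (N * A)^4 * 9^d * d * N := by rw [hU]; gcongr
      _ = _ := by rw [hA, U0]; ring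
  set τ : ℝ := 1 / U with hτ
  have hτp : 0 < τ := by positivity
  have hτ1 : τ ≤ 1 := by rw [hτ, div_le_one hU0]; exact hU1
  have hτc : 216000 * (κ * A)^4 * 9^d * (τ * d) ≤ 1 / N := by
    apply le_of_eq
    have hN0 : (N:ℝ) ≠ 0 := by linarith
    have : τ * U = 1 := by rw [hτ]; field_simp
    rw [eq_div_iff hN0, ← this, hU]; ring
  have hR := reg2 h0 h1' hd hL hdN hκ1 hκN hK0 hκ hτp.le hτc hM0 hM hS
  set R := (N:ℝ)^(2*α) * (3 + 12000 * 9^d * d^2 * κ * M / N) with hRd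
  have hR0 : 0 ≤ R := by positivity
  have hRle : R ≤ 3 * N + M * (1 / (16 * 9^d)) := by
    have hN2 : (N:ℝ)^(2*α) ≤ N := by
      have := Real.rpow_le_rpow_of_exponent_le (x := (N:ℝ)) (by linarith) (by linarith : 2*α ≤ 1)
      rwa [Real.rpow_one] at this
    have e : R = 3 * (N:ℝ)^(2*α) + (192000 * 81^d * d^2 * κ * (N:ℝ)^(2*α)) * (M / (16 * 9^d * N)) := by
      have : (81:ℝ)^d = 9^d * 9^d := by rw [← mul_pow]; norm_num
      rw [hRd, this]; field_simp; ring
    have e2 : M * (1 / (16 * 9^d)) = N * (M / (16 * 9^d * N)) := by field_simp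
    rw [e, e2]
    gcongr
  set Y : ℝ := d / τ * (16 * 9^d * d * (K2 + 1)) with hY
  have hY0 : 0 < Y := by positivity
  set t := ⌈Y⌉₊ with ht
  have htY : Y ≤ t := Nat.le_ceil _
  have htle : (t:ℝ) ≤ Y + 1 := (Nat.ceil_lt_add_one hY0.le).le
  have htc : d*(2*(K2+1))*(1-τ/d)^t ≤ 1/(8*9^d) := by
    have hx1 : τ / d ≤ 1 := by rw [div_le_one (by linarith)]; linarith
    have hx0 : 0 < τ / d := by positivity
    have e1 : (1 - τ/d)^t ≤ Real.exp (-(τ/d)) ^ t := by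
      refine pow_le_pow_left₀ (by linarith) ?_ t
      have := Real.add_one_le_exp (-(τ/d)); linarith
    have e2 : Real.exp (-(τ/d)) ^ t = (Real.exp (t * (τ/d)))⁻¹ := by
      rw [← Real.exp_nat_mul, ← Real.exp_neg]; congr 1; ring
    have e3 : 16 * 9^d * d * (K2 + 1) ≤ Real.exp (t * (τ/d)) := by
      have : Y * (τ / d) ≤ t * (τ/d) := by gcongr
      have e4 : Y * (τ/d) = 16 * 9^d * d * (K2 + 1) := by rw [hY]; field_simp
      have := Real.add_one_le_exp (t * (τ/d)); linarith
    have e5 : (1 - τ/d)^t ≤ (16 * 9^d * d * (K2 + 1))⁻¹ := by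
      rw [e2] at e1
      exact e1.trans (inv_anti₀ (by positivity) e3)
    calc d*(2*(K2+1))*(1-τ/d)^t ≤ d*(2*(K2+1)) * (16 * 9^d * d * (K2 + 1))⁻¹ := by gcongr
      _ = 1/(8*9^d) := by
        have : K2 + 1 ≠ 0 := by linarith
        field_simp; norm_num
  have hT : ∀ c : Finset (Fin n) → ℝ, Deg d c → mom α c ≤ t + 1 + R + M * (1 - 1/(8*9^d)) := fun c hc =>
    tree h0 h1' hd hM0 hR0 hτp hτ1 hK0 hM hR hS t htc c hc
  have hMle : M ≤ t + 1 + R + M * (1 - 1/(8*9^d)) := by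
    refine csSup_le ⟨_, c, hc, rfl⟩ ?_
    rintro r ⟨c, hc, rfl⟩
    exact hT c hc
  have hMfin : M ≤ 16 * 9^d * (t + 1 + 3 * N) := by
    have e : M * (1 / (8 * 9^d)) = M * (1 / (16 * 9^d)) + M * (1 / (16 * 9^d)) := by field_simp; ring
    have : M * (1 / (16 * 9^d)) ≤ t + 1 + 3 * N := by linarith
    have e2 : M = 16 * 9^d * (M * (1 / (16 * 9^d))) := by field_simp
    rw [e2]; gcongr
  refine (hM c hc).trans (hMfin.trans ?_)
  unfold C2
  rw [mul_assoc]
  have hYle : Y ≤ 16 * 9^d * d^2 * U0 d * (N:ℝ)^(8*d+11) := by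
    have hU00 : 0 ≤ U0 d := by unfold U0; positivity
    have hKN : K2 + 1 ≤ (N:ℝ)^2 := hκ.trans (by gcongr)
    calc Y = 16 * 9^d * d^2 * (K2 + 1) * U := by rw [hY, hτ]; field_simp
      _ ≤ 16 * 9^d * d^2 * (N:ℝ)^2 * (U0 d * (N:ℝ)^(8*d+9)) := by gcongr
      _ = _ := by ring
  have hNp : (N:ℝ) ≤ (N:ℝ)^(8*d+11) := by
    have := pow_le_pow_right₀ (by linarith : (1:ℝ) ≤ N) (by omega : 1 ≤ 8*d+11)
    rwa [pow_one] at this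
  have hfin : (t:ℝ) + 1 + 3 * N ≤ (16 * 9^d * d^2 * U0 d + 5) * (N:ℝ)^(8*d+11) := by
    linarith
  rw [mul_assoc, mul_assoc] 
  rw [mul_assoc] at hfin
  gcongr
  linarith

lemma final_mom {α : ℝ} (h0 : 0 < α) (h1 : α < 1/2) {d : ℕ} (hd : 1 ≤ d) :
    ∃ C : ℝ, 0 < C ∧ ∀ n : ℕ, 1 ≤ n → ∀ c : Finset (Fin n) → ℝ, Deg d c →
      mom α c ≤ C * Real.log (Real.exp 1 * n) ^ C := by
  have hd1 : (1:ℝ) ≤ d := by exact_mod_cast hd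
  set β := 1 / (1 - 2*α) with hβ
  have hβp : 0 < 1 - 2*α := by linarith
  have hβ1 : 1 ≤ β := by rw [hβ, le_div_iff₀ hβp]; linarith
  set G0 : ℝ := 192000 * 81^d * d^2 * (2 * 10^(2*d)) with hG0
  have h81 : (1:ℝ) ≤ 81^d := one_le_pow₀ (by norm_num)
  have h10 : (1:ℝ) ≤ 10^(2*d) := one_le_pow₀ (by norm_num)
  have hG01 : 0 < G0 := by positivity
  set C1 : ℝ := 8 * G0^β with hC1
  have hC1p : 0 < C1 := by positivity
  set C3 : ℝ := C2 d * C1^(8*d+11) with hC3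
  set E : ℝ := (2*d*β) * (8*d+11) with hE
  have hC2p : 0 < C2 d := by unfold C2 U0; positivity
  have hC3p : 0 < C3 := by positivity
  refine ⟨max C3 E, lt_max_of_lt_left hC3p, ?_⟩
  intro n hn c hc
  have hn1 : (1:ℝ) ≤ n := by exact_mod_cast hn
  set ℓ := Real.log (Real.exp 1 * n) with hℓ
  have hℓe : ℓ = 1 + Real.log n := by
    rw [hℓ, Real.log_mul (Real.exp_ne_zero _) (by linarith), Real.log_exp]
  have hlogn : 0 ≤ Real.log n := Real.log_nonneg hn1
  have hℓ1 : 1 ≤ ℓ := by linarith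
  set m := ⌈4*ℓ⌉₊ with hm
  have hm1 : 4*ℓ ≤ m := Nat.le_ceil _
  have hm2 : (m:ℝ) ≤ 4*ℓ+1 := (Nat.ceil_lt_add_one (by linarith)).le
  have hm4 : 4 ≤ m := by
    have : (4:ℝ) ≤ m := by linarith
    exact_mod_cast this
  set j := Nat.clog 2 m with hj
  have hj1 : m ≤ 2^j := Nat.le_pow_clog (by norm_num) m
  have hj2 : 2^j ≤ 2*m := by
    have h := Nat.pow_pred_clog_lt_self (b := 2) (by norm_num) (x := m) (by omega)
    have hjp : 0 < j := Nat.clog_pos (by norm_num) (by omega)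
    rw [← hj] at h
    obtain ⟨k, hk⟩ : ∃ k, j = k + 1 := ⟨j - 1, by omega⟩
    rw [hk] at h ⊢
    simp only [Nat.pred_eq_sub_one, Nat.add_sub_cancel] at h
    rw [pow_succ]; omega
  have hj2r : (2:ℝ)^j ≤ 10 * ℓ := by
    have : (2:ℝ)^j ≤ 2*m := by exact_mod_cast hj2
    linarith
  have hnn : (n:ℝ) * (n+1) ≤ 2^(2^j) := by
    have e1 : (2:ℝ)^m ≤ 2^(2^j) := pow_le_pow_right₀ (by norm_num) hj1
    refine le_trans ?_ e1
    have hl2 := Real.log_two_gt_d9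
    have e2 : Real.log (2 * n^2) ≤ Real.log ((2:ℝ)^m) := by
      rw [Real.log_mul (by norm_num) (by positivity), Real.log_pow, Real.log_pow]
      have hl3 := Real.log_two_lt_d9
      push_cast
      have : 4 * ℓ * Real.log 2 ≤ m * Real.log 2 := by gcongr
      nlinarith
    have e3 : (2:ℝ) * n^2 ≤ 2^m := (Real.log_le_log_iff (by positivity) (by positivity)).1 e2
    nlinarith
  set K2 : ℝ := 2 * 9^(d*j) with hK2
  set κ : ℝ := 2 * (10*ℓ)^(2*d) with hκ
  have hpw : (1:ℝ) ≤ (10*ℓ)^(2*d) := one_le_pow₀ (by linarith)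
  have hκ1 : 1 ≤ κ := by rw [hκ]; linarith
  have hκ2 : K2 + 1 ≤ κ^2 := by
    have e1 : (9:ℝ)^(d*j) ≤ 16^(d*j) := by gcongr; norm_num
    have e2 : (16:ℝ)^(d*j) = ((2:ℝ)^j)^(4*d) := by
      rw [show (16:ℝ) = 2^4 by norm_num, ← pow_mul, ← pow_mul]; congr 1; ring
    have e3 : ((2:ℝ)^j)^(4*d) ≤ (10*ℓ)^(4*d) := by gcongr
    have e4 : κ^2 = 4 * (10*ℓ)^(4*d) := by
      rw [hκ, mul_pow, ← pow_mul, show 2*d*2 = 4*d by ring]; norm_num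
    have e5 : (1:ℝ) ≤ (10*ℓ)^(4*d) := one_le_pow₀ (by linarith)
    rw [e4, hK2]; linarith
  set G : ℝ := 192000 * 81^d * d^2 * κ with hG
  have hκG : κ ≤ G := by
    calc κ = 1 * 1 * 1 * κ := by ring
      _ ≤ G := by
        rw [hG]; gcongr
        · norm_num
        · exact one_le_pow₀ hd1
  have hG1 : 1 ≤ G := by linarith
  have hdG : 14 * (d:ℝ) ≤ G := by
    have : (d:ℝ) ≤ d^2 := by nlinarith
    calc 14 * (d:ℝ) ≤ 192000 * d^2 := by linarith
      _ = 192000 * 1 * d^2 * 1 := by ring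
      _ ≤ G := by rw [hG]; gcongr
  have hGβ : G ≤ G^β := by
    have := Real.rpow_le_rpow_of_exponent_le hG1 hβ1
    rwa [Real.rpow_one] at this
  set L := ⌈G^β⌉₊ with hL
  have hL1 : G^β ≤ L := Nat.le_ceil _
  have hL2 : (L:ℝ) ≤ G^β + 1 := (Nat.ceil_lt_add_one (by positivity)).le
  set N := 4 * L with hN
  have hNr : (N:ℝ) = 4 * L := by rw [hN]; push_cast; ring
  have hGN : G^β ≤ N := by rw [hNr]; linarith
  have hNle : (N:ℝ) ≤ C1 * ℓ^(2*d*β) := by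
    have e1 : (N:ℝ) ≤ 8 * G^β := by rw [hNr]; linarith
    have e2 : G = G0 * ℓ^((2*d:ℕ):ℝ) := by
      rw [Real.rpow_natCast, hG, hG0, hκ, mul_pow]; ring
    have e3 : G^β = G0^β * ℓ^(2*d*β) := by
      rw [e2, Real.mul_rpow hG01.le (by positivity), ← Real.rpow_mul (by linarith)]
      push_cast; rfl
    rw [e3] at e1; rw [hC1]; linarith
  have hN0 : (0:ℝ) < N := by linarith
  have hcond : G * (N:ℝ)^(2*α) ≤ N := by
    have e1 : G ≤ (N:ℝ)^(1 - 2*α) := by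
      have := Real.rpow_le_rpow (by positivity) hGN hβp.le
      rw [← Real.rpow_mul (by linarith), hβ, one_div, inv_mul_cancel₀ hβp.ne', Real.rpow_one] at this
      exact this
    calc G * (N:ℝ)^(2*α) ≤ (N:ℝ)^(1 - 2*α) * (N:ℝ)^(2*α) := by gcongr
      _ = N := by rw [← Real.rpow_add hN0]; simp
  have hdN : 14 * d ≤ N := by
    have : (14:ℝ) * d ≤ N := by linarith
    exact_mod_cast this
  have hmain := core (n := n) h0 h1 hd (K2 := K2) (κ := κ) hN hdN hκ1 (by linarith) (by positivity) hκ2 hcond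
    (fun c hc hs => skew_mom h0 (by linarith) hc hs hnn) c hc
  have e1 : (N:ℝ)^(8*d+11) ≤ C1^(8*d+11) * ℓ^E := by
    calc (N:ℝ)^(8*d+11) ≤ (C1 * ℓ^(2*d*β))^(8*d+11) := by gcongr
      _ = C1^(8*d+11) * (ℓ^(2*d*β))^((8*d+11:ℕ):ℝ) := by rw [mul_pow, Real.rpow_natCast]
      _ = _ := by
        rw [← Real.rpow_mul (by linarith), hE]; push_cast; rfl
  have e2 : ℓ^E ≤ ℓ^(max C3 E) := Real.rpow_le_rpow_of_exponent_le hℓ1 (le_max_right _ _)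
  calc mom α c ≤ C2 d * (N:ℝ)^(8*d+11) := hmain
    _ ≤ C2 d * (C1^(8*d+11) * ℓ^E) := by gcongr
    _ = C3 * ℓ^E := by rw [hC3]; ring
    _ ≤ max C3 E * ℓ^(max C3 E) := by
      gcongr
      exact le_max_left _ _

/-! ## From polynomials to coefficients -/

/-- exponent vector of a set -/
noncomputable def exS {n : ℕ} (S : Finset (Fin n)) : Fin n →₀ ℕ := Finsupp.indicator S (fun _ _ => 1)

lemma exS_apply {n : ℕ} (S : Finset (Fin n)) (i : Fin n) : exS S i = if i ∈ S then 1 else 0 := by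
  unfold exS; rw [Finsupp.indicator_apply]; split_ifs <;> rfl

lemma exS_support {n : ℕ} (S : Finset (Fin n)) : (exS S).support = S := by
  ext i; simp [exS_apply]

lemma pev_eq {n : ℕ} (p : MvPolynomial (Fin n) ℝ) (hp : ∀ m ∈ p.support, ∀ i, m i ≤ 1) (x : Fin n → Bool) :
    pev p x = cv (fun S => p.coeff (exS S)) x := by
  unfold pev
  rw [MvPolynomial.eval_eq, cv_eq]
  have key : ∀ m ∈ p.support, exS m.support = m := by
    intro m hm
    ext i
    rw [exS_apply]
    have := hp m hm i
    by_cases h : m i = 0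
    · simp [h]
    · simp [h]; omega
  symm
  rw [← Finset.sum_subset (Finset.subset_univ (p.support.image fun m => m.support))]
  · rw [Finset.sum_image]
    · refine Finset.sum_congr rfl fun m hm => ?_
      rw [key m hm]
      congr 1
      refine Finset.prod_congr rfl fun i hi => ?_
      have h1 := hp m hm i
      have h2 : m i ≠ 0 := Finsupp.mem_support_iff.1 hi
      have : m i = 1 := by omega
      rw [this, pow_one]
    · intro a ha b hb hab
      rw [← key a ha, ← key b hb]; simp only at hab; rw [hab]
  · intro S _ hS
    have : p.coeff (exS S) = 0 := by
      by_contra h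
      apply hS
      rw [Finset.mem_image]
      exact ⟨exS S, MvPolynomial.mem_support_iff.2 h, exS_support S⟩
    rw [this, zero_mul]

lemma coeff_deg {n d : ℕ} (p : MvPolynomial (Fin n) ℝ) (hp : p.totalDegree ≤ d) :
    Deg d (fun S => p.coeff (exS S)) := by
  intro S hS
  by_contra h
  have h1 := MvPolynomial.le_totalDegree (MvPolynomial.mem_support_iff.2 h)
  have h2 : ((exS S).sum fun _ e => e) = S.card := by
    rw [Finsupp.sum, exS_support, Finset.card_eq_sum_ones]
    refine Finset.sum_congr rfl fun i hi => ?_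
    rw [exS_apply, if_pos hi]
  omega

theorem sens_fractional_moment (d : ℕ) (hd : 1 ≤ d) (α : ℝ) (hα0 : 0 < α) (hα1 : α < 1 / 2) :
    ∃ C : ℝ, 0 < C ∧ ∀ n : ℕ, 1 ≤ n → ∀ f : (Fin n → Bool) → ℝ, IsPTF d f →
      (∑ x : Fin n → Bool, ((sens f x : ℝ)) ^ α) / 2 ^ n
        ≤ C * Real.log (Real.exp 1 * n) ^ C := by
  obtain ⟨C, hC, h⟩ := final_mom hα0 hα1 hd
  refine ⟨C, hC, fun n hn f hf => ?_⟩
  obtain ⟨p, hp1, hp2, hp3⟩ := hf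
  have hfe : f = sg (fun S => p.coeff (exS S)) := by
    funext x
    rw [(hp3 x).2, pev_eq p hp1]; rfl
  refine le_trans (le_of_eq ?_) (h n hn _ (coeff_deg p hp2))
  rw [mom, wE]
  simp only [wB, Finset.prod_const, Finset.card_univ, Fintype.card_fin, ← Finset.mul_sum]
  rw [← hfe, div_eq_mul_inv, mul_comm]
  congr 1
  rw [one_div, inv_pow]
end

section
/- Let n ≥ 1 and 1 ≤ m ≤ n be integers and let f : {-1,1}^n → {-1,1} be any function. Sample x uniformly on {-1,1}^n and, independently, a random set J ⊆ {1,…,n} by including each element independently with probability 1/m. Then P_{x,J}[∃ i ∈ J with f(x) ≠ f(x^{⊕i})] ≥ (1 − (1 − 1/m)^m) · P_x[s_f(x) ≥ m]; in particular the left-hand side is at least (1/2)·P_x[s_f(x) ≥ m]. -/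
open Finset
open scoped Classical

theorem hit_prob_aux {n : ℕ} (S : Finset (Fin n)) (p q : ℝ) (hpq : p + q = 1) :
    ∑ J : Finset (Fin n), p ^ J.card * q ^ (n - J.card) *
      (if ∃ i ∈ J, i ∈ S then (1 : ℝ) else 0) = 1 - q ^ S.card := by
  have h1 : ∑ J : Finset (Fin n), p ^ J.card * q ^ (n - J.card) = 1 := by
    have h := Finset.sum_pow_mul_eq_add_pow p q (Finset.univ : Finset (Fin n))
    rw [Finset.powerset_univ, hpq, one_pow, Finset.card_univ, Fintype.card_fin] at h
    exact h
  have h2 : ∑ J : Finset (Fin n), p ^ J.card * q ^ (n - J.card) *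
      (if ∃ i ∈ J, i ∈ S then (0 : ℝ) else 1) = q ^ S.card := by
    have h := Finset.sum_pow_mul_eq_add_pow p q Sᶜ
    rw [hpq, one_pow] at h
    calc _ = ∑ J ∈ (Sᶜ).powerset, p ^ J.card * q ^ (n - J.card) := by
          have hs : (Sᶜ).powerset = Finset.univ.filter
              (fun J : Finset (Fin n) => ¬ ∃ i ∈ J, i ∈ S) := by
            ext J
            simp [Finset.subset_iff]
          rw [hs, Finset.sum_filter]
          refine Finset.sum_congr rfl fun J _ => ?_
          by_cases hJ : ∃ i ∈ J, i ∈ S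
          · rw [if_pos hJ, if_neg (not_not.mpr hJ), mul_zero]
          · rw [if_neg hJ, if_pos hJ, mul_one]
      _ = q ^ S.card * ∑ J ∈ (Sᶜ).powerset, p ^ J.card * q ^ ((Sᶜ).card - J.card) := by
          rw [Finset.mul_sum]
          refine Finset.sum_congr rfl fun J hJ => ?_
          have hc := Finset.card_le_card (Finset.mem_powerset.mp hJ)
          have hS := Finset.card_add_card_compl S
          rw [Fintype.card_fin] at hS
          have : n - J.card = S.card + ((Sᶜ).card - J.card) := by omega
          rw [this, pow_add]
          ring
      _ = q ^ S.card := by rw [h, mul_one]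
  rw [← h2]
  refine Eq.trans ?_ (congrArg (fun t => t - _) h1)
  rw [← Finset.sum_sub_distrib]
  refine Finset.sum_congr rfl fun J _ => ?_
  split_ifs <;> ring

theorem half_aux (m : ℕ) (hm : 1 ≤ m) : (1 - 1 / (m : ℝ)) ^ m ≤ 1 / 2 := by
  have hm' : (1 : ℝ) ≤ m := by exact_mod_cast hm
  have hp0 : 0 ≤ 1 / (m : ℝ) := by positivity
  have hp1 : 1 / (m : ℝ) ≤ 1 := by
    rw [div_le_one (by linarith)]
    exact hm'
  have h2 : 2 ≤ (1 + 1 / (m : ℝ)) ^ m := by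
    have h := one_add_mul_le_pow (a := 1 / (m : ℝ)) (by linarith) m
    have : (m : ℝ) * (1 / m) = 1 := by field_simp
    linarith
  have h3 : (1 - 1 / (m : ℝ)) ^ m * (1 + 1 / (m : ℝ)) ^ m ≤ 1 := by
    rw [← mul_pow]
    exact pow_le_one₀ (mul_nonneg (by linarith) (by linarith)) (by nlinarith)
  have h0 : 0 ≤ (1 - 1 / (m : ℝ)) ^ m := pow_nonneg (by linarith) m
  nlinarith

/-- If the sensitivity at `x` is at least `m`, a random set `J` keeping each coordinate with
probability `1/m` hits a sensitive coordinate with probability at least `1 - (1-1/m)^m ≥ 1/2`. -/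
theorem random_subset_hits_sensitive_coordinate (n m : ℕ) (hn : 1 ≤ n) (hm : 1 ≤ m)
    (hmn : m ≤ n) (f : (Fin n → Bool) → ℝ) :
    (1 - (1 - 1 / (m : ℝ)) ^ m) *
        (((Finset.univ.filter (fun x : Fin n → Bool => m ≤ sens f x)).card : ℝ) / 2 ^ n)
      ≤ (∑ x : Fin n → Bool, ∑ J : Finset (Fin n),
          ((1 : ℝ) / m) ^ J.card * (1 - 1 / (m : ℝ)) ^ (n - J.card) *
            (if ∃ i ∈ J, f (flipAt x i) ≠ f x then 1 else 0)) / 2 ^ n ∧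
    (1 / 2 : ℝ) *
        (((Finset.univ.filter (fun x : Fin n → Bool => m ≤ sens f x)).card : ℝ) / 2 ^ n)
      ≤ (∑ x : Fin n → Bool, ∑ J : Finset (Fin n),
          ((1 : ℝ) / m) ^ J.card * (1 - 1 / (m : ℝ)) ^ (n - J.card) *
            (if ∃ i ∈ J, f (flipAt x i) ≠ f x then 1 else 0)) / 2 ^ n := by
  have hm' : (1 : ℝ) ≤ m := by exact_mod_cast hm
  have hp0 : 0 ≤ 1 / (m : ℝ) := by positivity
  have hp1 : 1 / (m : ℝ) ≤ 1 := by
    rw [div_le_one (by linarith)]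
    exact hm'
  have key : (1 - (1 - 1 / (m : ℝ)) ^ m) *
        (((Finset.univ.filter (fun x : Fin n → Bool => m ≤ sens f x)).card : ℝ) / 2 ^ n)
      ≤ (∑ x : Fin n → Bool, ∑ J : Finset (Fin n),
          ((1 : ℝ) / m) ^ J.card * (1 - 1 / (m : ℝ)) ^ (n - J.card) *
            (if ∃ i ∈ J, f (flipAt x i) ≠ f x then 1 else 0)) / 2 ^ n := by
    rw [← mul_div_assoc]
    refine div_le_div_of_nonneg_right ?_ (by positivity)
    rw [Finset.card_filter, Nat.cast_sum, Finset.mul_sum]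
    refine Finset.sum_le_sum fun x _ => ?_
    have h := hit_prob_aux (Finset.univ.filter (fun i => f (flipAt x i) ≠ f x))
      (1 / (m : ℝ)) (1 - 1 / (m : ℝ)) (by ring)
    simp only [Finset.mem_filter, Finset.mem_univ, true_and] at h
    change _ = 1 - (1 - 1 / (m : ℝ)) ^ (sens f x) at h
    rw [h]
    split_ifs with hx
    · have := pow_le_pow_of_le_one (a := 1 - 1 / (m : ℝ)) (by linarith) (by linarith) hx
      push_cast
      linarith
    · have := pow_le_one₀ (n := sens f x) (a := 1 - 1 / (m : ℝ)) (by linarith) (by linarith)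
      push_cast
      linarith
  refine ⟨key, le_trans ?_ key⟩
  refine mul_le_mul_of_nonneg_right ?_ (by positivity)
  linarith [half_aux m hm]
end
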